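/- Let R be a complete regular local domain of mixed characteristic p with F-finite residue field. Then every submodule W of every finitely generated R-module M is wepf-closed, i.e., W^wepf_M = W. -/

import Mathlib

open IsLocalRing TensorProduct
set_option synthInstance.maxHeartbeats 1000000
set_option maxHeartbeats 1000000

/-- The absolute integral closure `R⁺` of a domain `R`: the integral closure of `R`
in an algebraic closure of its fraction field. -/
noncomputable abbrev RPlus (R : Type) [CommRing R] [IsDomain R] : Type :=
  ↥(integralClosure R (AlgebraicClosure (FractionRing R)))

/-- The epf closure of a submodule `W` of an `R`-module `M`: `u` is in the closure iff
there is `c ≠ 0` in `R` such that `d ⊗ u ∈ im(R⁺ ⊗ W → R⁺ ⊗ M) + p^N (R⁺ ⊗ M)` for all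
`N ≥ 1` and all `n`-th roots `d ∈ R⁺` of `c` (`n ≥ 1`). -/
def epfMod (p : ℕ) (R : Type) [CommRing R] [IsDomain R]
    {M : Type} [AddCommGroup M] [Module R M] (W : Submodule R M) : Set M :=
  {u | ∃ c : R, c ≠ 0 ∧ ∀ n N : ℕ, 0 < n → 0 < N →
    ∀ d : RPlus R, d ^ n = algebraMap R (RPlus R) c →
      d ⊗ₜ[R] u ∈ LinearMap.range (LinearMap.baseChange (RPlus R) W.subtype) ⊔
        Ideal.span {(p : RPlus R) ^ N} • (⊤ : Submodule (RPlus R) (RPlus R ⊗[R] M))}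

/-- The weak epf closure of a submodule: `W^wepf = ⋂_{N ≥ 1} (W + p^N M)^epf`. -/
def wepfMod (p : ℕ) (R : Type) [CommRing R] [IsDomain R]
    {M : Type} [AddCommGroup M] [Module R M] (W : Submodule R M) : Set M :=
  {u | ∀ N : ℕ, 0 < N →
    u ∈ epfMod p R (W ⊔ Ideal.span {(p : R) ^ N} • (⊤ : Submodule R M))}

/-- A field `k` of characteristic `p` is F-finite if it is a finite module over
its subfield `k^p` of `p`-th powers. -/
def FFinite (p : ℕ) (k : Type) [Field k] : Prop :=
  ∃ (m : ℕ) (s : Fin m → k), ∀ a : k, ∃ c : Fin m → k, a = ∑ i, (c i) ^ p * s i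

/-!
If `u ∉ W`, then `u ∉ W + p ^ N M` for some `N`, so we may assume that `p ^ N` kills `M / W`. Let `d`
be an `n`-th root of `c` such that `d ⊗ u` vanishes in `R⁺ ⊗ M / W`. This vanishing is witnessed by
finitely many linear relations over `R` between elements of `R⁺`, all of them roots of one monic
polynomial over `R`. There is a ring `B` in which this polynomial splits, with `R / p ^ L → B / p ^ L`
flat and `𝔪 B ≠ B`. Symmetric functions of the roots transport the relations to `B`, up to factors
which have `p`-power roots of high order in `B`. If `u` were not in `W`, flatness would then give
`g ^ m * c ^ P ∈ 𝔪 ^ (n * P)` with fixed `g ≠ 0` and `m` and arbitrarily large `P`, which is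
impossible once `n` is large compared to the order of `c`.

The ring `B` comes from an explicit form, modulo powers of `p`, of André's flatness lemma. Adjoining
`p`-power roots of a regular system of parameters and of a `p`-basis of the residue field gives a flat
extension `R → O` with surjective Frobenius on `O / p`. Its tilt has a flat perfect extension `D` that
solves the tilted equations, and `B` is the quotient of the Witt vectors of `D` by the untilting
element `[t] - p w` and a power of `p`.
-/

universe u

/-! ### Divisibility in Noetherian local rings -/

section LocalDivisibility

variable {R : Type*} [CommRing R]

lemma mem_of_forall_exists_sub_pow_mul_mem [IsNoetherianRing R] [IsLocalRing R] {x : R}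
    (hx : x ∈ maximalIdeal R) {I : Ideal R} {a : R} (h : ∀ n : ℕ, ∃ b, a - x ^ n * b ∈ I) :
    a ∈ I := by
  have hx_ne_top : Ideal.span {x} ≠ ⊤ := by
    rwa [Ne, Ideal.span_singleton_eq_top, ← mem_nonunits_iff, ← mem_maximalIdeal]
  rw [← Ideal.Quotient.eq_zero_iff_mem, ← Submodule.mem_bot R,
    ← Ideal.iInf_pow_smul_eq_bot_of_isLocalRing (M := R ⧸ I) (Ideal.span {x}) hx_ne_top,
    Submodule.mem_iInf]
  intro n
  obtain ⟨b, hb⟩ := h n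
  rw [(Ideal.Quotient.mk_eq_mk_iff_sub_mem a (x ^ n * b)).2 hb, map_mul, Ideal.span_singleton_pow]
  exact Submodule.smul_mem_smul (Ideal.mem_span_singleton_self _)
    (Submodule.mem_top (x := Ideal.Quotient.mk I b))

lemma finiteMultiplicity_of_mem_maximalIdeal [IsNoetherianRing R] [IsLocalRing R] {x a : R}
    (hx : x ∈ maximalIdeal R) (ha : a ≠ 0) : FiniteMultiplicity x a := by
  by_contra h
  refine ha (Ideal.mem_bot.1 (mem_of_forall_exists_sub_pow_mul_mem hx fun n => ?_))
  obtain ⟨b, hb⟩ := FiniteMultiplicity.not_iff_forall.1 h n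
  exact ⟨b, by simp [hb]⟩

lemma exists_eq_pow_mul_not_dvd_of_mem_maximalIdeal [IsNoetherianRing R] [IsLocalRing R] {x a : R}
    (hx : x ∈ maximalIdeal R) (ha : a ≠ 0) : ∃ n b, a = x ^ n * b ∧ ¬ x ∣ b :=
  ⟨_, (finiteMultiplicity_of_mem_maximalIdeal hx ha).exists_eq_pow_mul_and_not_dvd⟩

lemma isDomain_of_isDomain_quotient_span_singleton [IsNoetherianRing R] [IsLocalRing R] {x : R}
    (hx : x ∈ maximalIdeal R) (hreg : x ∈ nonZeroDivisors R) [IsDomain (R ⧸ Ideal.span {x})] :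
    IsDomain R := by
  have hprime : (Ideal.span {x}).IsPrime := (Ideal.Quotient.isDomain_iff_prime _).1 ‹_›
  have : NoZeroDivisors R := by
    refine ⟨fun {a b} hab => ?_⟩
    by_contra! ⟨ha, hb⟩
    obtain ⟨i, a, rfl, ha'⟩ := exists_eq_pow_mul_not_dvd_of_mem_maximalIdeal hx ha
    obtain ⟨j, b, rfl, hb'⟩ := exists_eq_pow_mul_not_dvd_of_mem_maximalIdeal hx hb
    have hab' : a * b = 0 :=
      (mem_nonZeroDivisors_iff.1 (pow_mem hreg (i + j))).1 _ (by rw [← hab]; ring)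
    rcases hprime.mem_or_mem (hab' ▸ Ideal.zero_mem _) with h | h
    · exact ha' (Ideal.mem_span_singleton.1 h)
    · exact hb' (Ideal.mem_span_singleton.1 h)
  exact NoZeroDivisors.to_isDomain R

lemma maximalIdeal_quotient_eq_map [IsLocalRing R] (I : Ideal R) [IsLocalRing (R ⧸ I)] :
    maximalIdeal (R ⧸ I) = (maximalIdeal R).map (Ideal.Quotient.mk I) := by
  have := IsLocalHom.of_surjective (Ideal.Quotient.mk I) Ideal.Quotient.mk_surjective
  rw [← maximalIdeal_comap (Ideal.Quotient.mk I),
    Ideal.map_comap_of_surjective _ Ideal.Quotient.mk_surjective]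

end LocalDivisibility

section IntegrallyClosed

variable {R : Type*} [CommRing R]

lemma pow_dvd_mul_sub_mul_pow {w c a : R} (h : ∀ j, w ^ j ∣ c * a ^ j) (r : R) (j : ℕ) :
    w ^ j ∣ c * (a - w * r) ^ j := by
  rw [sub_eq_add_neg, ← mul_neg, add_pow, Finset.mul_sum]
  refine Finset.dvd_sum fun i hi => ?_
  rw [show c * (a ^ i * (w * -r) ^ (j - i) * j.choose i) =
      c * a ^ i * (w ^ (j - i) * ((-r) ^ (j - i) * j.choose i)) by rw [mul_pow]; ring,
    ← Nat.add_sub_cancel' (Finset.mem_range_succ_iff.1 hi), pow_add, Nat.add_sub_cancel_left]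
  exact mul_dvd_mul (h i) (dvd_mul_right _ _)

variable [IsDomain R]

lemma dvd_of_dvd_prime_pow_mul {x w z : R} (hx : Prime x) (hw : ¬ x ∣ w) {i : ℕ}
    (h : w ∣ x ^ i * z) : w ∣ z := by
  induction i with
  | zero => simpa using h
  | succ i ih =>
    rw [pow_succ', mul_assoc] at h
    exact ih ((hx.left_dvd_or_dvd_right_of_dvd_mul h).resolve_left hw)

lemma dvd_of_forall_pow_dvd_mul_pow [IsNoetherianRing R] [IsIntegrallyClosed R] {w c a : R}
    (hw : w ≠ 0) (hc : c ≠ 0) (h : ∀ j, w ^ j ∣ c * a ^ j) : w ∣ a := by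
  let K := FractionRing R
  have hw' : algebraMap R K w ≠ 0 := by simpa
  have hquot : IsAlmostIntegral R (algebraMap R K a / algebraMap R K w) := by
    refine ⟨c, mem_nonZeroDivisors_of_ne_zero hc, fun j => ?_⟩
    obtain ⟨b, hb⟩ := h j
    refine ⟨b, ?_⟩
    rw [Algebra.smul_def, div_pow, ← mul_div_assoc, eq_div_iff (pow_ne_zero _ hw'), ← map_pow,
      ← map_pow, ← map_mul, ← map_mul, hb, mul_comm]
  obtain ⟨b, hb⟩ := IsIntegrallyClosed.isIntegral_iff.1 hquot.isIntegral
  refine ⟨b, IsFractionRing.injective R K ?_⟩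
  rw [map_mul, hb, mul_div_cancel₀ _ hw']

lemma isIntegrallyClosed_of_forall_pow_dvd
    (h : ∀ w c a : R, w ≠ 0 → c ≠ 0 → (∀ j, w ^ j ∣ c * a ^ j) → w ∣ a) :
    IsIntegrallyClosed R := by
  let K := FractionRing R
  refine (isIntegrallyClosed_iff K).2 fun {s} hs => ?_
  obtain ⟨a, w, hw, rfl⟩ := IsFractionRing.div_surjective (A := R) s
  have hw' : algebraMap R K w ≠ 0 := by simpa using nonZeroDivisors.ne_zero hw
  obtain ⟨c, hc, hmem⟩ := hs.isAlmostIntegral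
  obtain ⟨b, rfl⟩ := h w c a (nonZeroDivisors.ne_zero hw) (nonZeroDivisors.ne_zero hc) fun j => by
    obtain ⟨b, hb⟩ := hmem j
    refine ⟨b, IsFractionRing.injective R K ?_⟩
    rw [map_mul _ _ b, hb, Algebra.smul_def]
    simp only [map_mul, map_pow]
    rw [div_pow, mul_left_comm, mul_div_cancel₀ _ (pow_ne_zero _ hw')]
  exact ⟨b, by rw [map_mul, mul_div_cancel_left₀ _ hw']⟩

variable [IsNoetherianRing R] {x : R}

lemma exists_eq_mul_add_mul_of_forall_pow_dvd [IsDomain (R ⧸ Ideal.span {x})]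
    [IsIntegrallyClosed (R ⧸ Ideal.span {x})] (hprime : Prime x) {w c a : R} (hw : ¬ x ∣ w)
    (hc : ¬ x ∣ c) (h : ∀ j, w ^ j ∣ c * a ^ j) :
    ∃ r b, a = w * r + x * b ∧ ∀ j, w ^ j ∣ c * b ^ j := by
  have mk_ne_zero {y : R} (hy : ¬ x ∣ y) : Ideal.Quotient.mk (Ideal.span {x}) y ≠ 0 := by
    rwa [Ne, Ideal.Quotient.eq_zero_iff_dvd]
  obtain ⟨r, hr⟩ := dvd_of_forall_pow_dvd_mul_pow (a := Ideal.Quotient.mk _ a) (mk_ne_zero hw)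
    (mk_ne_zero hc) fun j => by simpa using map_dvd (Ideal.Quotient.mk (Ideal.span {x})) (h j)
  obtain ⟨r, rfl⟩ := Ideal.Quotient.mk_surjective r
  rw [← map_mul, Ideal.Quotient.eq, Ideal.mem_span_singleton] at hr
  obtain ⟨b, hb⟩ := hr
  refine ⟨r, b, by linear_combination hb, fun j => ?_⟩
  refine dvd_of_dvd_prime_pow_mul hprime (i := j) (mt hprime.dvd_of_dvd_pow hw) ?_
  have := pow_dvd_mul_sub_mul_pow h r j
  rwa [hb, mul_pow, mul_left_comm] at this

variable [IsLocalRing R]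

lemma dvd_of_forall_pow_dvd_of_not_dvd [IsDomain (R ⧸ Ideal.span {x})]
    [IsIntegrallyClosed (R ⧸ Ideal.span {x})] (hx : x ∈ maximalIdeal R) (hprime : Prime x)
    {w c a : R} (hw : ¬ x ∣ w) (hc : ¬ x ∣ c) (h : ∀ j, w ^ j ∣ c * a ^ j) : w ∣ a := by
  have approx (n : ℕ) : ∃ r b, a = w * r + x ^ n * b ∧ ∀ j, w ^ j ∣ c * b ^ j := by
    induction n with
    | zero => exact ⟨0, a, by simp, h⟩
    | succ n ih =>
      obtain ⟨r, b, e, hb⟩ := ih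
      obtain ⟨r', b', e', hb'⟩ := exists_eq_mul_add_mul_of_forall_pow_dvd hprime hw hc hb
      exact ⟨r + x ^ n * r', b', by rw [e, e']; ring, hb'⟩
  rw [← Ideal.mem_span_singleton]
  refine mem_of_forall_exists_sub_pow_mul_mem hx fun n => ?_
  obtain ⟨r, b, e, -⟩ := approx n
  exact ⟨b, by rw [e, add_sub_cancel_right]; exact Ideal.mem_span_singleton.2 (dvd_mul_right _ _)⟩

lemma multiplicity_le_of_forall_pow_dvd_mul_pow (hx : x ∈ maximalIdeal R) (hprime : Prime x)
    {w c a : R} (hc : c ≠ 0) (ha : a ≠ 0) (h : ∀ j, w ^ j ∣ c * a ^ j) :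
    multiplicity x w ≤ multiplicity x a := by
  have hfin (j : ℕ) : FiniteMultiplicity x (c * a ^ j) :=
    finiteMultiplicity_of_mem_maximalIdeal hx (mul_ne_zero hc (pow_ne_zero _ ha))
  have hw : FiniteMultiplicity x w :=
    finiteMultiplicity_of_mem_maximalIdeal hx fun hw => mul_ne_zero hc ha <| by
      simpa [hw] using h 1
  have hle (j : ℕ) : j * multiplicity x w ≤ multiplicity x c + j * multiplicity x a := by
    have := (hfin j).le_multiplicity_of_pow_dvd ((pow_multiplicity_dvd x (w ^ j)).trans (h j))
    rwa [hw.multiplicity_pow hprime, multiplicity_mul hprime (hfin j),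
      (finiteMultiplicity_of_mem_maximalIdeal hx ha).multiplicity_pow hprime] at this
  nlinarith [hle (multiplicity x c + 1)]

lemma isIntegrallyClosed_of_quotient_span_singleton [IsDomain (R ⧸ Ideal.span {x})]
    [IsIntegrallyClosed (R ⧸ Ideal.span {x})] (hx : x ∈ maximalIdeal R) (hprime : Prime x) :
    IsIntegrallyClosed R := by
  refine isIntegrallyClosed_of_forall_pow_dvd fun w c a hw hc h => ?_
  obtain rfl | ha := eq_or_ne a 0
  · exact dvd_zero _
  have hmult := multiplicity_le_of_forall_pow_dvd_mul_pow hx hprime hc ha h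
  obtain ⟨w', hw_eq, hw'⟩ :=
    (finiteMultiplicity_of_mem_maximalIdeal hx hw).exists_eq_pow_mul_and_not_dvd
  obtain ⟨k, c, rfl, hc'⟩ := exists_eq_pow_mul_not_dvd_of_mem_maximalIdeal hx hc
  obtain ⟨a, rfl⟩ := (pow_dvd_pow x hmult).trans (pow_multiplicity_dvd x a)
  generalize multiplicity x w = i at *
  subst hw_eq
  refine mul_dvd_mul_left _ (dvd_of_forall_pow_dvd_of_not_dvd hx hprime hw' hc' fun j => ?_)
  have hj : x ^ (i * j) * w' ^ j ∣ x ^ (i * j) * (x ^ k * (c * a ^ j)) := by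
    convert h j using 1 <;> ring
  exact dvd_of_dvd_prime_pow_mul hprime (mt hprime.dvd_of_dvd_pow hw')
    ((mul_dvd_mul_iff_left (pow_ne_zero _ hprime.ne_zero)).1 hj)

end IntegrallyClosed

/-! ### Regular systems of parameters -/

/-- `IsRegularSystem n x` says that `x 0, …, x (n - 1)` is a regular sequence inside the Jacobson
radical of `R` whose quotient is a field; the remaining values of `x` are irrelevant. A Noetherian
ring with such a sequence is a regular local ring. The recursion passes to the quotient by the first
element, so that properties lift from that quotient to `R` by induction on `n`. -/
def IsRegularSystem : (n : ℕ) → {R : Type u} → [CommRing R] → (ℕ → R) → Prop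
  | 0, R, _, _ => IsField R
  | n + 1, R, _, x => x 0 ∈ Ideal.jacobson (⊥ : Ideal R) ∧ x 0 ∈ nonZeroDivisors R ∧
      IsRegularSystem n fun i => Ideal.Quotient.mk (Ideal.span {x 0}) (x (i + 1))

namespace IsRegularSystem

variable {R : Type u} [CommRing R] {n : ℕ} {x : ℕ → R}

lemma succ_of_eq {a : R} {y : ℕ → R} (hx_zero : x 0 = a) (hx_succ : ∀ i, x (i + 1) = y i)
    (hjac : a ∈ Ideal.jacobson (⊥ : Ideal R)) (hreg : a ∈ nonZeroDivisors R)
    (h : IsRegularSystem n fun i => Ideal.Quotient.mk (Ideal.span {a}) (y i)) :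
    IsRegularSystem (n + 1) x := by
  subst hx_zero
  obtain rfl : (fun i => x (i + 1)) = y := funext hx_succ
  exact ⟨hjac, hreg, h⟩

lemma isLocalRing (h : IsRegularSystem n x) : IsLocalRing R := by
  induction n generalizing R with
  | zero =>
    let := IsField.toField h
    infer_instance
  | succ n ih =>
    obtain ⟨hjac, -, h⟩ := h
    have := ih h
    have := isLocalHom_of_le_jacobson_bot (Ideal.span {x 0})
      ((Ideal.span_singleton_le_iff_mem _).2 hjac)
    exact RingHom.domain_isLocalRing (Ideal.Quotient.mk (Ideal.span {x 0}))

lemma of_ringEquiv {S : Type*} [CommRing S] {y : ℕ → S} (h : IsRegularSystem n x) (e : R ≃+* S)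
    (hy : ∀ i < n, y i = e (x i)) : IsRegularSystem n y := by
  induction n generalizing R S with
  | zero => exact MulEquiv.isField h e.symm.toMulEquiv
  | succ n ih =>
    obtain ⟨hjac, hreg, h⟩ := h
    have hy_zero : y 0 = e (x 0) := hy 0 n.succ_pos
    refine ⟨?_, ?_, ih h (Ideal.quotientEquiv (Ideal.span {x 0}) (Ideal.span {y 0}) e ?_) ?_⟩
    · rw [Ideal.mem_jacobson_bot] at hjac ⊢
      intro z
      simpa [hy_zero] using (hjac (e.symm z)).map e
    · exact hy_zero ▸ MulEquivClass.map_nonZeroDivisors e ▸ Submonoid.mem_map_of_mem e hreg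
    · rw [Ideal.map_span, Set.image_singleton, hy_zero]
      rfl
    · intro i hi
      rw [hy (i + 1) (by omega)]
      rfl

lemma head_mem_maximalIdeal [IsLocalRing R] (h : IsRegularSystem (n + 1) x) :
    x 0 ∈ maximalIdeal R :=
  jacobson_eq_maximalIdeal (⊥ : Ideal R) bot_ne_top ▸ h.1

lemma isDomain [IsNoetherianRing R] (h : IsRegularSystem n x) : IsDomain R := by
  induction n generalizing R with
  | zero => exact IsField.isDomain h
  | succ n ih =>
    have := h.isLocalRing
    have := ih h.2.2
    exact isDomain_of_isDomain_quotient_span_singleton h.head_mem_maximalIdeal h.2.1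

lemma isIntegrallyClosed [IsNoetherianRing R] (h : IsRegularSystem n x) :
    IsIntegrallyClosed R := by
  induction n generalizing R with
  | zero =>
    let := IsField.toField h
    infer_instance
  | succ n ih =>
    have := h.isLocalRing
    have := h.isDomain
    have := isDomain h.2.2
    have := ih h.2.2
    exact isIntegrallyClosed_of_quotient_span_singleton h.head_mem_maximalIdeal
      ((Ideal.span_singleton_prime (nonZeroDivisors.ne_zero h.2.1)).1
        ((Ideal.Quotient.isDomain_iff_prime _).1 ‹_›))

lemma mem_maximalIdeal [IsLocalRing R] (h : IsRegularSystem n x) {i : ℕ} (hi : i < n) :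
    x i ∈ maximalIdeal R := by
  induction n generalizing R i with
  | zero => omega
  | succ n ih =>
    cases i with
    | zero => exact h.head_mem_maximalIdeal
    | succ i =>
      have := isLocalRing h.2.2
      exact fun hu => ih h.2.2 (by omega : i < n) (hu.map _)

lemma maximalIdeal_eq_span [IsLocalRing R] (h : IsRegularSystem n x) :
    maximalIdeal R = Ideal.span (Set.range fun i : Fin n => x i) := by
  refine le_antisymm (fun a ha => ?_)
    (Ideal.span_le.2 (Set.range_subset_iff.2 fun i => h.mem_maximalIdeal i.2))
  induction n generalizing R with
  | zero => simpa [isField_iff_maximalIdeal_eq.1 h] using ha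
  | succ n ih =>
    have := isLocalRing h.2.2
    have hmem := ih h.2.2 (Ideal.Quotient.mk _ a)
      (maximalIdeal_quotient_eq_map (Ideal.span {x 0}) ▸ Ideal.mem_map_of_mem _ ha)
    rw [Ideal.mem_span_range_iff_exists_fun] at hmem ⊢
    obtain ⟨c, hc⟩ := hmem
    choose c' hc' using fun i => Ideal.Quotient.mk_surjective (c i)
    simp only [← hc', ← map_mul, ← map_sum] at hc
    obtain ⟨b, hb⟩ := Ideal.mem_span_singleton.1 (Ideal.Quotient.eq.1 hc)
    refine ⟨Fin.cons (-b) c', ?_⟩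
    simp only [Fin.sum_univ_succ, Fin.cons_zero, Fin.cons_succ, Fin.val_zero, Fin.val_succ]
    linear_combination hb

end IsRegularSystem

section ArtinRees

variable {R : Type*} [CommRing R] {I : Ideal R} {x : R}

lemma mem_pow_sub_of_pow_mul_mem_pow {k : ℕ} (h : ∀ b z, x * z ∈ I ^ b → z ∈ I ^ (b - k)) (i : ℕ)
    {b : ℕ} {z : R} (hz : x ^ i * z ∈ I ^ b) : z ∈ I ^ (b - i * k) := by
  induction i generalizing b with
  | zero => simpa using hz
  | succ i ih =>
    rw [pow_succ', mul_assoc] at hz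
    rw [add_one_mul, add_comm, ← Nat.sub_sub]
    exact ih (h _ _ hz)

lemma exists_forall_mem_pow_sub_of_mul_mem_pow [IsDomain R] [IsNoetherianRing R] (I : Ideal R)
    (hx : x ≠ 0) :
    ∃ k, ∀ b z, x * z ∈ I ^ b → z ∈ I ^ (b - k) := by
  obtain ⟨k, hk⟩ := Ideal.exists_pow_inf_eq_pow_smul I (Ideal.span {x} : Submodule R R)
  refine ⟨k, fun b z hz => ?_⟩
  obtain hb | hb := lt_or_ge b k
  · simp [Nat.sub_eq_zero_of_le hb.le]
  have hxz : x * z ∈ (I ^ b • ⊤ ⊓ Ideal.span {x} : Submodule R R) :=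
    ⟨by simpa using hz, Ideal.mem_span_singleton.2 (dvd_mul_right _ _)⟩
  rw [hk b hb] at hxz
  obtain ⟨w, hw, e⟩ := Ideal.mem_mul_span_singleton.1 (Submodule.smul_mono le_rfl inf_le_right hxz)
  rwa [mul_left_cancel₀ hx (e.symm.trans (mul_comm w x))]

end ArtinRees

lemma IsRegularSystem.exists_mul_pow_notMem_maximalIdeal_pow {R : Type u} [CommRing R]
    [IsNoetherianRing R] [IsLocalRing R] {n : ℕ} {x : ℕ → R} (h : IsRegularSystem n x) {c : R}
    (hc : c ≠ 0) :
    ∃ ν : ℕ, ∀ g ≠ 0, ∀ s : ℕ, ∃ N, ∀ P ≥ N, g * c ^ P ∉ maximalIdeal R ^ (ν * P - s) := by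
  have := h.isDomain
  induction n generalizing R with
  | zero =>
    refine ⟨1, fun g hg s => ⟨s + 1, fun P hP hmem => mul_ne_zero hg (pow_ne_zero P hc) ?_⟩⟩
    rwa [isField_iff_maximalIdeal_eq.1 h, Ideal.bot_pow (by omega)] at hmem
  | succ n ih =>
    have hx := h.head_mem_maximalIdeal
    obtain ⟨-, hreg, h⟩ := h
    have := h.isLocalRing
    have mk_ne_zero {y : R} (hy : ¬ x 0 ∣ y) : Ideal.Quotient.mk (Ideal.span {x 0}) y ≠ 0 := by
      rwa [Ne, Ideal.Quotient.eq_zero_iff_dvd]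
    obtain ⟨i, c, rfl, hc'⟩ := exists_eq_pow_mul_not_dvd_of_mem_maximalIdeal hx hc
    obtain ⟨ν, hν⟩ := ih h (mk_ne_zero hc') h.isDomain
    obtain ⟨k, hk⟩ := exists_forall_mem_pow_sub_of_mul_mem_pow (maximalIdeal R)
      (nonZeroDivisors.ne_zero hreg)
    refine ⟨ν + i * k, fun g hg s => ?_⟩
    obtain ⟨j, g, rfl, hg'⟩ := exists_eq_pow_mul_not_dvd_of_mem_maximalIdeal hx hg
    obtain ⟨N, hN⟩ := hν _ (mk_ne_zero hg') (s + j * k)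
    refine ⟨N, fun P hP hmem => hN P hP ?_⟩
    have hmem' : g * c ^ P ∈ maximalIdeal R ^ ((ν + i * k) * P - s - (j + i * P) * k) :=
      mem_pow_sub_of_pow_mul_mem_pow hk _ (by convert hmem using 1; ring)
    rw [maximalIdeal_quotient_eq_map, ← Ideal.map_pow, ← map_pow, ← map_mul]
    convert Ideal.mem_map_of_mem _ hmem' using 3
    rw [Nat.sub_sub, show (ν + i * k) * P = ν * P + i * P * k by ring,
      show s + (j + i * P) * k = s + j * k + i * P * k by ring, Nat.add_sub_add_right]

section ExistsRegularSystem

variable {R : Type u} [CommRing R] [IsLocalRing R]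

lemma maximalIdeal_notMem_minimalPrimes_of_one_le_ringKrullDim (h : 1 ≤ ringKrullDim R) :
    maximalIdeal R ∉ minimalPrimes R := by
  intro hmin
  rw [← maximalIdeal_height_eq_ringKrullDim, Ideal.height_eq_zero_iff.2 hmin] at h
  norm_cast at h

lemma exists_span_succAbove_eq_maximalIdeal_quotient {d : ℕ} {x : Fin (d + 1) → R}
    (hx : Ideal.span (Set.range x) = maximalIdeal R) {y : R} (hy : y ∈ maximalIdeal R)
    (hy_sq : y ∉ maximalIdeal R ^ 2) [IsLocalRing (R ⧸ Ideal.span {y})] :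
    ∃ i : Fin (d + 1), Ideal.span (Set.range fun j =>
      Ideal.Quotient.mk (Ideal.span {y}) (x (i.succAbove j))) =
        maximalIdeal (R ⧸ Ideal.span {y}) := by
  rw [← hx, Ideal.mem_span_range_iff_exists_fun] at hy
  obtain ⟨c, hc⟩ := hy
  obtain ⟨i, hi⟩ : ∃ i, IsUnit (c i) := by
    by_contra! hcon
    refine hy_sq (hc ▸ sq (maximalIdeal R) ▸ Ideal.sum_mem _ fun i _ => ?_)
    exact Ideal.mul_mem_mul (hcon i) (hx ▸ Ideal.subset_span ⟨i, rfl⟩)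
  refine ⟨i, ?_⟩
  rw [maximalIdeal_quotient_eq_map, ← hx, Ideal.map_span]
  refine le_antisymm (Ideal.span_mono (Set.range_subset_iff.2 fun j => ⟨_, ⟨_, rfl⟩, rfl⟩))
    (Ideal.span_le.2 ?_)
  rintro _ ⟨_, ⟨j, rfl⟩, rfl⟩
  rw [SetLike.mem_coe, Ideal.mem_span_range_iff_exists_fun]
  obtain rfl | ⟨k, rfl⟩ := Fin.eq_self_or_eq_succAbove i j
  · obtain ⟨u, hu⟩ := isUnit_iff_exists_inv.1 hi
    refine ⟨fun k => -Ideal.Quotient.mk _ (u * c (j.succAbove k)), ?_⟩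
    simp only [← map_neg, ← map_mul, ← map_sum]
    rw [Ideal.Quotient.eq, Ideal.mem_span_singleton]
    refine ⟨-u, ?_⟩
    rw [← hc, Fin.sum_univ_succAbove _ j]
    simp only [neg_mul, mul_assoc, Finset.sum_neg_distrib, ← Finset.mul_sum]
    linear_combination x j * hu
  · exact ⟨Pi.single k 1, by simp [Pi.single_apply]⟩

variable [IsNoetherianRing R]

lemma exists_mem_maximalIdeal_notMem_sq_notMem_minimalPrimes
    (hm : maximalIdeal R ∉ minimalPrimes R) :
    ∃ y ∈ maximalIdeal R, y ∉ maximalIdeal R ^ 2 ∧ ∀ P ∈ minimalPrimes R, y ∉ P := by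
  have hfin : (minimalPrimes R).Finite := minimalPrimes.finite_of_isNoetherianRing R
  have hmem {I : Ideal R} (hI : I ∈ insert (maximalIdeal R ^ 2) hfin.toFinset) :
      I = maximalIdeal R ^ 2 ∨ I ∈ minimalPrimes R := by
    simpa using hI
  have havoid : ¬ ∃ I ∈ insert (maximalIdeal R ^ 2) hfin.toFinset, maximalIdeal R ≤ I := by
    rintro ⟨I, hI, hle⟩
    obtain rfl | hI := hmem hI
    · have hbot : maximalIdeal R = ⊥ :=
        Submodule.eq_bot_of_le_smul_of_le_jacobson_bot (maximalIdeal R) (maximalIdeal R)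
          (IsNoetherian.noetherian _) (by simpa [sq] using hle) (maximalIdeal_le_jacobson _)
      obtain ⟨P, hP, hPm⟩ :=
        Ideal.exists_minimalPrimes_le (I := (⊥ : Ideal R)) (J := maximalIdeal R) bot_le
      exact hm (le_antisymm hPm (hbot ▸ bot_le) ▸ hP)
    · exact hm ((maximalIdeal.isMaximal R).eq_of_le hI.1.1.ne_top hle ▸ hI)
  have hcover := mt (Ideal.subset_union_prime (f := id) (maximalIdeal R ^ 2) (maximalIdeal R ^ 2)
    fun I hI hne _ => ((hmem hI).resolve_left hne).1.1).1 havoid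
  obtain ⟨y, hy, hy'⟩ := Set.not_subset.1 hcover
  simp only [Finset.coe_insert, Set.Finite.coe_toFinset, Set.biUnion_insert, id_eq, Set.mem_union,
    SetLike.mem_coe, Set.mem_iUnion, exists_prop, not_or, not_exists, not_and] at hy'
  exact ⟨y, hy, hy'⟩

lemma isDomain_of_isPrime_span_singleton {y : R} (hy : y ∈ maximalIdeal R)
    (hprime : (Ideal.span {y}).IsPrime) (hmin : ∀ P ∈ minimalPrimes R, y ∉ P) : IsDomain R := by
  obtain ⟨P, hP, hPy⟩ :=
    Ideal.exists_minimalPrimes_le (I := (⊥ : Ideal R)) (J := Ideal.span {y}) bot_le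
  have hP_bot : P = ⊥ := by
    refine Submodule.eq_bot_of_le_smul_of_le_jacobson_bot (Ideal.span {y}) P
      (IsNoetherian.noetherian _) (fun a ha => ?_)
      ((Ideal.span_singleton_le_iff_mem _).2 (maximalIdeal_le_jacobson _ hy))
    obtain ⟨b, rfl⟩ := Ideal.mem_span_singleton.1 (hPy ha)
    exact Submodule.smul_mem_smul (Ideal.mem_span_singleton_self y)
      ((hP.1.1.mem_or_mem ha).resolve_left (hmin P hP))
  have hbot : (⊥ : Ideal R).IsPrime := hP_bot ▸ hP.1.1
  have : NoZeroDivisors R := ⟨fun hab => hbot.mem_or_mem hab⟩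
  exact NoZeroDivisors.to_isDomain R

lemma natCast_le_ringKrullDim_quotient_span_singleton {d : ℕ} {y : R} (hy : y ∈ maximalIdeal R)
    (hd : ((d + 1 : ℕ) : WithBot ℕ∞) ≤ ringKrullDim R) :
    (d : WithBot ℕ∞) ≤ ringKrullDim (R ⧸ Ideal.span {y}) := by
  have hle := hd.trans (ringKrullDim_le_ringKrullDim_quotient_add_card ({y} : Finset R) (by
    simpa [ringJacobson_eq_maximalIdeal] using hy))
  rw [Finset.coe_singleton, Finset.card_singleton, Nat.cast_add, Nat.cast_one] at hle
  exact ENat.WithBot.add_le_add_one_right_iff.1 hle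

theorem exists_isRegularSystem_of_le_ringKrullDim {d : ℕ} {x : Fin d → R}
    (hx : Ideal.span (Set.range x) = maximalIdeal R) (hd : (d : WithBot ℕ∞) ≤ ringKrullDim R) :
    ∃ y : ℕ → R, IsRegularSystem d y := by
  induction d generalizing R with
  | zero => exact ⟨fun _ => 0, isField_iff_maximalIdeal_eq.2 (by simp [← hx])⟩
  | succ d ih =>
    have hm := maximalIdeal_notMem_minimalPrimes_of_one_le_ringKrullDim
      (le_trans (by exact_mod_cast Nat.le_add_left 1 d) hd)
    obtain ⟨y, hy, hy_sq, hy_min⟩ := exists_mem_maximalIdeal_notMem_sq_notMem_minimalPrimes hm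
    have : Nontrivial (R ⧸ Ideal.span {y}) := Ideal.Quotient.nontrivial_iff.2
      (Ideal.span_singleton_eq_top.not.2 hy)
    have : IsLocalRing (R ⧸ Ideal.span {y}) :=
      .of_surjective' (Ideal.Quotient.mk _) Ideal.Quotient.mk_surjective
    obtain ⟨i, hspan⟩ := exists_span_succAbove_eq_maximalIdeal_quotient hx hy hy_sq
    obtain ⟨z, hz⟩ := ih hspan (natCast_le_ringKrullDim_quotient_span_singleton hy hd)
    have := hz.isDomain
    have := isDomain_of_isPrime_span_singleton hy
      ((Ideal.Quotient.isDomain_iff_prime _).1 ‹_›) hy_min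
    have hy_ne : y ≠ 0 := fun h => hy_min ⊥ (by simp [IsDomain.minimalPrimes_eq_singleton_bot])
      (h ▸ Ideal.zero_mem _)
    choose lift hlift using fun a : R ⧸ Ideal.span {y} => Ideal.Quotient.mk_surjective a
    refine ⟨fun j => Nat.casesOn j y fun j => lift (z j), .succ_of_eq (a := y) rfl (fun _ => rfl)
      (maximalIdeal_le_jacobson _ hy) (mem_nonZeroDivisors_of_ne_zero hy_ne) ?_⟩
    simpa only [hlift] using hz

end ExistsRegularSystem

section AdjoinRoot

open Polynomial

lemma mem_jacobson_bot_of_pow_eq_algebraMap {R S : Type*} [CommRing R] [IsLocalRing R] [CommRing S]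
    [Algebra R S] [Algebra.IsIntegral R S] {a : R} (ha : a ∈ maximalIdeal R) {z : S} {k : ℕ}
    (hz : z ^ k = algebraMap R S a) : z ∈ Ideal.jacobson (⊥ : Ideal S) := by
  refine Ideal.mem_sInf.2 fun {M} hM => ?_
  have := hM.2
  have hcomap := eq_maximalIdeal (Ideal.isMaximal_comap_of_isIntegral_of_isMaximal (R := R) M)
  rw [← hcomap, Ideal.mem_comap, ← hz] at ha
  exact this.isPrime.mem_of_pow_mem _ ha

variable {R : Type*} [CommRing R]

lemma adjoinRoot_of_mem_nonZeroDivisors {f : R[X]} (hf : f.Monic) {a : R}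
    (ha : a ∈ nonZeroDivisors R) : AdjoinRoot.of f a ∈ nonZeroDivisors (AdjoinRoot f) := by
  have : Module.Free R (AdjoinRoot f) := .of_basis (AdjoinRoot.powerBasis' hf).basis
  refine mem_nonZeroDivisors_iff_right.2 fun y hy => ?_
  refine (Module.Flat.isSMulRegular_of_nonZeroDivisors ha).right_eq_zero_of_smul ?_
  rw [Algebra.smul_def, mul_comm]
  exact hy

lemma adjoinRoot_isIntegral {f : R[X]} (hf : f.Monic) : Algebra.IsIntegral R (AdjoinRoot f) :=
  have := (AdjoinRoot.powerBasis' hf).finite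
  inferInstance

lemma adjoinRoot_X_pow_sub_C_root_pow (p : ℕ) (a : R) :
    AdjoinRoot.root (X ^ p - C a) ^ p = AdjoinRoot.of (X ^ p - C a) a := by
  have h := AdjoinRoot.eval₂_root (X ^ p - C a)
  rwa [eval₂_sub, eval₂_X_pow, eval₂_C, sub_eq_zero] at h

/-- Adjoining a root of `f` commutes with reduction modulo `a`. -/
noncomputable def adjoinRootQuotientEquiv (f : R[X]) (a : R) :
    (AdjoinRoot f ⧸ Ideal.span {AdjoinRoot.of f a}) ≃+*
      AdjoinRoot (f.map (Ideal.Quotient.mk (Ideal.span {a}))) :=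
  (Ideal.quotEquivOfEq (by rw [Ideal.map_span, Set.image_singleton])).trans
    (AdjoinRoot.quotEquivQuotMap f (Ideal.span {a})).toRingEquiv

lemma adjoinRootQuotientEquiv_mk (f : R[X]) (a : R) (g : R[X]) :
    adjoinRootQuotientEquiv f a (Ideal.Quotient.mk _ (AdjoinRoot.mk f g)) =
      AdjoinRoot.mk _ (g.map (Ideal.Quotient.mk (Ideal.span {a}))) :=
  AdjoinRoot.quotEquivQuotMap_apply_mk f g (Ideal.span {a})

lemma adjoinRootQuotientEquiv_of (f : R[X]) (a r : R) :
    adjoinRootQuotientEquiv f a (Ideal.Quotient.mk _ (AdjoinRoot.of f r)) =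
      AdjoinRoot.of _ (Ideal.Quotient.mk _ r) := by
  simpa only [map_C, AdjoinRoot.mk_C] using adjoinRootQuotientEquiv_mk f a (C r)

lemma adjoinRootQuotientEquiv_root (f : R[X]) (a : R) :
    adjoinRootQuotientEquiv f a (Ideal.Quotient.mk _ (AdjoinRoot.root f)) = AdjoinRoot.root _ := by
  simpa only [map_X, AdjoinRoot.mk_X] using adjoinRootQuotientEquiv_mk f a X

lemma surjective_mk_span_root_comp_of (f : R[X]) :
    Function.Surjective ((Ideal.Quotient.mk (Ideal.span {AdjoinRoot.root f})).comp
      (AdjoinRoot.of f)) := by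
  intro z
  obtain ⟨z, rfl⟩ := Ideal.Quotient.mk_surjective z
  obtain ⟨g, rfl⟩ := AdjoinRoot.mk_surjective z
  refine ⟨g.coeff 0, Ideal.Quotient.eq.2 (Ideal.mem_span_singleton.2
    ⟨-AdjoinRoot.mk f g.divX, ?_⟩)⟩
  have h := congrArg (AdjoinRoot.mk f) (divX_mul_X_add g)
  rw [map_add, map_mul, AdjoinRoot.mk_X, AdjoinRoot.mk_C] at h
  rw [← h]
  ring

lemma ker_mk_span_root_comp_of {p : ℕ} (hp : p ≠ 0) (a : R) :
    RingHom.ker ((Ideal.Quotient.mk (Ideal.span {AdjoinRoot.root (X ^ p - C a)})).comp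
      (AdjoinRoot.of (X ^ p - C a))) = Ideal.span {a} := by
  refine le_antisymm (fun r hr => ?_) ?_
  · rw [RingHom.mem_ker, RingHom.comp_apply, Ideal.Quotient.eq_zero_iff_dvd] at hr
    obtain ⟨y, hy⟩ := hr
    let ψ : AdjoinRoot (X ^ p - C a) →+* R ⧸ Ideal.span {a} :=
      AdjoinRoot.lift (Ideal.Quotient.mk _) 0 (by simp [hp])
    have h := congrArg ψ hy
    rw [AdjoinRoot.lift_of, map_mul, AdjoinRoot.lift_root, zero_mul] at h
    exact Ideal.Quotient.eq_zero_iff_mem.1 h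
  · rw [Ideal.span_singleton_le_iff_mem, RingHom.mem_ker, RingHom.comp_apply,
      Ideal.Quotient.eq_zero_iff_dvd, ← adjoinRoot_X_pow_sub_C_root_pow]
    exact dvd_pow_self _ hp

/-- Modulo an adjoined `p`-th root of `a`, nothing is left but `R ⧸ (a)`. -/
noncomputable def quotientEquivAdjoinRootQuotientRoot {p : ℕ} (hp : p ≠ 0) (a : R) :
    (R ⧸ Ideal.span {a}) ≃+*
      (AdjoinRoot (X ^ p - C a) ⧸ Ideal.span {AdjoinRoot.root (X ^ p - C a)}) :=
  (Ideal.quotEquivOfEq (ker_mk_span_root_comp_of hp a).symm).trans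
    (RingHom.quotientKerEquivOfSurjective (surjective_mk_span_root_comp_of _))

end AdjoinRoot

namespace IsRegularSystem

open Polynomial

variable {R : Type u} [CommRing R] {n p : ℕ} {x : ℕ → R}

lemma adjoinRoot_succ {f : R[X]} (hf : f.Monic) (h : IsRegularSystem (n + 1) x)
    {y : ℕ → AdjoinRoot f} (hy_zero : y 0 = AdjoinRoot.of f (x 0))
    {z : ℕ → AdjoinRoot (f.map (Ideal.Quotient.mk (Ideal.span {x 0})))}
    (hyz : ∀ i, z i = adjoinRootQuotientEquiv f (x 0) (Ideal.Quotient.mk _ (y (i + 1))))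
    (hz : IsRegularSystem n z) : IsRegularSystem (n + 1) y := by
  have := h.isLocalRing
  have := adjoinRoot_isIntegral hf
  refine succ_of_eq hy_zero (fun _ => rfl)
    (mem_jacobson_bot_of_pow_eq_algebraMap h.head_mem_maximalIdeal (pow_one _))
    (adjoinRoot_of_mem_nonZeroDivisors hf h.2.1)
    (hz.of_ringEquiv (adjoinRootQuotientEquiv f (x 0)).symm fun i _ => ?_)
  rw [RingEquiv.eq_symm_apply, hyz]

lemma adjoinRoot_head (hp : p ≠ 0) (h : IsRegularSystem (n + 1) x) :
    IsRegularSystem (n + 1)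
      (Function.update (fun j => AdjoinRoot.of (X ^ p - C (x 0)) (x j)) 0 (AdjoinRoot.root _)) := by
  have := h.isLocalRing
  have hf : (X ^ p - C (x 0)).Monic := monic_X_pow_sub_C _ hp
  have := adjoinRoot_isIntegral hf
  have hroot := adjoinRoot_X_pow_sub_C_root_pow p (x 0)
  refine succ_of_eq (Function.update_self ..)
    (fun j => Function.update_of_ne j.succ_ne_zero ..)
    (mem_jacobson_bot_of_pow_eq_algebraMap h.head_mem_maximalIdeal hroot) ?_
    (h.2.2.of_ringEquiv (quotientEquivAdjoinRootQuotientRoot hp (x 0)) fun _ _ => rfl)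
  have hpow := adjoinRoot_of_mem_nonZeroDivisors hf h.2.1
  rw [← hroot, ← isRegular_iff_mem_nonZeroDivisors,
    IsRegular.pow_iff (Nat.pos_of_ne_zero hp)] at hpow
  exact isRegular_iff_mem_nonZeroDivisors.1 hpow

lemma adjoinRoot_of_eq (hp : p ≠ 0) (h : IsRegularSystem n x) {i : ℕ} (hi : i < n) {a : R}
    (ha : x i = a) :
    IsRegularSystem n
      (Function.update (fun j => AdjoinRoot.of (X ^ p - C a) (x j)) i (AdjoinRoot.root _)) := by
  subst ha
  induction n generalizing R i with
  | zero => omega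
  | succ n ih =>
    cases i with
    | zero => exact h.adjoinRoot_head hp
    | succ i =>
      have hz := ih h.2.2 (i := i) (by omega)
      have hmap : (X ^ p - C (x (i + 1))).map (Ideal.Quotient.mk (Ideal.span {x 0})) =
          X ^ p - C (Ideal.Quotient.mk (Ideal.span {x 0}) (x (i + 1))) := by simp
      rw [← hmap] at hz
      refine h.adjoinRoot_succ (monic_X_pow_sub_C _ hp)
        (Function.update_of_ne i.succ_ne_zero.symm ..) (fun j => ?_) hz
      obtain rfl | hj := eq_or_ne j i
      · rw [Function.update_self, Function.update_self, adjoinRootQuotientEquiv_root]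
      · rw [Function.update_of_ne hj, Function.update_of_ne (by omega), adjoinRootQuotientEquiv_of]

lemma adjoinRoot_of_isUnit_sub_pow (hp : p.Prime) (h : IsRegularSystem n x) {t : R}
    (ht : ∀ a, IsUnit (t - a ^ p)) :
    IsRegularSystem n fun j => AdjoinRoot.of (X ^ p - C t) (x j) := by
  induction n generalizing R with
  | zero =>
    let := IsField.toField h
    have hirr : Irreducible (X ^ p - C t) := X_pow_sub_C_irreducible_of_prime hp fun b hb => by
      simpa [hb] using ht b
    have := Fact.mk hirr
    exact Field.toIsField (AdjoinRoot (X ^ p - C t))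
  | succ n ih =>
    have hz := ih h.2.2 (t := Ideal.Quotient.mk _ t) fun a => by
      obtain ⟨a, rfl⟩ := Ideal.Quotient.mk_surjective a
      simpa using (ht a).map (Ideal.Quotient.mk (Ideal.span {x 0}))
    have hmap : (X ^ p - C t).map (Ideal.Quotient.mk (Ideal.span {x 0})) =
        X ^ p - C (Ideal.Quotient.mk (Ideal.span {x 0}) t) := by simp
    rw [← hmap] at hz
    exact h.adjoinRoot_succ (monic_X_pow_sub_C _ hp.ne_zero) rfl
      (fun j => (adjoinRootQuotientEquiv_of _ _ _).symm) hz

end IsRegularSystem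

/-! ### Equational flatness modulo an element -/

lemma sum_mul_sum_mul_eq_sum_sum_mul {R ι κ : Type*} [CommSemiring R] [Fintype ι] [Fintype κ]
    (a : ι → R) (b : ι → κ → R) (c : κ → R) :
    ∑ i, a i * ∑ j, b i j * c j = ∑ j, (∑ i, a i * b i j) * c j :=
  Matrix.dotProduct_mulVec a (Matrix.of b) c

lemma sum_map_mul_sum_map_mul {A B ι κ : Type*} [CommSemiring A] [CommSemiring B] [Fintype ι]
    [Fintype κ] (φ : A →+* B) (a : ι → A) (b : ι → κ → A) (c : κ → B) :
    ∑ i, φ (a i) * ∑ j, φ (b i j) * c j = ∑ j, φ (∑ i, a i * b i j) * c j := by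
  simp only [sum_mul_sum_mul_eq_sum_sum_mul, map_sum, map_mul]

section

variable {A : Type*} {B : Type*} {C : Type*} [CommRing A] [CommRing B] [CommRing C]

/-- A relation `∑ i, φ (a i) * y i ∈ J` is trivial modulo `s` if the vector `y` is, modulo `J`, a
combination of images of vectors over `A` each of which satisfies the relation modulo `s`. -/
def IsTrivialRelation {ι : Type} [Fintype ι] (φ : A →+* B) (s : A) (J : Ideal B) (a : ι → A)
    (y : ι → B) : Prop :=
  ∃ (κ : Type) (_ : Fintype κ) (e : ι → κ → A) (z : κ → B),
    (∀ i, y i - ∑ l, φ (e i l) * z l ∈ J) ∧ ∀ l, s ∣ ∑ i, a i * e i l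

/-- The equational criterion for flatness of `A ⧸ (s) → B ⧸ J`. The
definition does not ask for `φ s ∈ J`. -/
def FlatModulo (φ : A →+* B) (s : A) (J : Ideal B) : Prop :=
  ∀ (ι : Type) [Fintype ι] (a : ι → A) (y : ι → B),
    ∑ i, φ (a i) * y i ∈ J → IsTrivialRelation φ s J a y

lemma FlatModulo.exists_eq_sum {φ : A →+* B} {s : A} (h : FlatModulo φ s ⊥) {ι : Type} [Fintype ι]
    {a : ι → A} {y : ι → B} (hy : ∑ i, φ (a i) * y i = 0) :
    ∃ (κ : Type) (_ : Fintype κ) (e : ι → κ → A) (z : κ → B),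
      (∀ i, y i = ∑ l, φ (e i l) * z l) ∧ ∀ l, s ∣ ∑ i, a i * e i l := by
  obtain ⟨κ, _, e, z, hez, he⟩ := h ι a y (Ideal.mem_bot.2 hy)
  exact ⟨κ, inferInstance, e, z, fun i => sub_eq_zero.1 (hez i), he⟩

lemma FlatModulo.exists_of_forall_sum_mem {φ : A →+* B} {s : A} {J : Ideal B}
    (h : FlatModulo φ s J) (n : ℕ) {ι : Type} [Fintype ι] (a : Fin n → ι → A) (y : ι → B)
    (hy : ∀ k, ∑ i, φ (a k i) * y i ∈ J) :
    ∃ (κ : Type) (_ : Fintype κ) (e : ι → κ → A) (z : κ → B),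
      (∀ i, y i - ∑ l, φ (e i l) * z l ∈ J) ∧ ∀ k l, s ∣ ∑ i, a k i * e i l := by
  induction n with
  | zero =>
    classical
    refine ⟨ι, inferInstance, fun i l => if i = l then 1 else 0, y, fun i => ?_, fun k => k.elim0⟩
    simp [apply_ite φ]
  | succ n ih =>
    obtain ⟨κ, _, e, z, hez, he⟩ := ih (fun k => a k.succ) fun k => hy k.succ
    have hz : ∑ l, φ (∑ i, a 0 i * e i l) * z l ∈ J := by
      rw [← sum_map_mul_sum_map_mul]
      have hdiff : ∑ i, φ (a 0 i) * (y i - ∑ l, φ (e i l) * z l) ∈ J :=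
        J.sum_mem fun i _ => J.mul_mem_left _ (hez i)
      simp only [mul_sub, Finset.sum_sub_distrib] at hdiff
      exact (J.sub_mem_iff_right (hy 0)).1 hdiff
    obtain ⟨κ', _, f, w, hfw, hf⟩ := h κ _ z hz
    refine ⟨κ', inferInstance, fun i m => ∑ l, e i l * f l m, w, fun i => ?_, fun k m => ?_⟩
    · have hdiff : ∑ l, φ (e i l) * (z l - ∑ m, φ (f l m) * w m) ∈ J :=
        J.sum_mem fun l _ => J.mul_mem_left _ (hfw l)
      rw [← sum_map_mul_sum_map_mul]
      simpa [mul_sub, Finset.sum_sub_distrib] using J.add_mem (hez i) hdiff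
    · rw [sum_mul_sum_mul_eq_sum_sum_mul]
      cases k using Fin.cases with
      | zero => exact hf m
      | succ k => exact Finset.dvd_sum fun l _ => (he k l).mul_right _

lemma FlatModulo.comp {φ : A →+* B} {ψ : B →+* C} {s : A} {s' : B} {J : Ideal B} {J' : Ideal C}
    (hφ : FlatModulo φ s J) (hψ : FlatModulo ψ s' J') (hs : s' ∈ J) (hJ : J ≤ J'.comap ψ) :
    FlatModulo (ψ.comp φ) s J' := by
  intro ι _ a y hy
  obtain ⟨κ, _, b, z, hbz, hb⟩ := hψ ι (fun i => φ (a i)) y hy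
  choose μ _ e w hew he using fun l => hφ ι a (fun i => b i l) (J.mem_of_dvd (hb l) hs)
  refine ⟨Σ l, μ l, inferInstance, fun i q => e q.1 i q.2, fun q => ψ (w q.1 q.2) * z q.1,
    fun i => ?_, fun q => he q.1 q.2⟩
  have hdiff : ∑ l, ψ (b i l - ∑ m, φ (e l i m) * w l m) * z l ∈ J' :=
    J'.sum_mem fun l _ => J'.mul_mem_right _ (hJ (hew l i))
  convert J'.add_mem (hbz i) hdiff using 1
  simp only [Fintype.sum_sigma, RingHom.comp_apply, map_sub, map_sum, map_mul, sub_mul,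
    Finset.sum_sub_distrib, Finset.sum_mul, mul_assoc]
  ring

lemma FlatModulo.span_singleton {φ : A →+* B} (h : FlatModulo φ 0 ⊥) (s : A) :
    FlatModulo φ s (Ideal.span {φ s}) := by
  intro ι _ a y hy
  obtain ⟨u, hu⟩ := Ideal.mem_span_singleton.1 hy
  obtain ⟨κ, _, e, z, hez, he⟩ := h.exists_eq_sum (ι := Option ι) (a := fun o => o.elim (-s) a)
    (y := fun o => o.elim u y) (by simp [Fintype.sum_option, hu])
  refine ⟨κ, inferInstance, fun i l => e (some i) l, z, fun i => ?_, fun l => ⟨e none l, ?_⟩⟩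
  · rw [← hez (some i)]
    simp
  · have hsum := zero_dvd_iff.1 (he l)
    simp only [Fintype.sum_option, Option.elim] at hsum
    linear_combination hsum

section

variable {A' : Type*} {B' : Type*} [CommRing A'] [CommRing B'] {φ : A →+* B} {φ' : A' →+* B'}
  {s : A} {s' : A'} {J : Ideal B} {J' : Ideal B'} {α : A →+* A'} {β : B →+* B'}

lemma FlatModulo.of_surjective (h : FlatModulo φ' s' J') (hcomm : ∀ a, β (φ a) = φ' (α a))
    (hα : Function.Surjective α) (hβ : Function.Surjective β) (hs : ∀ a, s' ∣ α a → s ∣ a)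
    (hJ : J'.comap β = J) : FlatModulo φ s J := by
  subst hJ
  intro ι _ a y hy
  obtain ⟨κ, _, e, z, hez, he⟩ := h ι (fun i => α (a i)) (fun i => β (y i)) (by
    simpa [hcomm] using Ideal.mem_comap.1 hy)
  choose e' he' using fun i l => hα (e i l)
  choose z' hz' using fun l => hβ (z l)
  refine ⟨κ, inferInstance, e', z', fun i => ?_, fun l => hs _ ?_⟩
  · simpa [Ideal.mem_comap, hcomm, he', hz'] using hez i
  · simpa [he'] using he l

lemma FlatModulo.map_of_surjective (h : FlatModulo φ s J) (hcomm : ∀ a, β (φ a) = φ' (α a))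
    (hα : Function.Surjective α) (hβ : Function.Surjective β) (hs : ∀ a, s ∣ a → s' ∣ α a)
    (hJ : J'.comap β = J) : FlatModulo φ' s' J' := by
  subst hJ
  intro ι _ a y hy
  choose a' ha' using fun i => hα (a i)
  choose y' hy' using fun i => hβ (y i)
  obtain ⟨κ, _, e, z, hez, he⟩ := h ι a' y' (by simpa [Ideal.mem_comap, hcomm, ha', hy'] using hy)
  refine ⟨κ, inferInstance, fun i l => α (e i l), fun l => β (z l), fun i => ?_, fun l => ?_⟩
  · simpa [hcomm, hy'] using Ideal.mem_comap.1 (hez i)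
  · simpa [ha'] using hs _ (he l)

end

/-! ### Dévissage of flatness along powers of an element -/

variable {φ : A →+* B} {s t : A}

lemma IsTrivialRelation.mul {ι κ : Type} [Fintype ι] [Fintype κ] {d : ι → A} {x : ι → B}
    {a : ι → κ → A} {b : κ → A} {y : κ → B} {e : ι → B}
    (hx : ∀ i, x i = ∑ j, φ (a i j) * y j + φ s * e i) (hb : ∀ j, ∑ i, d i * a i j = s * b j)
    (h : IsTrivialRelation φ t (Ideal.span {φ t}) (Sum.elim b d) (Sum.elim y e)) :
    IsTrivialRelation φ (s * t) (Ideal.span {φ (s * t)}) d x := by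
  obtain ⟨μ, _, g, z, hgz, hg⟩ := h
  simp only [Ideal.mem_span_singleton] at hgz
  choose y' hy' using fun j => hgz (Sum.inl j)
  choose e' he' using fun i => hgz (Sum.inr i)
  simp only [Sum.elim_inl, Sum.elim_inr] at hy' he'
  refine ⟨μ ⊕ κ, inferInstance,
    fun i => Sum.elim (fun l => ∑ j, a i j * g (Sum.inl j) l + s * g (Sum.inr i) l)
      (fun j => t * a i j), Sum.elim z y', fun i => Ideal.mem_span_singleton.2 ⟨e' i, ?_⟩, ?_⟩
  · have hy : ∑ j, φ (a i j) * y j =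
        ∑ l, φ (∑ j, a i j * g (Sum.inl j) l) * z l + φ t * ∑ j, φ (a i j) * y' j := by
      rw [← sum_map_mul_sum_map_mul, Finset.mul_sum, ← Finset.sum_add_distrib]
      exact Finset.sum_congr rfl fun j _ => by linear_combination φ (a i j) * hy' j
    simp only [Fintype.sum_sum_type, Sum.elim_inl, Sum.elim_inr, map_add, map_mul φ s,
      map_mul φ t, add_mul, Finset.sum_add_distrib, mul_assoc, ← Finset.mul_sum]
    linear_combination hx i + hy + φ s * he' i
  · rintro (l | j)
    · obtain ⟨c, hc⟩ := hg l
      simp only [Fintype.sum_sum_type, Sum.elim_inl, Sum.elim_inr] at hc ⊢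
      refine ⟨c, ?_⟩
      simp only [mul_add, Finset.sum_add_distrib, sum_mul_sum_mul_eq_sum_sum_mul, hb,
        mul_left_comm _ s, mul_assoc s, ← Finset.mul_sum]
      linear_combination s * hc
    · refine ⟨b j, ?_⟩
      simp only [Sum.elim_inr, mul_left_comm _ t, ← Finset.mul_sum, hb]
      ring

lemma FlatModulo.mul (hs : FlatModulo φ s (Ideal.span {φ s}))
    (ht : FlatModulo φ t (Ideal.span {φ t}))
    (hst : ∀ y, φ (s * t) ∣ φ s * y → φ t ∣ y) :
    FlatModulo φ (s * t) (Ideal.span {φ (s * t)}) := by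
  intro ι _ d x hx
  rw [Ideal.mem_span_singleton] at hx
  obtain ⟨κ, _, a, y, hay, hdvd⟩ := hs ι d x
    (Ideal.mem_span_singleton.2 ((map_dvd φ (dvd_mul_right s t)).trans hx))
  choose b hb using hdvd
  choose e he using fun i => Ideal.mem_span_singleton.1 (hay i)
  have hx' : ∀ i, x i = ∑ j, φ (a i j) * y j + φ s * e i := fun i => by rw [← he]; ring
  refine IsTrivialRelation.mul hx' hb (ht _ _ _ (Ideal.mem_span_singleton.2 (hst _ ?_)))
  convert hx using 1
  simp only [Fintype.sum_sum_type, Sum.elim_inl, Sum.elim_inr, hx', mul_add,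
    Finset.sum_add_distrib, sum_map_mul_sum_map_mul, hb, map_mul, mul_assoc, mul_left_comm _ (φ s),
    ← Finset.mul_sum]

lemma FlatModulo.pow (h : FlatModulo φ t (Ideal.span {φ t})) {n : ℕ}
    (ht : ∀ k < n, ∀ y, φ t ^ (k + 1) ∣ φ t ^ k * y → φ t ∣ y) :
    FlatModulo φ (t ^ n) (Ideal.span {φ (t ^ n)}) := by
  induction n with
  | zero =>
    intro ι _ a y _
    exact ⟨Empty, inferInstance, fun _ l => l.elim, fun l => l.elim, fun i => by simp,
      fun l => l.elim⟩
  | succ n ih =>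
    rw [pow_succ]
    exact (ih fun k hk => ht k (hk.trans n.lt_succ_self)).mul h fun y hy =>
      ht n n.lt_succ_self y (by simpa [pow_succ] using hy)

lemma comap_mk_span_singleton (b c : B) :
    (Ideal.span {Ideal.Quotient.mk (Ideal.span {c}) b}).comap (Ideal.Quotient.mk (Ideal.span {c})) =
      Ideal.span {b, c} := by
  rw [← Set.image_singleton, ← Ideal.map_span,
    Ideal.comap_map_of_surjective' _ Ideal.Quotient.mk_surjective, Ideal.mk_ker, Ideal.span_insert]

lemma FlatModulo.pow_span_pair {ρ : B} (h : FlatModulo φ t (Ideal.span {φ t, ρ}))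
    (ht : ∀ n y, φ t ^ n * y ∈ Ideal.span {φ t ^ (n + 1), ρ} → y ∈ Ideal.span {φ t, ρ}) (n : ℕ) :
    FlatModulo φ (t ^ n) (Ideal.span {φ t ^ n, ρ}) := by
  let π := Ideal.Quotient.mk (Ideal.span {ρ})
  have hπ : Function.Surjective π := Ideal.Quotient.mk_surjective
  have hmem : ∀ b c, π b ∣ π c ↔ c ∈ Ideal.span {b, ρ} := fun b c => by
    rw [← comap_mk_span_singleton, Ideal.mem_comap, Ideal.mem_span_singleton]
  have hpow : FlatModulo (π.comp φ) (t ^ n) (Ideal.span {(π.comp φ) (t ^ n)}) := by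
    refine FlatModulo.pow ?_ fun k _ y hy => ?_
    · exact h.map_of_surjective (α := RingHom.id A) (β := π) (fun _ => rfl)
        Function.surjective_id hπ (fun _ => id) (comap_mk_span_singleton _ _)
    · obtain ⟨y, rfl⟩ := hπ y
      simp only [RingHom.comp_apply, ← map_pow π, ← map_mul π, hmem] at hy ⊢
      exact ht k y hy
  refine hpow.of_surjective (α := RingHom.id A) (β := π) (fun _ => rfl)
    Function.surjective_id hπ (fun _ => id) ?_
  rw [RingHom.comp_apply, comap_mk_span_singleton, map_pow]

end

/-! ### Flatness of perfections and of polynomial rings -/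

section

variable {p : ℕ} [Fact p.Prime] {D E C : Type*} [CommRing D] [CommRing E] [CommRing C]

lemma IsTrivialRelation.of_pow [CharP D p] [PerfectRing D p] [CharP C p] [PerfectRing C p]
    {ι : Type} [Fintype ι] (ψ : E →+* C) {φ : D →+* E} {t : D} {ρ : E}
    {m : ℕ} {a : ι → D} {y : ι → C} {Y : ι → E} (hY : ∀ i, ψ (Y i) = y i ^ p ^ m)
    (h : IsTrivialRelation φ (t ^ p ^ m) (Ideal.span {φ t ^ p ^ m, ρ ^ p ^ m})
      (fun i => a i ^ p ^ m) Y) :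
    IsTrivialRelation (ψ.comp φ) t (Ideal.span {ψ (φ t), ψ ρ}) a y := by
  have injC := (bijective_iterateFrobenius C p m).1
  have injD := (bijective_iterateFrobenius D p m).1
  have rootC : ∀ x : C, ∃ r, r ^ p ^ m = x := (bijective_iterateFrobenius C p m).2
  have rootD : ∀ x : D, ∃ r, r ^ p ^ m = x := (bijective_iterateFrobenius D p m).2
  obtain ⟨κ, _, e, z, hez, he⟩ := h
  choose e' he' using fun i l => rootD (e i l)
  choose z' hz' using fun l => rootC (ψ (z l))
  refine ⟨κ, inferInstance, e', z', fun i => ?_, fun l => ?_⟩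
  · obtain ⟨c, d, hcd⟩ := Ideal.mem_span_pair.1 (hez i)
    obtain ⟨c', hc'⟩ := rootC (ψ c)
    obtain ⟨d', hd'⟩ := rootC (ψ d)
    refine Ideal.mem_span_pair.2 ⟨c', d', injC ?_⟩
    have hψ := congrArg ψ hcd
    simp only [map_add, map_sub, map_sum, map_mul, ← map_pow φ] at hψ
    simpa only [map_add, map_sub, map_sum, map_mul, iterateFrobenius_def, hc', hd', hz', ← hY,
      RingHom.comp_apply, ← map_pow, he'] using hψ
  · obtain ⟨c, hc⟩ := he l
    obtain ⟨c', rfl⟩ := rootD c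
    refine ⟨c', injD ?_⟩
    simpa only [map_sum, map_mul, iterateFrobenius_def, he'] using hc

variable [CharP E p] [CharP C p]

lemma exists_sum_pow_mul_eq_zero_of_isPRadical (ψ : E →+* C) [IsPRadical ψ p] {ι : Type*}
    [Fintype ι] {a : ι → E} {y : ι → C} (h : ∑ i, ψ (a i) * y i = 0) :
    ∃ (m : ℕ) (Y : ι → E), (∀ i, ψ (Y i) = y i ^ p ^ m) ∧ ∑ i, a i ^ p ^ m * Y i = 0 := by
  choose n Y hY using fun i => IsPRadical.pow_mem ψ p (y i)
  let N := Finset.univ.sup n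
  let Z : ι → E := fun i => Y i ^ p ^ (N - n i)
  have hZ : ∀ i, ψ (Z i) = y i ^ p ^ N := fun i => by
    rw [map_pow, hY, ← pow_mul, ← pow_add, Nat.add_sub_cancel' (Finset.le_sup (Finset.mem_univ i))]
  have hker : ψ (∑ i, a i ^ p ^ N * Z i) = 0 := by
    simp only [map_sum, map_mul, map_pow, hZ, ← mul_pow]
    rw [← sum_pow_char_pow, h, zero_pow (pow_ne_zero _ (Fact.out : p.Prime).ne_zero)]
  obtain ⟨m, hm⟩ := mem_pNilradical.1 (IsPRadical.ker_le ψ p (RingHom.mem_ker.2 hker))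
  refine ⟨N + m, fun i => Z i ^ p ^ m, fun i => ?_, ?_⟩
  · rw [map_pow, hZ, ← pow_mul, ← pow_add]
  · rw [← hm, sum_pow_char_pow]
    simp only [mul_pow, ← pow_mul, ← pow_add]

lemma exists_sum_pow_mul_mem_span_pair_of_isPRadical (ψ : E →+* C) [IsPRadical ψ p] {ι : Type*}
    [Fintype ι] {a : ι → E} {y : ι → C} {b c : E}
    (h : ∑ i, ψ (a i) * y i ∈ Ideal.span {ψ b, ψ c}) :
    ∃ (m : ℕ) (Y : ι → E), (∀ i, ψ (Y i) = y i ^ p ^ m) ∧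
      ∑ i, a i ^ p ^ m * Y i ∈ Ideal.span {b ^ p ^ m, c ^ p ^ m} := by
  obtain ⟨u, v, huv⟩ := Ideal.mem_span_pair.1 h
  obtain ⟨m, Y, hY, hrel⟩ := exists_sum_pow_mul_eq_zero_of_isPRadical (p := p) ψ
    (a := fun o : Option (Option ι) => o.elim b fun o => o.elim c a)
    (y := fun o => o.elim (-u) fun o => o.elim (-v) y) (by
      simp only [Fintype.sum_option, Option.elim]
      linear_combination -huv)
  refine ⟨m, fun i => Y (some (some i)), fun i => hY (some (some i)),
    Ideal.mem_span_pair.2 ⟨-Y none, -Y (some none), ?_⟩⟩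
  simp only [Fintype.sum_option, Option.elim] at hrel
  linear_combination -hrel

lemma FlatModulo.comp_of_isPRadical [CharP D p] [PerfectRing D p] [PerfectRing C p]
    (ψ : E →+* C) [IsPRadical ψ p] {φ : D →+* E} {t : D} {ρ : E}
    (h : ∀ n : ℕ, FlatModulo φ (t ^ p ^ n) (Ideal.span {φ t ^ p ^ n, ρ ^ p ^ n})) :
    FlatModulo (ψ.comp φ) t (Ideal.span {ψ (φ t), ψ ρ}) := by
  intro ι _ a y hy
  obtain ⟨m, Y, hY, hrel⟩ := exists_sum_pow_mul_mem_span_pair_of_isPRadical (p := p) ψ hy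
  exact IsTrivialRelation.of_pow ψ hY (h m ι _ Y (by simpa only [map_pow] using hrel))

end

section

open Polynomial

variable {D E : Type*} [CommRing D] [CommRing E] {φ : D →+* E} {t : D}

lemma FlatModulo.polynomial (h : FlatModulo φ t ⊥) :
    FlatModulo ((C : E →+* E[X]).comp φ) t ⊥ := by
  intro ι _ a y hy
  rw [Ideal.mem_bot] at hy
  let N := Finset.univ.sup (fun i => (y i).natDegree) + 1
  have hN : ∀ i, (y i).natDegree < N := fun i =>
    Nat.lt_succ_of_le (Finset.le_sup (f := fun i => (y i).natDegree) (Finset.mem_univ i))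
  have hcoeff : ∀ n : Fin N, ∑ i, φ (a i) * (y i).coeff n = 0 := fun n => by
    simpa [finsetSum_coeff] using congrArg (fun f => f.coeff n) hy
  choose κ _ e z hez he using fun n => h.exists_eq_sum (hcoeff n)
  refine ⟨Σ n, κ n, inferInstance, fun i q => e q.1 i q.2,
    fun q => C (z q.1 q.2) * X ^ (q.1 : ℕ), fun i => ?_, fun q => he q.1 q.2⟩
  rw [Ideal.mem_bot, sub_eq_zero, Fintype.sum_sigma, (y i).as_sum_range' N (hN i),
    Finset.sum_range]
  refine Finset.sum_congr rfl fun n _ => ?_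
  rw [← C_mul_X_pow_eq_monomial, hez, map_sum, Finset.sum_mul]
  simp [mul_assoc]

lemma FlatModulo.polynomial_span_singleton (h : FlatModulo φ t ⊥) {g : E[X]} (hg : g.Monic) :
    FlatModulo ((C : E →+* E[X]).comp φ) t (Ideal.span {g}) := by
  intro ι _ a y hy
  have hrem : ∑ i, ((C : E →+* E[X]).comp φ) (a i) * (y i %ₘ g) = 0 := by
    rw [← (modByMonic_eq_zero_iff_dvd hg).2 (Ideal.mem_span_singleton.1 hy)]
    change _ = modByMonicHom g _
    simp only [map_sum, RingHom.comp_apply, ← smul_eq_C_mul, map_smul]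
    rfl
  obtain ⟨κ, _, e, z, hez, he⟩ := h.polynomial.exists_eq_sum hrem
  refine ⟨κ, inferInstance, e, z, fun i => ?_, he⟩
  rw [← hez, Ideal.mem_span_singleton]
  exact ⟨y i /ₘ g, by linear_combination -modByMonic_add_div (y i) g⟩

end

/-! ### Divisibility and proper ideals in `p`-radical extensions -/

section

variable {E : Type*} [CommRing E] {b r : E}

lemma pow_dvd_of_pow_dvd_mul (hb : b ∈ nonZeroDivisors E) (hr : ∀ y, b ∣ r * y → b ∣ y) (n : ℕ)
    {y : E} (h : b ^ n ∣ r * y) : b ^ n ∣ y := by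
  induction n generalizing y with
  | zero => simp
  | succ n ih =>
    obtain ⟨z, rfl⟩ := hr y ((dvd_pow_self b n.succ_ne_zero).trans h)
    rw [mul_left_comm, pow_succ'] at h
    exact pow_succ' b n ▸ mul_dvd_mul_left b (ih ((dvd_cancel_left_mem_nonZeroDivisors hb).1 h))

lemma dvd_of_dvd_pow_mul (hr : ∀ y, b ∣ r * y → b ∣ y) (n : ℕ) {y : E} (h : b ∣ r ^ n * y) :
    b ∣ y := by
  induction n with
  | zero => simpa using h
  | succ n ih => exact ih (hr _ (by rwa [← mul_assoc, ← pow_succ']))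

variable {C : Type*} [CommRing C]

lemma isIntegral_of_isPRadical (p : ℕ) [Fact p.Prime] (ψ : E →+* C)
    [IsPRadical ψ p] : ψ.IsIntegral := by
  let := ψ.toAlgebra
  intro x
  obtain ⟨n, y, hy⟩ := IsPRadical.pow_mem ψ p x
  have hpow : IsIntegral E (x ^ p ^ n) := hy ▸ isIntegral_algebraMap
  exact hpow.of_pow (pow_pos (Fact.out : p.Prime).pos n)

lemma map_ne_top_of_isPRadical (p : ℕ) [Fact p.Prime] (ψ : E →+* C) [IsPRadical ψ p]
    {I : Ideal E} (hI : I ≠ ⊤) : I.map ψ ≠ ⊤ := by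
  obtain ⟨𝔫, h𝔫, hle⟩ := Ideal.exists_le_maximal I hI
  have hker : RingHom.ker ψ ≤ 𝔫 :=
    ((IsPRadical.ker_le ψ p).trans pNilradical_le_nilradical).trans (nilradical_le_prime 𝔫)
  have hintegral := isIntegral_of_isPRadical p ψ
  exact ne_top_of_le_ne_top
    (mt (Ideal.map_eq_top_iff_of_ker_le ψ hker hintegral).1 h𝔫.ne_top) (Ideal.map_mono hle)

lemma map_mem_nonZeroDivisors_of_isPRadical (p : ℕ) [Fact p.Prime] [CharP E p] [CharP C p]
    [PerfectRing C p] (ψ : E →+* C) [IsPRadical ψ p] (hb : b ∈ nonZeroDivisors E) :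
    ψ b ∈ nonZeroDivisors C := by
  rw [mem_nonZeroDivisors_iff_left]
  intro y hy
  obtain ⟨m, Y, hY, hrel⟩ := exists_sum_pow_mul_eq_zero_of_isPRadical (p := p) ψ (ι := Unit)
    (a := fun _ => b) (y := fun _ => y) (by simpa using hy)
  have hY_zero : Y () = 0 :=
    (mem_nonZeroDivisors_iff_left.1 (pow_mem hb (p ^ m))) _ (by simpa using hrel)
  refine (bijective_iterateFrobenius C p m).1 ?_
  rw [iterateFrobenius_def, ← hY (), hY_zero, map_zero, map_zero]

lemma map_dvd_of_map_dvd_map_mul_of_isPRadical (p : ℕ) [Fact p.Prime] [CharP E p] [CharP C p]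
    [PerfectRing C p] (ψ : E →+* C) [IsPRadical ψ p] (hb : b ∈ nonZeroDivisors E)
    (hr : ∀ y, b ∣ r * y → b ∣ y) {y : C} (h : ψ b ∣ ψ r * y) : ψ b ∣ y := by
  obtain ⟨m, Y, hY, hrel⟩ := exists_sum_pow_mul_mem_span_pair_of_isPRadical (p := p) ψ
    (ι := Unit) (a := fun _ => r) (y := fun _ => y) (b := b) (c := 0)
    (by simpa [Ideal.span_pair_zero, Ideal.mem_span_singleton] using h)
  simp only [Finset.univ_unique, Finset.sum_singleton, Ideal.span_pair_zero,
    zero_pow (pow_ne_zero m (Fact.out : p.Prime).ne_zero), Ideal.mem_span_singleton] at hrel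
  obtain ⟨Z, hZ⟩ := pow_dvd_of_pow_dvd_mul hb (fun _ => dvd_of_dvd_pow_mul hr _) _ hrel
  obtain ⟨z, hz⟩ := (bijective_iterateFrobenius C p m).2 (ψ Z)
  refine ⟨z, (bijective_iterateFrobenius C p m).1 ?_⟩
  rw [map_mul, hz, iterateFrobenius_def, iterateFrobenius_def, ← hY (), hZ, map_mul, map_pow]

end

/-! ### Perfect algebras that are flat modulo an element -/

section

open Polynomial

universe u₀

variable {D₀ : Type u₀} [CommRing D₀] {t : D₀} {𝔪 : Ideal D₀}

/-- `D` is a perfect algebra of characteristic `p` in which `t` is regular, flat over `D₀` modulo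
`t`, with `𝔪 D ≠ D`. -/
structure IsFlatPerfect (p : ℕ) (t : D₀) (𝔪 : Ideal D₀) {D : Type u} [CommRing D]
    (φ : D₀ →+* D) : Prop where
  charP : CharP D p
  perfectRing : PerfectRing D p
  mem_nonZeroDivisors : φ t ∈ nonZeroDivisors D
  flat : FlatModulo φ t (Ideal.span {φ t})
  map_ne_top : 𝔪.map φ ≠ ⊤

/-- Both `C` and `C ⧸ (ρ)` are flat over `D₀` modulo `t`, the sequence `t, ρ` is regular in `C`,
and `𝔪` stays a proper ideal in `C ⧸ (ρ)`. This is what has to be preserved when the zero locus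
of `ρ` is made divisible by `t`. -/
structure IsFlatRegularPair (t : D₀) (𝔪 : Ideal D₀) {C : Type u} [CommRing C] (φ : D₀ →+* C)
    (ρ : C) : Prop where
  mem_nonZeroDivisors : φ t ∈ nonZeroDivisors C
  flat : FlatModulo φ t (Ideal.span {φ t})
  dvd_of_dvd_mul : ∀ y, φ t ∣ ρ * y → φ t ∣ y
  flat_span_pair : FlatModulo φ t (Ideal.span {φ t, ρ})
  sup_ne_top : 𝔪.map φ ⊔ Ideal.span {ρ} ≠ ⊤

lemma IsFlatRegularPair.isFlatPerfect {p : ℕ} {C : Type u} [CommRing C] [hchar : CharP C p]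
    [hperf : PerfectRing C p] {φ : D₀ →+* C} {ρ : C} (h : IsFlatRegularPair t 𝔪 φ ρ) :
    IsFlatPerfect p t 𝔪 φ :=
  ⟨hchar, hperf, h.mem_nonZeroDivisors, h.flat, fun htop => h.sup_ne_top (by simp [htop])⟩

lemma FlatModulo.pow_of_surjective {E : Type*} {F : Type*} [CommRing E] [CommRing F] {φ : D₀ →+* E}
    {π : E →+* F} (ht : φ t ∈ nonZeroDivisors E) (hπ : Function.Surjective π)
    (hker : RingHom.ker π = Ideal.span {φ t}) {r : E}
    (hr : ∀ n b, φ t ^ n ∣ r * b → ∃ b', r * b = φ t ^ n * (r * b'))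
    (h : FlatModulo (π.comp φ) t (Ideal.span {π r})) (n : ℕ) :
    FlatModulo φ (t ^ n) (Ideal.span {φ t ^ n, r}) := by
  refine FlatModulo.pow_span_pair ?_ (fun k y hy => ?_) n
  · refine h.of_surjective (α := RingHom.id D₀) (fun _ => rfl) Function.surjective_id hπ
      (fun _ => id) ?_
    rw [← Set.image_singleton, ← Ideal.map_span, Ideal.comap_map_of_surjective' _ hπ, hker,
      Ideal.span_insert, sup_comm]
  · obtain ⟨a, b, hab⟩ := Ideal.mem_span_pair.1 hy
    obtain ⟨b', hb'⟩ := hr k b ⟨y - φ t * a, by linear_combination hab⟩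
    refine Ideal.mem_span_pair.2 ⟨a, b', ?_⟩
    refine sub_eq_zero.1 (mem_nonZeroDivisors_iff_left.1 (pow_mem ht k) _ ?_)
    linear_combination hab - hb'

lemma map_comp_C_sup_span_ne_top {A : Type*} [CommRing A] {φ : D₀ →+* A} (h : 𝔪.map φ ≠ ⊤)
    {g : A[X]} (hg : g.Monic) (hdeg : 0 < g.natDegree) :
    𝔪.map ((C : A →+* A[X]).comp φ) ⊔ Ideal.span {g} ≠ ⊤ := by
  intro htop
  have := Ideal.Quotient.nontrivial_iff.2 h
  let q := mapRingHom (Ideal.Quotient.mk (𝔪.map φ))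
  have hzero : (𝔪.map ((C : A →+* A[X]).comp φ)).map q = ⊥ := by
    rw [Ideal.map_map, Ideal.map_eq_bot_iff_le_ker]
    intro a ha
    simpa [q, RingHom.mem_ker, Ideal.Quotient.eq_zero_iff_mem] using Ideal.mem_map_of_mem φ ha
  have hunit : IsUnit (g.map (Ideal.Quotient.mk (𝔪.map φ))) := by
    have hmap := congrArg (Ideal.map q) htop
    rwa [Ideal.map_sup, hzero, bot_sup_eq, Ideal.map_span, Set.image_singleton, Ideal.map_top,
      Ideal.span_singleton_eq_top] at hmap
  have hone := (hg.map (Ideal.Quotient.mk (𝔪.map φ))).eq_one_of_isUnit hunit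
  have hdeg_map := hg.natDegree_map (Ideal.Quotient.mk (𝔪.map φ))
  rw [hone, natDegree_one] at hdeg_map
  omega

lemma isFlatRegularPair_perfectClosure {p : ℕ} [Fact p.Prime] [CharP D₀ p] [PerfectRing D₀ p]
    {E : Type u} [CommRing E] [CharP E p] {A : Type*} [CommRing A] {φ : D₀ →+* E} {φA : D₀ →+* A}
    {π : E →+* A[X]} (ht : φ t ∈ nonZeroDivisors E) (hπ : Function.Surjective π)
    (hker : RingHom.ker π = Ideal.span {φ t}) (hφ : π.comp φ = C.comp φA)
    (hflat : FlatModulo φA t ⊥) (hne : 𝔪.map φA ≠ ⊤) {ρ : E} {g : A[X]} (hg : g.Monic)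
    (hdeg : 0 < g.natDegree) (hρ : Associated (π ρ) g) :
    IsFlatRegularPair t 𝔪 ((PerfectClosure.of E p).comp φ) (PerfectClosure.of E p ρ) := by
  have hdvd : ∀ y, φ t ∣ ρ * y → φ t ∣ y := fun y hy => by
    simp only [← Ideal.mem_span_singleton, ← hker, RingHom.mem_ker, map_mul] at hy ⊢
    obtain ⟨v, hv⟩ := hρ
    refine hg.mul_right_eq_zero_iff.1 ?_
    rw [← hv, mul_right_comm, hy, zero_mul]
  have hspan : ∀ q, Ideal.span {π (ρ ^ q)} = Ideal.span {g ^ q} := fun q => by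
    obtain ⟨v, rfl⟩ := hρ
    rw [map_pow, mul_pow, Ideal.span_singleton_mul_right_unit (v.isUnit.pow q)]
  refine ⟨map_mem_nonZeroDivisors_of_isPRadical p (PerfectClosure.of E p) ht, ?_,
    fun y => map_dvd_of_map_dvd_map_mul_of_isPRadical p (PerfectClosure.of E p) ht hdvd, ?_, ?_⟩
  · have hperf := FlatModulo.comp_of_isPRadical (p := p) (PerfectClosure.of E p) (φ := φ) (t := t)
      (ρ := 0) fun n => by
        rw [zero_pow (pow_ne_zero _ (Fact.out : p.Prime).ne_zero)]
        refine FlatModulo.pow_of_surjective ht hπ hker (fun _ _ _ => ⟨0, by simp⟩) ?_ _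
        simpa only [hφ, map_zero, Ideal.span_singleton_zero] using hflat.polynomial
    rwa [map_zero, Ideal.span_pair_zero] at hperf
  · refine FlatModulo.comp_of_isPRadical (p := p) (PerfectClosure.of E p) fun n =>
      FlatModulo.pow_of_surjective ht hπ hker (fun k b hb => ?_) ?_ _
    · obtain ⟨b', rfl⟩ := pow_dvd_of_pow_dvd_mul ht (fun _ => dvd_of_dvd_pow_mul hdvd _) k hb
      exact ⟨b', by ring⟩
    · rw [hspan, hφ]
      exact hflat.polynomial_span_singleton (hg.pow _)
  · rw [← Ideal.map_map, ← Set.image_singleton (f := PerfectClosure.of E p), ← Ideal.map_span,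
      ← Ideal.map_sup]
    refine map_ne_top_of_isPRadical p _ fun htop => ?_
    have hmap := congrArg (Ideal.map π) htop
    rw [Ideal.map_sup, Ideal.map_map, Ideal.map_span, Set.image_singleton, Ideal.map_top,
      hφ] at hmap
    refine map_comp_C_sup_span_ne_top hne hg hdeg ?_
    rwa [← pow_one g, ← hspan, pow_one]

end

/-! ### Adjoining a fraction -/

section

open Polynomial

variable {D : Type u} [CommRing D]

lemma C_mem_nonZeroDivisors {b : D} (hb : b ∈ nonZeroDivisors D) :
    (C b : D[X]) ∈ nonZeroDivisors D[X] := by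
  rw [mem_nonZeroDivisors_iff_left] at hb ⊢
  intro g hg
  ext n
  exact hb _ (by rw [← coeff_C_mul, hg, coeff_zero])

/-- The ring `D[c / b]`, obtained from `D` by adjoining a solution `η` of `b * η = c`. -/
abbrev AdjoinFraction (b c : D) : Type u :=
  AdjoinRoot (C b * X - C c)

namespace AdjoinFraction

variable (b c : D)

lemma of_mul_root :
    AdjoinRoot.of _ b * AdjoinRoot.root _ = (AdjoinRoot.of _ c : AdjoinFraction b c) := by
  have h := AdjoinRoot.eval₂_root (C b * X - C c)
  simp only [eval₂_sub, eval₂_mul, eval₂_C, eval₂_X] at h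
  exact sub_eq_zero.1 h

/-- Modulo `b`, the equation `b * η = c` only says that `c` vanishes, so that `η` becomes a free
variable. -/
noncomputable def modHom : AdjoinFraction b c →+* (D ⧸ Ideal.span {b, c})[X] :=
  AdjoinRoot.lift (C.comp (Ideal.Quotient.mk (Ideal.span {b, c}))) X (by
    have hb : Ideal.Quotient.mk (Ideal.span {b, c}) b = 0 :=
      Ideal.Quotient.eq_zero_iff_mem.2 (Ideal.mem_span_pair.2 ⟨1, 0, by ring⟩)
    have hc : Ideal.Quotient.mk (Ideal.span {b, c}) c = 0 :=
      Ideal.Quotient.eq_zero_iff_mem.2 (Ideal.mem_span_pair.2 ⟨0, 1, by ring⟩)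
    simp [hb, hc])

lemma modHom_mk (g : D[X]) :
    modHom b c (AdjoinRoot.mk _ g) = g.map (Ideal.Quotient.mk (Ideal.span {b, c})) := by
  rw [modHom, AdjoinRoot.lift_mk]
  rfl

lemma modHom_of (a : D) :
    modHom b c (AdjoinRoot.of _ a) = C (Ideal.Quotient.mk (Ideal.span {b, c}) a) := by
  rw [← AdjoinRoot.mk_C, modHom_mk, map_C]

lemma modHom_root : modHom b c (AdjoinRoot.root _) = X := by
  rw [← AdjoinRoot.mk_X, modHom_mk, map_X]

lemma modHom_surjective : Function.Surjective (modHom b c) := fun g => by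
  obtain ⟨g, rfl⟩ := map_surjective _ Ideal.Quotient.mk_surjective g
  exact ⟨AdjoinRoot.mk _ g, modHom_mk b c g⟩

lemma ker_modHom : RingHom.ker (modHom b c) = Ideal.span {AdjoinRoot.of _ b} := by
  refine le_antisymm (fun y hy => ?_) ?_
  · obtain ⟨g, rfl⟩ := AdjoinRoot.mk_surjective y
    rw [RingHom.mem_ker, modHom_mk] at hy
    rw [g.as_sum_range_C_mul_X_pow, map_sum]
    refine sum_mem fun n _ => ?_
    have hcoeff : g.coeff n ∈ Ideal.span {b, c} := by
      simpa [Ideal.Quotient.eq_zero_iff_mem] using congrArg (fun f => f.coeff n) hy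
    obtain ⟨d, e, hde⟩ := Ideal.mem_span_pair.1 hcoeff
    rw [map_mul, AdjoinRoot.mk_C, ← hde, map_add, map_mul, map_mul, ← of_mul_root b c]
    exact Ideal.mul_mem_right _ _ (Ideal.mem_span_singleton.2
      ⟨AdjoinRoot.of _ d + AdjoinRoot.of _ e * AdjoinRoot.root _, by ring⟩)
  · rw [Ideal.span_singleton_le_iff_mem, RingHom.mem_ker, modHom_of,
      Ideal.Quotient.eq_zero_iff_mem.2 (Ideal.mem_span_pair.2 ⟨1, 0, by ring⟩), map_zero]

variable {b c}

lemma of_mem_nonZeroDivisors (hb : b ∈ nonZeroDivisors D) (hc : ∀ y, b ∣ c * y → b ∣ y) :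
    (AdjoinRoot.of _ b : AdjoinFraction b c) ∈ nonZeroDivisors (AdjoinFraction b c) := by
  rw [mem_nonZeroDivisors_iff_left]
  intro y hy
  obtain ⟨g, rfl⟩ := AdjoinRoot.mk_surjective y
  rw [← AdjoinRoot.mk_C, ← map_mul, AdjoinRoot.mk_eq_zero] at hy
  obtain ⟨h, hh⟩ := hy
  have hdvd : C b ∣ h := by
    rw [C_dvd_iff_dvd_coeff]
    intro n
    have hch : C c * h = C b * (X * h - g) := by linear_combination hh
    exact hc _ ⟨_, by rw [← coeff_C_mul, hch, coeff_C_mul]⟩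
  obtain ⟨h, rfl⟩ := hdvd
  rw [AdjoinRoot.mk_eq_zero]
  exact ⟨h, sub_eq_zero.1 (mem_nonZeroDivisors_iff_left.1 (C_mem_nonZeroDivisors hb) _
    (by linear_combination hh))⟩

end AdjoinFraction

/-! ### Making a polynomial vanish modulo powers of `p` over the Witt vectors -/

universe u₀

variable {D₀ : Type u₀} [CommRing D₀] {t : D₀} {𝔪 : Ideal D₀} {φ : D₀ →+* D}

lemma map_mk_comp_ne_top {J : Ideal D} (h : 𝔪.map φ ⊔ J ≠ ⊤) :
    𝔪.map ((Ideal.Quotient.mk J).comp φ) ≠ ⊤ := fun htop => h <| by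
  rw [← Ideal.map_map] at htop
  rw [← Ideal.mk_ker (I := J),
    ← Ideal.comap_map_of_surjective' _ Ideal.Quotient.mk_surjective, htop, Ideal.comap_top]

lemma FlatModulo.mk_comp {J : Ideal D} (h : FlatModulo φ t J) :
    FlatModulo ((Ideal.Quotient.mk J).comp φ) t ⊥ :=
  h.map_of_surjective (α := RingHom.id D₀) (fun _ => rfl) Function.surjective_id
    Ideal.Quotient.mk_surjective (fun _ => id) (by rw [← RingHom.ker_eq_comap_bot, Ideal.mk_ker])

variable {p : ℕ} [Fact p.Prime] [CharP D₀ p] [PerfectRing D₀ p]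

lemma IsFlatPerfect.exists_isFlatRegularPair_eval (hD : IsFlatPerfect p t 𝔪 φ) (ht : t ∈ 𝔪)
    {f : D[X]} (hf : f.Monic) (hdeg : 0 < f.natDegree) :
    ∃ (E : Type u) (_ : CommRing E) (_ : CharP E p) (_ : PerfectRing E p) (j : D →+* E) (z : E),
      IsFlatRegularPair t 𝔪 (j.comp φ) ((f.map j).eval z) := by
  have := hD.charP
  let q := Ideal.Quotient.mk (Ideal.span {φ t})
  have hle : Ideal.span {φ t} ≤ 𝔪.map φ :=
    (Ideal.span_singleton_le_iff_mem _).2 (Ideal.mem_map_of_mem φ ht)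
  have := Ideal.Quotient.nontrivial_iff.2 (ne_top_of_le_ne_top hD.map_ne_top hle)
  have hker : RingHom.ker (mapRingHom q) = Ideal.span {(C.comp φ) t} := by
    rw [ker_mapRingHom, Ideal.mk_ker, Ideal.map_span, Set.image_singleton, RingHom.comp_apply]
  have hpair := isFlatRegularPair_perfectClosure (p := p) (𝔪 := 𝔪) (φ := C.comp φ)
    (φA := q.comp φ) (C_mem_nonZeroDivisors hD.mem_nonZeroDivisors)
    (map_surjective q Ideal.Quotient.mk_surjective) hker (RingHom.ext fun a => by simp)
    hD.flat.mk_comp (map_mk_comp_ne_top (by rw [sup_eq_left.2 hle]; exact hD.map_ne_top))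
    (hf.map q) (by rwa [hf.natDegree_map]) (Associated.refl _)
  refine ⟨PerfectClosure D[X] p, inferInstance, inferInstance, inferInstance,
    (PerfectClosure.of D[X] p).comp C, PerfectClosure.of D[X] p X, ?_⟩
  rwa [eval_map, ← hom_eval₂, eval₂_C_X]

lemma IsFlatRegularPair.exists_fraction [CharP D p] {ρ : D} (hD : IsFlatRegularPair t 𝔪 φ ρ)
    (ht : t ∈ 𝔪) (κ : D) {v : D} (hv : IsUnit v) :
    ∃ (E : Type u) (_ : CommRing E) (_ : CharP E p) (_ : PerfectRing E p) (j : D →+* E) (η : E),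
      j (φ t) * η = j ρ ∧ IsFlatRegularPair t 𝔪 (j.comp φ) (j κ + j v * η) := by
  let q := Ideal.Quotient.mk (Ideal.span {φ t, ρ})
  have hne : 𝔪.map φ ⊔ Ideal.span {φ t, ρ} ≠ ⊤ := by
    rw [Ideal.span_insert, ← sup_assoc, sup_eq_left.2
      ((Ideal.span_singleton_le_iff_mem _).2 (Ideal.mem_map_of_mem φ ht))]
    exact hD.sup_ne_top
  have := Ideal.Quotient.nontrivial_iff.2 (ne_top_of_le_ne_top hne le_sup_right)
  have := (AdjoinFraction.modHom (φ t) ρ).domain_nontrivial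
  have : CharP (AdjoinFraction (φ t) ρ) p := by
    rw [CharP.charP_iff_prime_eq_zero Fact.out, ← map_natCast (AdjoinRoot.of _),
      CharP.cast_eq_zero, map_zero]
  obtain ⟨w, hw⟩ := hv.exists_right_inv
  have hvw : C (q v) * C (q w) = 1 := by simp only [← map_mul, hw, map_one]
  have hpair := isFlatRegularPair_perfectClosure (p := p) (𝔪 := 𝔪)
    (φ := (AdjoinRoot.of (C (φ t) * X - C ρ)).comp φ) (φA := q.comp φ)
    (ρ := AdjoinRoot.of _ κ + AdjoinRoot.of _ v * AdjoinRoot.root _)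
    (AdjoinFraction.of_mem_nonZeroDivisors hD.mem_nonZeroDivisors hD.dvd_of_dvd_mul)
    (AdjoinFraction.modHom_surjective _ _) (AdjoinFraction.ker_modHom _ _)
    (RingHom.ext fun a => AdjoinFraction.modHom_of _ _ _) hD.flat_span_pair.mk_comp
    (map_mk_comp_ne_top hne) (monic_X_add_C (q (w * κ))) (by rw [natDegree_X_add_C]; exact one_pos)
    ⟨Units.mkOfMulEqOne (C (q w)) (C (q v)) (by rw [mul_comm, hvw]), by
      rw [map_add, map_mul, AdjoinFraction.modHom_of, AdjoinFraction.modHom_of,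
        AdjoinFraction.modHom_root, Units.val_mkOfMulEqOne, map_mul, map_mul]
      linear_combination X * hvw⟩
  refine ⟨PerfectClosure (AdjoinFraction (φ t) ρ) p, inferInstance, inferInstance, inferInstance,
    (PerfectClosure.of _ p).comp (AdjoinRoot.of _),
    PerfectClosure.of _ p (AdjoinRoot.root _), ?_, ?_⟩
  · rw [RingHom.comp_apply, RingHom.comp_apply, ← AdjoinFraction.of_mul_root, map_mul]
  · rwa [map_add, map_mul] at hpair

end

/-! ### Witt vectors over perfect rings -/

section

open Polynomial
open WittVector (constantCoeff teichmuller)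

variable {p : ℕ} [Fact p.Prime]

lemma constantCoeff_teichmuller {D : Type*} [CommRing D] (x : D) :
    constantCoeff (teichmuller p x) = x :=
  WittVector.teichmuller_coeff_zero p x

lemma constantCoeff_map {D E : Type*} [CommRing D] [CommRing E] (φ : D →+* E)
    (x : WittVector p D) : constantCoeff (WittVector.map φ x) = φ (constantCoeff x) :=
  rfl

lemma wittVector_map_comp {C D E : Type*} [CommRing C] [CommRing D] [CommRing E] (φ : D →+* E)
    (ψ : C →+* D) (x : WittVector p C) :
    WittVector.map (φ.comp ψ) x = WittVector.map φ (WittVector.map ψ x) :=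
  rfl

/-- The element `[t] - p w`. When `w` is a unit, this is the usual shape of a generator of the
kernel of Fontaine's map `θ`. -/
noncomputable def fontaineElement {D : Type*} [CommRing D] (t : D) (w : WittVector p D) :
    WittVector p D :=
  teichmuller p t - p * w

lemma map_fontaineElement {D E : Type*} [CommRing D] [CommRing E] (φ : D →+* E) (t : D)
    (w : WittVector p D) :
    WittVector.map φ (fontaineElement t w) = fontaineElement (φ t) (WittVector.map φ w) := by
  rw [fontaineElement, fontaineElement, map_sub, map_mul, WittVector.map_teichmuller, map_natCast]

variable {D : Type*} [CommRing D] [CharP D p]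

lemma constantCoeff_fontaineElement (t : D) (w : WittVector p D) :
    constantCoeff (fontaineElement t w) = t := by
  rw [fontaineElement, map_sub, map_mul, map_natCast, CharP.cast_eq_zero, zero_mul, sub_zero,
    constantCoeff_teichmuller]

variable [PerfectRing D p]

lemma natCast_dvd_of_constantCoeff_eq_zero {x : WittVector p D} (hx : constantCoeff x = 0) :
    (p : WittVector p D) ∣ x :=
  Ideal.mem_span_singleton.1 ((WittVector.mem_span_p_iff_coeff_zero_eq_zero x).2 hx)

lemma exists_eq_teichmuller_add_natCast_mul (x : WittVector p D) :
    ∃ y, x = teichmuller p (constantCoeff x) + p * y := by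
  obtain ⟨y, hy⟩ := natCast_dvd_of_constantCoeff_eq_zero
    (x := x - teichmuller p (constantCoeff x))
    (by rw [map_sub, constantCoeff_teichmuller, sub_self])
  exact ⟨y, by linear_combination hy⟩

lemma isUnit_of_isUnit_constantCoeff {x : WittVector p D} (hx : IsUnit (constantCoeff x)) :
    IsUnit x := by
  obtain ⟨v, hv⟩ := hx.exists_right_inv
  obtain ⟨y, hy⟩ := natCast_dvd_of_constantCoeff_eq_zero (x := x * teichmuller p v - 1)
    (by rw [map_sub, map_mul, constantCoeff_teichmuller, hv, map_one, sub_self])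
  have hunit := Ideal.mem_jacobson_bot.1 (IsAdicComplete.le_jacobson_bot
    (Ideal.span {(p : WittVector p D)}) (Ideal.mem_span_singleton_self _)) y
  rw [← hy, sub_add_cancel] at hunit
  exact isUnit_of_mul_isUnit_left hunit

/-! ### Roots of monic polynomials modulo `[t] - p w` and a power of `p` -/

section

variable {D₀ : Type*} [CommRing D₀] [CharP D₀ p] [PerfectRing D₀ p] {t : D₀} {𝔪 : Ideal D₀}
  {w : WittVector p D₀}

/- The residue `r` of a `p ^ i`-divisible error is cancelled modulo `p` after adjoining
`η = r₀ / t`, since `[t] ≡ p w` modulo `fontaineElement t w`. -/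
lemma IsFlatRegularPair.exists_map_eq_fontaineElement_mul_add {D : Type u} [CommRing D] [CharP D p]
    [PerfectRing D p] {φ : D₀ →+* D} {r : WittVector p D}
    (hr : IsFlatRegularPair t 𝔪 φ (constantCoeff r)) (ht : t ∈ 𝔪) (hw : IsUnit (constantCoeff w)) :
    ∃ (E : Type u) (_ : CommRing E) (_ : CharP E p) (_ : PerfectRing E p) (j : D →+* E)
      (h r' : WittVector p E), IsFlatRegularPair t 𝔪 (j.comp φ) (constantCoeff r') ∧
      WittVector.map j r = WittVector.map (j.comp φ) (fontaineElement t w) * h + p * r' := by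
  obtain ⟨s, hs⟩ := exists_eq_teichmuller_add_natCast_mul r
  obtain ⟨E, _, _, _, j, η, hη, hpair⟩ := hr.exists_fraction (p := p) ht (constantCoeff s)
    (hw.map φ)
  refine ⟨E, _, ‹_›, ‹_›, j, teichmuller p η,
    WittVector.map j s + WittVector.map (j.comp φ) w * teichmuller p η, ?_, ?_⟩
  · rwa [map_add, map_mul, constantCoeff_map, constantCoeff_map, constantCoeff_teichmuller]
  · have hη' : teichmuller p (j (φ t)) * teichmuller p η = teichmuller p (j (constantCoeff r)) := by
      rw [← map_mul, hη]
    have hs' := congrArg (WittVector.map j) hs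
    rw [map_add, map_mul, map_natCast, WittVector.map_teichmuller] at hs'
    rw [map_fontaineElement, fontaineElement, RingHom.comp_apply]
    linear_combination hs' - hη'

variable {D : Type u} [CommRing D] {φ : D₀ →+* D}

lemma IsFlatPerfect.exists_eval_teichmuller_eq (hD : IsFlatPerfect p t 𝔪 φ) (ht : t ∈ 𝔪)
    (hw : IsUnit (constantCoeff w)) {F : (WittVector p D)[X]} (hF : F.Monic)
    (hdeg : 0 < F.natDegree) (i : ℕ) :
    ∃ (E : Type u) (_ : CommRing E) (_ : CharP E p) (_ : PerfectRing E p) (j : D →+* E) (z : E)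
      (h r : WittVector p E), IsFlatRegularPair t 𝔪 (j.comp φ) (constantCoeff r) ∧
      (F.map (WittVector.map j)).eval (teichmuller p z) =
        WittVector.map (j.comp φ) (fontaineElement t w) * h + p ^ i * r := by
  have := hD.charP
  have : Nontrivial D := CharP.nontrivial_of_char_ne_one (Fact.out : p.Prime).ne_one
  induction i with
  | zero =>
    obtain ⟨E, _, _, _, j, z, hpair⟩ := hD.exists_isFlatRegularPair_eval ht
      (hF.map (constantCoeff (p := p) (R := D))) (by rwa [hF.natDegree_map])
    refine ⟨E, _, ‹_›, ‹_›, j, z, 0, (F.map (WittVector.map j)).eval (teichmuller p z), ?_,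
      by simp⟩
    rw [eval_map, hom_eval₂, constantCoeff_teichmuller]
    rwa [eval_map, eval₂_map] at hpair
  | succ i ih =>
    obtain ⟨E, _, _, _, j, z, h, r, hpair, hr⟩ := ih
    obtain ⟨E', _, _, _, j', h', r', hpair', hr'⟩ :=
      hpair.exists_map_eq_fontaineElement_mul_add ht hw
    refine ⟨E', _, ‹_›, ‹_›, j'.comp j, j' z, WittVector.map j' h + p ^ i * h', r', hpair', ?_⟩
    have heval : (F.map (WittVector.map (j'.comp j))).eval (teichmuller p (j' z)) =
        WittVector.map j' ((F.map (WittVector.map j)).eval (teichmuller p z)) := by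
      rw [eval_map, eval_map, hom_eval₂, WittVector.map_teichmuller]
      rfl
    rw [heval, hr, map_add, map_mul, map_mul, hr', map_pow, map_natCast, ← wittVector_map_comp,
      RingHom.comp_assoc]
    ring

lemma IsFlatPerfect.exists_eval_mem_span_pair (hD : IsFlatPerfect p t 𝔪 φ) (ht : t ∈ 𝔪)
    (hw : IsUnit (constantCoeff w)) {F : (WittVector p D)[X]} (hF : F.Monic)
    (hdeg : 0 < F.natDegree) (L : ℕ) :
    ∃ (E : Type u) (_ : CommRing E) (j : D →+* E) (z : WittVector p E),
      IsFlatPerfect p t 𝔪 (j.comp φ) ∧ (F.map (WittVector.map j)).eval z ∈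
        Ideal.span {WittVector.map (j.comp φ) (fontaineElement t w), (p : WittVector p E) ^ L} := by
  obtain ⟨E, _, _, _, j, z, h, r, hpair, hr⟩ := hD.exists_eval_teichmuller_eq ht hw hF hdeg L
  exact ⟨E, _, j, _, hpair.isFlatPerfect,
    Ideal.mem_span_pair.2 ⟨h, r, by linear_combination -hr⟩⟩

end

/-! ### Extraction of `p`-power roots modulo `[t] - p w` -/

lemma pow_dvd_of_pow_dvd_pow {A : Type*} [CommRing A] {P τ v : A} {q : ℕ}
    (hP : P ∈ nonZeroDivisors A) (hv : IsUnit v) (hτ : τ ^ q = P * v)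
    (hq : ∀ y, P ∣ y ^ q → τ ∣ y) (N : ℕ) {x : A} (hx : P ^ (q * N) ∣ x ^ q) : P ^ N ∣ x := by
  have hdvd : ∀ j ≤ q * N, τ ^ j ∣ x := by
    intro j
    induction j with
    | zero => simp
    | succ j ih =>
      intro hj
      obtain ⟨y, rfl⟩ := ih (by omega)
      obtain ⟨c, hc⟩ := (pow_dvd_pow P hj).trans hx
      have hpow : (τ ^ j * y) ^ q = P ^ j * (v ^ j * y ^ q) := by
        rw [mul_pow, ← pow_mul, mul_comm j, pow_mul, hτ, mul_pow, mul_assoc]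
      have hyc : v ^ j * y ^ q = P * c := by
        refine sub_eq_zero.1 (mem_nonZeroDivisors_iff_left.1 (pow_mem hP j) _ ?_)
        linear_combination hc - hpow
      obtain ⟨z, rfl⟩ := hq y ((hv.pow j).dvd_mul_left.1 ⟨c, hyc⟩)
      exact ⟨z, by ring⟩
  refine (Dvd.intro (v ^ N) ?_).trans (hdvd _ le_rfl)
  rw [pow_mul, hτ, mul_pow]

lemma mk_dvd_mk_iff_mem_span_pair {A : Type*} [CommRing A] (c a b : A) :
    Ideal.Quotient.mk (Ideal.span {c}) b ∣ Ideal.Quotient.mk (Ideal.span {c}) a ↔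
      a ∈ Ideal.span {c, b} := by
  rw [Set.pair_comm, ← comap_mk_span_singleton, Ideal.mem_comap, Ideal.mem_span_singleton]

variable {t : D}

lemma natCast_mem_nonZeroDivisors_quotient_fontaineElement (ht : t ∈ nonZeroDivisors D)
    (w : WittVector p D) :
    (p : WittVector p D ⧸ Ideal.span {fontaineElement t w}) ∈
      nonZeroDivisors (WittVector p D ⧸ Ideal.span {fontaineElement t w}) := by
  rw [mem_nonZeroDivisors_iff_left]
  intro y hy
  obtain ⟨y, rfl⟩ := Ideal.Quotient.mk_surjective y
  rw [← map_natCast (Ideal.Quotient.mk _), ← map_mul, Ideal.Quotient.eq_zero_iff_mem,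
    Ideal.mem_span_singleton] at hy
  obtain ⟨a, ha⟩ := hy
  have hcoeff := congrArg WittVector.constantCoeff ha
  rw [map_mul, map_mul, map_natCast, CharP.cast_eq_zero, zero_mul,
    constantCoeff_fontaineElement] at hcoeff
  obtain ⟨b, rfl⟩ := natCast_dvd_of_constantCoeff_eq_zero
    (mem_nonZeroDivisors_iff_left.1 ht _ hcoeff.symm)
  rw [Ideal.Quotient.eq_zero_iff_mem, Ideal.mem_span_singleton]
  exact ⟨b, sub_eq_zero.1 (WittVector.eq_zero_of_p_mul_eq_zero _ (by linear_combination ha))⟩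

variable {w : WittVector p D}

lemma mk_teichmuller_dvd_of_natCast_dvd_pow (hw : IsUnit (constantCoeff w)) {e : ℕ} {s : D}
    (hs : s ^ p ^ e = t) {y : WittVector p D ⧸ Ideal.span {fontaineElement t w}}
    (hy : (p : WittVector p D ⧸ Ideal.span {fontaineElement t w}) ∣ y ^ p ^ e) :
    Ideal.Quotient.mk _ (teichmuller p s) ∣ y := by
  obtain ⟨y, rfl⟩ := Ideal.Quotient.mk_surjective y
  rw [← map_pow, ← map_natCast (Ideal.Quotient.mk _), mk_dvd_mk_iff_mem_span_pair,
    Ideal.mem_span_pair] at hy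
  obtain ⟨a, b, hab⟩ := hy
  obtain ⟨a₀, ha₀⟩ := (bijective_iterateFrobenius D p e).2 (constantCoeff a)
  rw [iterateFrobenius_def] at ha₀
  have hy₀ : constantCoeff y = a₀ * s := by
    refine (bijective_iterateFrobenius D p e).1 ?_
    rw [iterateFrobenius_def, iterateFrobenius_def, ← map_pow, ← hab, map_add, map_mul, map_mul,
      map_natCast, CharP.cast_eq_zero, mul_zero, add_zero, constantCoeff_fontaineElement, mul_pow,
      ha₀, hs]
  obtain ⟨y', hy'⟩ := exists_eq_teichmuller_add_natCast_mul y
  obtain ⟨v, hv⟩ := (isUnit_of_isUnit_constantCoeff hw).exists_right_inv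
  obtain ⟨k, hk⟩ := Nat.exists_eq_succ_of_ne_zero (pow_ne_zero e (Fact.out : p.Prime).ne_zero)
  have hs' : teichmuller p s ^ (k + 1) = teichmuller p t := by rw [← map_pow, ← hs, hk]
  rw [mk_dvd_mk_iff_mem_span_pair, Ideal.mem_span_pair]
  refine ⟨-(v * y'), teichmuller p a₀ + teichmuller p s ^ k * v * y', ?_⟩
  rw [hy', hy₀, map_mul, fontaineElement]
  linear_combination v * y' * hs' + p * y' * hv

lemma mem_span_fontaineElement_pow_of_pow_mem (ht : t ∈ nonZeroDivisors D)
    (hw : IsUnit (constantCoeff w)) {e N : ℕ} {x : WittVector p D}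
    (hx : x ^ p ^ e ∈ Ideal.span {fontaineElement t w, (p : WittVector p D) ^ (p ^ e * N)}) :
    x ∈ Ideal.span {fontaineElement t w, (p : WittVector p D) ^ N} := by
  obtain ⟨s, hs⟩ := (bijective_iterateFrobenius D p e).2 t
  rw [iterateFrobenius_def] at hs
  rw [← mk_dvd_mk_iff_mem_span_pair, map_pow, map_pow, map_natCast] at hx
  rw [← mk_dvd_mk_iff_mem_span_pair, map_pow, map_natCast]
  refine pow_dvd_of_pow_dvd_pow (natCast_mem_nonZeroDivisors_quotient_fontaineElement ht w)
    ((isUnit_of_isUnit_constantCoeff hw).map (Ideal.Quotient.mk _)) ?_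
    (fun y => mk_teichmuller_dvd_of_natCast_dvd_pow hw hs) N hx
  rw [← map_pow, ← map_pow, hs, ← map_natCast (Ideal.Quotient.mk _), ← map_mul, Ideal.Quotient.eq,
    Ideal.mem_span_singleton]
  exact dvd_rfl

end

/-! ### Untilts modulo a power of `p` -/

section

open Polynomial
open WittVector (constantCoeff teichmuller)

variable {p : ℕ} [Fact p.Prime] {L : ℕ}

lemma map_constantCoeff_comap_ne_top {D B : Type*} [CommRing D] [CommRing B] [CharP D p]
    [PerfectRing D p] (θ : WittVector p D →+* B) {I : Ideal B} (hI : (p : B) ∈ I) (hne : I ≠ ⊤) :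
    (I.comap θ).map WittVector.constantCoeff ≠ ⊤ := by
  rw [Ne, Ideal.eq_top_iff_one, Ideal.mem_map_iff_of_surjective _ fun d =>
    ⟨teichmuller p d, constantCoeff_teichmuller d⟩]
  rintro ⟨a, ha, ha1⟩
  obtain ⟨y, hy⟩ := exists_eq_teichmuller_add_natCast_mul a
  rw [ha1, map_one] at hy
  refine hne ((Ideal.eq_top_iff_one I).2 ?_)
  rw [Ideal.mem_comap, hy, map_add, map_one, map_mul, map_natCast] at ha
  exact (I.add_mem_iff_left (I.mul_mem_right _ hI)).1 ha

/-- `θ` presents `B` as `W(D) / ([t] - p w, p ^ L)` with `t` regular and `w` a unit, that is, as an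
untilt of `D` truncated modulo `p ^ L`. -/
structure IsTruncatedUntilt (L : ℕ) {D B : Type*} [CommRing D] [CommRing B] (t : D)
    (w : WittVector p D) (θ : WittVector p D →+* B) : Prop where
  mem_nonZeroDivisors : t ∈ nonZeroDivisors D
  isUnit : IsUnit (constantCoeff w)
  surjective : Function.Surjective θ
  ker_eq : RingHom.ker θ = Ideal.span {fontaineElement t w, (p : WittVector p D) ^ L}

namespace IsTruncatedUntilt

variable {D B : Type*} [CommRing D] [CommRing B] {t : D} {w : WittVector p D}
  {θ : WittVector p D →+* B}

lemma apply_fontaineElement (h : IsTruncatedUntilt L t w θ) : θ (fontaineElement t w) = 0 := by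
  rw [← RingHom.mem_ker, h.ker_eq]
  exact Ideal.subset_span (Set.mem_insert _ _)

lemma apply_teichmuller (h : IsTruncatedUntilt L t w θ) : θ (teichmuller p t) = p * θ w := by
  have hzero := h.apply_fontaineElement
  rwa [fontaineElement, map_sub, map_mul, map_natCast, sub_eq_zero] at hzero

lemma pow_dvd_apply_iff (h : IsTruncatedUntilt L t w θ) {N : ℕ} (hN : N ≤ L)
    {a : WittVector p D} :
    (p : B) ^ N ∣ θ a ↔ a ∈ Ideal.span {fontaineElement t w, (p : WittVector p D) ^ N} := by
  constructor
  · rintro ⟨c, hc⟩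
    obtain ⟨c, rfl⟩ := h.surjective c
    have hker : a - p ^ N * c ∈ RingHom.ker θ := by
      rw [RingHom.mem_ker, map_sub, map_mul, map_pow, map_natCast, hc, sub_self]
    rw [h.ker_eq] at hker
    obtain ⟨y, z, hyz⟩ := Ideal.mem_span_pair.1 hker
    obtain ⟨k, rfl⟩ := Nat.exists_eq_add_of_le hN
    exact Ideal.mem_span_pair.2 ⟨y, p ^ k * z + c, by linear_combination hyz⟩
  · intro ha
    obtain ⟨y, z, rfl⟩ := Ideal.mem_span_pair.1 ha
    rw [map_add, map_mul, h.apply_fontaineElement, mul_zero, zero_add, map_mul, map_pow,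
      map_natCast]
    exact dvd_mul_left _ _

lemma mem_map_constantCoeff (h : IsTruncatedUntilt L t w θ) {I : Ideal B} (hI : (p : B) ∈ I) :
    t ∈ (I.comap θ).map WittVector.constantCoeff := by
  have hmem : teichmuller p t ∈ I.comap θ := by
    rw [Ideal.mem_comap, h.apply_teichmuller]
    exact I.mul_mem_right _ hI
  rw [← constantCoeff_teichmuller (p := p) t]
  exact Ideal.mem_map_of_mem _ hmem

variable [CharP D p] [PerfectRing D p]

lemma dvd_apply_iff (h : IsTruncatedUntilt L t w θ) (hL : L ≠ 0) {a : WittVector p D} :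
    (p : B) ∣ θ a ↔ t ∣ constantCoeff a := by
  rw [← pow_one (p : B), h.pow_dvd_apply_iff (Nat.one_le_iff_ne_zero.2 hL), pow_one,
    Ideal.mem_span_pair]
  constructor
  · rintro ⟨y, z, rfl⟩
    rw [map_add, map_mul, map_mul, map_natCast, CharP.cast_eq_zero, mul_zero, add_zero,
      constantCoeff_fontaineElement]
    exact dvd_mul_left _ _
  · rintro ⟨c, hc⟩
    obtain ⟨b, hb⟩ := exists_eq_teichmuller_add_natCast_mul a
    refine ⟨teichmuller p c, b + w * teichmuller p c, ?_⟩
    rw [hb, hc, map_mul, fontaineElement]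
    ring

lemma exists_reduction (h : IsTruncatedUntilt L t w θ) (hL : L ≠ 0) :
    ∃ ε : B →+* D ⧸ Ideal.span {t},
      (∀ a, ε (θ a) = Ideal.Quotient.mk _ (constantCoeff a)) ∧ Function.Surjective ε ∧
        RingHom.ker ε = Ideal.span {(p : B)} := by
  let c : WittVector p D →+* D ⧸ Ideal.span {t} :=
    (Ideal.Quotient.mk (Ideal.span {t})).comp WittVector.constantCoeff
  have hc : ∀ a, c a = 0 ↔ (p : B) ∣ θ a := fun a => by
    rw [h.dvd_apply_iff hL, ← Ideal.mem_span_singleton, ← Ideal.Quotient.eq_zero_iff_mem]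
    rfl
  let ε := RingHom.liftOfSurjective θ h.surjective
    ⟨c, fun a ha => (hc a).2 (by rw [RingHom.mem_ker.1 ha]; exact dvd_zero _)⟩
  have hε : ∀ a, ε (θ a) = c a := RingHom.liftOfRightInverse_comp_apply _ _ _ _
  refine ⟨ε, hε, fun y => ?_, Ideal.ext fun b => ?_⟩
  · obtain ⟨y, rfl⟩ := Ideal.Quotient.mk_surjective y
    exact ⟨θ (teichmuller p y), by rw [hε, RingHom.comp_apply, constantCoeff_teichmuller]⟩
  · obtain ⟨a, rfl⟩ := h.surjective b
    rw [RingHom.mem_ker, hε, hc, Ideal.mem_span_singleton]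

lemma natCast_dvd_of_pow_succ_dvd (h : IsTruncatedUntilt L t w θ) {k : ℕ} (hk : k < L) {y : B}
    (hy : (p : B) ^ (k + 1) ∣ p ^ k * y) : (p : B) ∣ y := by
  obtain ⟨a, rfl⟩ := h.surjective y
  rw [← map_natCast θ, ← map_pow, ← map_pow, ← map_mul, map_pow, map_natCast,
    h.pow_dvd_apply_iff hk, ← mk_dvd_mk_iff_mem_span_pair] at hy
  rw [← pow_one (p : B), h.pow_dvd_apply_iff (by omega), ← mk_dvd_mk_iff_mem_span_pair, pow_one,
    map_natCast]
  simp only [map_mul, map_pow, map_natCast, pow_succ] at hy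
  have hp := natCast_mem_nonZeroDivisors_quotient_fontaineElement h.mem_nonZeroDivisors w
  obtain ⟨c, hc⟩ := hy
  refine ⟨c, sub_eq_zero.1 (mem_nonZeroDivisors_iff_left.1 (pow_mem hp k) _ ?_)⟩
  linear_combination hc

lemma pow_dvd_of_pow_eq_zero (h : IsTruncatedUntilt L t w θ) {e N : ℕ} (hL : p ^ e * N = L) {x : B}
    (hx : x ^ p ^ e = 0) : (p : B) ^ N ∣ x := by
  obtain ⟨a, rfl⟩ := h.surjective x
  rw [← map_pow, ← RingHom.mem_ker, h.ker_eq, ← hL] at hx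
  have hN : N ≤ L := hL ▸ Nat.le_mul_of_pos_left N (pow_pos (Fact.out : p.Prime).pos e)
  exact (h.pow_dvd_apply_iff hN).2
    (mem_span_fontaineElement_pow_of_pow_mem h.mem_nonZeroDivisors h.isUnit hx)

end IsTruncatedUntilt

/-! ### Flat extensions of truncated untilts -/

variable {D₀ B₀ : Type*} [CommRing D₀] [CommRing B₀] {t : D₀} {𝔪 : Ideal D₀}
  {w : WittVector p D₀} {θ₀ : WittVector p D₀ →+* B₀}

/-- `g : B₀ → B` is obtained, on truncated untilts, from a perfect algebra `D₀ → D` which is flat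
modulo `t` and in which `𝔪` does not generate the unit ideal. -/
def IsFlatUntiltExtension (L : ℕ) (t : D₀) (𝔪 : Ideal D₀) (w : WittVector p D₀)
    (θ₀ : WittVector p D₀ →+* B₀) {B : Type u} [CommRing B] (g : B₀ →+* B) : Prop :=
  ∃ (D : Type u) (_ : CommRing D) (φ : D₀ →+* D) (θ : WittVector p D →+* B),
    IsFlatPerfect p t 𝔪 φ ∧ IsTruncatedUntilt L (φ t) (WittVector.map φ w) θ ∧
      ∀ a, θ (WittVector.map φ a) = g (θ₀ a)

lemma FlatModulo.id (s : D₀) : FlatModulo (RingHom.id D₀) s (Ideal.span {s}) := fun _ _ a y hy =>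
  ⟨Unit, inferInstance, fun i _ => y i, fun _ => 1, fun i => by simp,
    fun _ => by simpa [Ideal.mem_span_singleton] using hy⟩

lemma IsTruncatedUntilt.isFlatUntiltExtension_id {D₀ B₀ : Type u} [CommRing D₀] [CommRing B₀]
    {t : D₀} {𝔪 : Ideal D₀} {w : WittVector p D₀} {θ₀ : WittVector p D₀ →+* B₀}
    [hchar : CharP D₀ p] [hperf : PerfectRing D₀ p] (h : IsTruncatedUntilt L t w θ₀) (h𝔪 : 𝔪 ≠ ⊤) :
    IsFlatUntiltExtension L t 𝔪 w θ₀ (RingHom.id B₀) := by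
  have hid : WittVector.map (RingHom.id D₀) = RingHom.id (WittVector p D₀) := by
    ext x n
    simp
  refine ⟨D₀, _, RingHom.id D₀, θ₀,
    ⟨hchar, hperf, h.mem_nonZeroDivisors, FlatModulo.id t, ?_⟩, ?_, fun a => by rw [hid]; rfl⟩
  · rwa [Ideal.map_id]
  · rwa [hid]

namespace IsFlatUntiltExtension

variable {B : Type u} [CommRing B] {g : B₀ →+* B}

lemma exists_root [CharP D₀ p] [PerfectRing D₀ p] (h : IsFlatUntiltExtension L t 𝔪 w θ₀ g)
    (ht : t ∈ 𝔪) (hw : IsUnit (constantCoeff w)) {F : B[X]} (hF : F.Monic)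
    (hdeg : 0 < F.natDegree) :
    ∃ (B' : Type u) (_ : CommRing B') (g' : B →+* B') (z : B'),
      IsFlatUntiltExtension L t 𝔪 w θ₀ (g'.comp g) ∧ (F.map g').eval z = 0 := by
  obtain ⟨D, _, φ, θ, hD, hθ, hcomm⟩ := h
  obtain ⟨G, hGF, hGdeg, hG⟩ := lifts_and_natDegree_eq_and_monic
    ((mem_lifts _).2 (map_surjective θ hθ.surjective F)) hF
  obtain ⟨E, _, j, z, hE, hz⟩ := hD.exists_eval_mem_span_pair ht hw hG (hGdeg ▸ hdeg) L
  let q := Ideal.Quotient.mk (Ideal.span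
    {WittVector.map (j.comp φ) (fontaineElement t w), (p : WittVector p E) ^ L})
  have hker : RingHom.ker θ ≤ RingHom.ker (q.comp (WittVector.map j)) := by
    rw [hθ.ker_eq, ← map_fontaineElement, Ideal.span_le]
    rintro a (rfl | rfl)
    · exact Ideal.Quotient.eq_zero_iff_mem.2 (Ideal.subset_span (Set.mem_insert _ _))
    · refine Ideal.Quotient.eq_zero_iff_mem.2 (Ideal.subset_span (Or.inr ?_))
      rw [map_pow, map_natCast]
      rfl
  let g' := RingHom.liftOfSurjective θ hθ.surjective ⟨q.comp (WittVector.map j), hker⟩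
  have hg' : ∀ a, g' (θ a) = q (WittVector.map j a) :=
    RingHom.liftOfRightInverse_comp_apply _ _ _ _
  refine ⟨_, _, g', q z, ⟨E, _, j.comp φ, q, hE, ⟨hE.mem_nonZeroDivisors, ?_,
    Ideal.Quotient.mk_surjective, ?_⟩, fun a => ?_⟩, ?_⟩
  · rw [constantCoeff_map]
    exact hw.map _
  · rw [Ideal.mk_ker, map_fontaineElement]
  · exact (congrArg q (wittVector_map_comp j φ a)).trans
      ((hg' _).symm.trans (congrArg g' (hcomm a)))
  · have hFG : F.map g' = (G.map (WittVector.map j)).map q := by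
      rw [← hGF, Polynomial.map_map, Polynomial.map_map]
      exact congrArg (G.map ·) (RingHom.ext hg')
    rw [hFG, eval_map, eval₂_at_apply]
    exact Ideal.Quotient.eq_zero_iff_mem.2 hz

lemma pow_dvd_of_pow_eq_zero (h : IsFlatUntiltExtension L t 𝔪 w θ₀ g) {e N : ℕ}
    (hL : p ^ e * N = L) {x : B} (hx : x ^ p ^ e = 0) : (p : B) ^ N ∣ x := by
  obtain ⟨D, _, φ, θ, hD, hθ, -⟩ := h
  have := hD.charP
  have := hD.perfectRing
  exact hθ.pow_dvd_of_pow_eq_zero hL hx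

lemma flatModulo [CharP D₀ p] [PerfectRing D₀ p] (h : IsFlatUntiltExtension L t 𝔪 w θ₀ g)
    (h₀ : IsTruncatedUntilt L t w θ₀) (hL : L ≠ 0) :
    FlatModulo g (p : B₀) (Ideal.span {(p : B)}) := by
  obtain ⟨D, _, φ, θ, hD, hθ, hcomm⟩ := h
  have := hD.charP
  have := hD.perfectRing
  obtain ⟨ε₀, hε₀, hε₀_surj, hε₀_ker⟩ := h₀.exists_reduction hL
  obtain ⟨ε, hε, hε_surj, hε_ker⟩ := hθ.exists_reduction hL
  let φ' : D₀ ⧸ Ideal.span {t} →+* D ⧸ Ideal.span {φ t} :=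
    Ideal.quotientMap _ φ (by
      rw [Ideal.span_singleton_le_iff_mem]
      exact Ideal.mem_span_singleton_self _)
  have hφ' : FlatModulo φ' 0 ⊥ := by
    refine hD.flat.map_of_surjective (fun _ => rfl) Ideal.Quotient.mk_surjective
      Ideal.Quotient.mk_surjective (fun a ha => ?_) (Ideal.mk_ker (I := Ideal.span {φ t}))
    rw [zero_dvd_iff, Ideal.Quotient.eq_zero_iff_dvd]
    exact ha
  refine hφ'.of_surjective (fun b => ?_) hε₀_surj hε_surj (fun b hb => ?_) hε_ker
  · obtain ⟨a, rfl⟩ := h₀.surjective b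
    rw [← hcomm, hε, hε₀, constantCoeff_map]
    rfl
  · rwa [zero_dvd_iff, ← RingHom.mem_ker, hε₀_ker, Ideal.mem_span_singleton] at hb

lemma flatModulo_pow_comp [CharP D₀ p] [PerfectRing D₀ p]
    (h : IsFlatUntiltExtension L t 𝔪 w θ₀ g) (h₀ : IsTruncatedUntilt L t w θ₀) {R : Type*}
    [CommRing R] {ι : R →+* B₀} (hι : FlatModulo ι (p : R) (Ideal.span {(p : B₀)})) (hL : L ≠ 0)
    {N : ℕ} (hN : N ≤ L) : FlatModulo (g.comp ι) ((p : R) ^ N) (Ideal.span {(p : B) ^ N}) := by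
  have hcomp := hι.comp (h.flatModulo h₀ hL) (Ideal.mem_span_singleton_self _) (by
    rw [Ideal.span_singleton_le_iff_mem, Ideal.mem_comap, map_natCast]
    exact Ideal.mem_span_singleton_self _)
  obtain ⟨D, _, φ, θ, hD, hθ, -⟩ := h
  have := hD.charP
  have := hD.perfectRing
  have hpow := FlatModulo.pow (φ := g.comp ι) (t := (p : R)) (n := N) (by rwa [map_natCast])
    fun k hk y => by
      rw [map_natCast]
      exact hθ.natCast_dvd_of_pow_succ_dvd (hk.trans_le hN)
  rwa [map_pow, map_natCast] at hpow

lemma map_ne_top {I : Ideal B₀} (hI : (p : B₀) ∈ I)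
    (h : IsFlatUntiltExtension L t ((I.comap θ₀).map WittVector.constantCoeff) w θ₀ g)
    (h₀ : IsTruncatedUntilt L t w θ₀) (hL : L ≠ 0) : I.map g ≠ ⊤ := by
  obtain ⟨D, _, φ, θ, hD, hθ, hcomm⟩ := h
  have := hD.charP
  have := hD.perfectRing
  let J := ((I.comap θ₀).map WittVector.constantCoeff).map φ
  have htJ : φ t ∈ J := Ideal.mem_map_of_mem φ (h₀.mem_map_constantCoeff hI)
  have hle : I.map g ≤ (J.comap WittVector.constantCoeff).map θ := by
    rw [Ideal.map_le_iff_le_comap]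
    intro b hb
    obtain ⟨a, rfl⟩ := h₀.surjective b
    rw [Ideal.mem_comap, ← hcomm]
    refine Ideal.mem_map_of_mem θ ?_
    rw [Ideal.mem_comap, constantCoeff_map]
    exact Ideal.mem_map_of_mem φ (Ideal.mem_map_of_mem WittVector.constantCoeff hb)
  intro htop
  rw [htop, top_le_iff, Ideal.eq_top_iff_one] at hle
  obtain ⟨a, ha, ha1⟩ := (Ideal.mem_map_iff_of_surjective θ hθ.surjective).1 hle
  obtain ⟨c, hc⟩ := (hθ.dvd_apply_iff hL (a := 1 - a)).1
    (by rw [map_sub, map_one, ha1, sub_self]; exact dvd_zero _)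
  refine hD.map_ne_top ((Ideal.eq_top_iff_one J).2 ?_)
  rw [map_sub, map_one] at hc
  rw [← sub_add_cancel 1 (constantCoeff a), hc]
  exact J.add_mem (J.mul_mem_right _ htJ) ha

end IsFlatUntiltExtension

end

/-! ### Tilting -/

section

open WittVector (constantCoeff teichmuller)

/-- `O` is a ring of perfectoid type: `p ≠ 0`, Frobenius is surjective on `O / p`, `O` is closed
under taking roots of fractions, and `ϖ ^ p` equals `p` up to a unit, with `ϖ` in the Jacobson
radical. No completeness is assumed. -/
structure IsPerfectoidRoot (p : ℕ) {O : Type*} [CommRing O] (ϖ : O) : Prop where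
  natCast_ne_zero : (p : O) ≠ 0
  exists_dvd_sub_pow : ∀ a : O, ∃ b, (p : O) ∣ a - b ^ p
  associated_pow : Associated (p : O) (ϖ ^ p)
  mem_jacobson : ϖ ∈ Ideal.jacobson (⊥ : Ideal O)
  dvd_of_pow_dvd_pow : ∀ {q : ℕ}, q ≠ 0 → ∀ {b a : O}, b ^ q ∣ a ^ q → b ∣ a

variable {p : ℕ} [Fact p.Prime] {O : Type*} [CommRing O] [Fact ¬IsUnit (p : O)]

lemma preTilt_coeff_add_pow (x : PreTilt O p) (n k : ℕ) :
    PreTilt.coeff (n + k) x ^ p ^ k = PreTilt.coeff n x :=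
  Perfection.coeffMonoidHom_pow_p_pow' x n k

lemma preTilt_coeff_pow_self (x : PreTilt O p) (n : ℕ) :
    PreTilt.coeff n x ^ p ^ n = PreTilt.coeff 0 x :=
  Perfection.coeffMonoidHom_pow_p_pow_self x n

lemma preTilt_ext {x y : PreTilt O p} (h : ∀ n, PreTilt.coeff n x = PreTilt.coeff n y) : x = y :=
  Perfection.ext h

lemma exists_preTilt_coeff_eq (z : ℕ → ModP O p) (hz : ∀ n, z (n + 1) ^ p = z n) :
    ∃ x : PreTilt O p, ∀ n, PreTilt.coeff n x = z n :=
  ⟨⟨z, hz⟩, fun _ => rfl⟩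

lemma isUnit_of_isUnit_preTilt_coeff_zero {x : PreTilt O p} (hx : IsUnit (PreTilt.coeff 0 x)) :
    IsUnit x := by
  have hunit : ∀ n, IsUnit (PreTilt.coeff n x) := fun n =>
    (isUnit_pow_iff (pow_ne_zero n (Fact.out : p.Prime).ne_zero)).1
      (by rwa [preTilt_coeff_pow_self])
  choose z hz using fun n => (hunit n).exists_right_inv
  obtain ⟨y, hy⟩ := exists_preTilt_coeff_eq z fun n => (hunit n).mul_left_cancel <| by
    rw [hz, ← PreTilt.coeff_pow_p, ← mul_pow, hz, one_pow]
  exact .of_mul_eq_one y (preTilt_ext fun n => by rw [map_mul, hy, hz, map_one])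

namespace IsPerfectoidRoot

variable {ϖ : O} {t : PreTilt O p}

lemma surjective_frobenius (h : IsPerfectoidRoot p ϖ) :
    Function.Surjective (frobenius (ModP O p) p) := by
  intro y
  obtain ⟨y, rfl⟩ := Ideal.Quotient.mk_surjective y
  obtain ⟨b, hb⟩ := h.exists_dvd_sub_pow y
  refine ⟨Ideal.Quotient.mk _ b, ?_⟩
  rw [frobenius_def, ← map_pow, eq_comm, Ideal.Quotient.eq, Ideal.mem_span_singleton]
  exact hb

lemma surjective_coeff (h : IsPerfectoidRoot p ϖ) (n : ℕ) :
    Function.Surjective (PreTilt.coeff n : PreTilt O p → ModP O p) :=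
  Perfection.coeff_surjective h.surjective_frobenius n

lemma associated_lift_pow (h : IsPerfectoidRoot p ϖ)
    (ht : PreTilt.coeff 1 t = Ideal.Quotient.mk _ ϖ) {n : ℕ} {τ : O}
    (hτ : Ideal.Quotient.mk _ τ = PreTilt.coeff (1 + n) t) :
    Associated (p : O) (τ ^ p ^ (n + 1)) := by
  have hdvd : (p : O) ∣ τ ^ p ^ n - ϖ := by
    rw [← Ideal.mem_span_singleton, ← Ideal.Quotient.eq, map_pow, hτ, preTilt_coeff_add_pow, ht]
  obtain ⟨c, hc⟩ := h.associated_pow.dvd_iff_dvd_left.1 hdvd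
  obtain ⟨k, hk⟩ := Nat.exists_eq_add_of_le (Fact.out : p.Prime).two_le
  have hunit : IsUnit (ϖ * (ϖ ^ k * c) + 1) := Ideal.mem_jacobson_bot.1 h.mem_jacobson _
  have hassoc : Associated ϖ (τ ^ p ^ n) := ⟨hunit.unit, by
    have hpow : ϖ ^ p = ϖ * (ϖ * ϖ ^ k) := by rw [hk]; ring
    rw [IsUnit.unit_spec]
    linear_combination -hc - c * hpow⟩
  rw [pow_succ, pow_mul]
  exact h.associated_pow.trans hassoc.pow_pow

lemma coeff_dvd_of_pow_eq_zero (h : IsPerfectoidRoot p ϖ)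
    (ht : PreTilt.coeff 1 t = Ideal.Quotient.mk _ ϖ) {n : ℕ} {y : ModP O p}
    (hy : y ^ p ^ (n + 1) = 0) : PreTilt.coeff (1 + n) t ∣ y := by
  obtain ⟨τ, hτ⟩ := Ideal.Quotient.mk_surjective (PreTilt.coeff (1 + n) t)
  obtain ⟨y, rfl⟩ := Ideal.Quotient.mk_surjective y
  rw [← map_pow, Ideal.Quotient.eq_zero_iff_dvd] at hy
  rw [← hτ]
  exact map_dvd _ (h.dvd_of_pow_dvd_pow (pow_ne_zero (n + 1) (Fact.out : p.Prime).ne_zero)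
    ((h.associated_lift_pow ht hτ).dvd_iff_dvd_left.1 hy))

variable [IsDomain O]

lemma pow_eq_zero_of_coeff_mul_eq_zero (h : IsPerfectoidRoot p ϖ)
    (ht : PreTilt.coeff 1 t = Ideal.Quotient.mk _ ϖ) {n : ℕ} {y : ModP O p}
    (hy : PreTilt.coeff (1 + n) t * y = 0) : y ^ p = 0 := by
  have hp : p.Prime := Fact.out
  obtain ⟨τ, hτ⟩ := Ideal.Quotient.mk_surjective (PreTilt.coeff (1 + n) t)
  obtain ⟨y, rfl⟩ := Ideal.Quotient.mk_surjective y
  rw [← hτ, ← map_mul, Ideal.Quotient.eq_zero_iff_dvd] at hy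
  rw [← map_pow, Ideal.Quotient.eq_zero_iff_dvd]
  refine h.dvd_of_pow_dvd_pow (pow_ne_zero n hp.ne_zero) ?_
  rw [← pow_mul, ← pow_succ', ← mul_dvd_mul_iff_left h.natCast_ne_zero]
  have hexp : p ^ n + 1 ≤ p ^ (n + 1) := Nat.pow_lt_pow_right hp.one_lt n.lt_succ_self
  calc (p : O) * p ^ p ^ n ∣ p ^ p ^ (n + 1) := by
        rw [← pow_succ']
        exact pow_dvd_pow _ hexp
    _ ∣ τ ^ p ^ (n + 1) * y ^ p ^ (n + 1) := by
        rw [← mul_pow]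
        exact pow_dvd_pow_of_dvd hy _
    _ ∣ p * y ^ p ^ (n + 1) := mul_dvd_mul (h.associated_lift_pow ht hτ).symm.dvd dvd_rfl

lemma mem_nonZeroDivisors (h : IsPerfectoidRoot p ϖ)
    (ht : PreTilt.coeff 1 t = Ideal.Quotient.mk _ ϖ) : t ∈ nonZeroDivisors (PreTilt O p) := by
  refine mem_nonZeroDivisors_iff_left.2 fun y hy => preTilt_ext fun n => ?_
  have hzero := h.pow_eq_zero_of_coeff_mul_eq_zero ht (n := n) (y := PreTilt.coeff (1 + n) y)
    (by rw [← map_mul, hy, map_zero])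
  rwa [add_comm, PreTilt.coeff_pow_p] at hzero

lemma dvd_of_coeff_zero_eq_zero (h : IsPerfectoidRoot p ϖ)
    (ht : PreTilt.coeff 1 t = Ideal.Quotient.mk _ ϖ) {y : PreTilt O p}
    (hy : PreTilt.coeff 0 y = 0) : t ∣ y := by
  choose z hz using fun n => h.coeff_dvd_of_pow_eq_zero ht (n := n) (y := PreTilt.coeff (1 + n) y)
    (by rw [add_comm 1 n, preTilt_coeff_pow_self, hy])
  have hsucc : ∀ n, PreTilt.coeff n t * z n ^ p = PreTilt.coeff n y := fun n => by
    rw [← PreTilt.coeff_pow_p t, ← PreTilt.coeff_pow_p y, ← mul_pow, add_comm n 1, ← hz]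
  obtain ⟨x, hx⟩ := exists_preTilt_coeff_eq (fun n => z n ^ p) fun n => by
    have hzero : PreTilt.coeff (1 + n) t * (z (n + 1) ^ p - z n) = 0 := by
      rw [mul_sub, ← hz, add_comm 1 n, hsucc, sub_self]
    have hpow := h.pow_eq_zero_of_coeff_mul_eq_zero ht hzero
    rwa [sub_pow_char, sub_eq_zero] at hpow
  exact ⟨x, preTilt_ext fun n => by rw [map_mul, hx, hsucc]⟩

end IsPerfectoidRoot

lemma mk_span_singleton_pow_eq_zero_iff {A : Type*} [CommRing A] {x a : A} {n : ℕ} :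
    Ideal.Quotient.mk (Ideal.span {x} ^ n) a = 0 ↔ x ^ n ∣ a := by
  rw [Ideal.Quotient.eq_zero_iff_mem, Ideal.span_singleton_pow, Ideal.mem_span_singleton]

lemma mk_ghostComponent {A : Type*} [CommRing A] {p : ℕ} [Fact p.Prime] (n : ℕ)
    (x : WittVector p A) :
    Ideal.Quotient.mk (Ideal.span {(p : A)}) (WittVector.ghostComponent n x) =
      Ideal.Quotient.mk _ (x.coeff 0) ^ p ^ n := by
  rw [WittVector.ghostComponent_apply, wittPolynomial_eq_sum_C_mul_X_pow, map_sum, map_sum,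
    Finset.sum_range_succ', Finset.sum_eq_zero, zero_add]
  · simp
  · intro i _
    rw [Ideal.Quotient.eq_zero_iff_dvd]
    simp only [map_mul, map_pow, map_natCast]
    exact (dvd_pow_self _ i.succ_ne_zero).mul_right _

/-- Fontaine's map `θ` from the Witt vectors of the tilt of `O`, modulo `p ^ (n + 1)`. Unlike
Mathlib's `fontaineThetaModPPow` it does not require `O` to be `p`-adically complete. -/
noncomputable def thetaModPPow (p : ℕ) [Fact p.Prime] (O : Type*) [CommRing O]
    [Fact ¬IsUnit (p : O)] (n : ℕ) :
    WittVector p (PreTilt O p) →+* O ⧸ Ideal.span {(p : O)} ^ (n + 1) :=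
  (WittVector.ghostComponentModPPow n).comp (WittVector.map (PreTilt.coeff n))

lemma mk_eq_coeff_zero_of_thetaModPPow_eq {n : ℕ} {a : WittVector p (PreTilt O p)} {y : O}
    (hy : thetaModPPow p O n a = Ideal.Quotient.mk _ y) :
    Ideal.Quotient.mk _ y = PreTilt.coeff 0 (constantCoeff a) := by
  obtain ⟨x, hx⟩ := WittVector.map_surjective (p := p) _
    (Ideal.Quotient.mk_surjective (I := Ideal.span {(p : O)}))
    (WittVector.map (PreTilt.coeff n) a)
  rw [thetaModPPow, RingHom.comp_apply, ← hx, WittVector.ghostComponentModPPow_map_mk,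
    ← sub_eq_zero, ← map_sub, mk_span_singleton_pow_eq_zero_iff] at hy
  have hmod : Ideal.Quotient.mk (Ideal.span {(p : O)}) (WittVector.ghostComponent n x) =
      Ideal.Quotient.mk _ y := by
    rw [Ideal.Quotient.eq, Ideal.mem_span_singleton]
    exact (dvd_pow_self _ n.succ_ne_zero).trans hy
  rw [← hmod, mk_ghostComponent, ← WittVector.map_coeff, hx, WittVector.map_coeff,
    preTilt_coeff_pow_self]
  rfl

lemma thetaModPPow_teichmuller {n : ℕ} {x : PreTilt O p} {τ : O}
    (hτ : Ideal.Quotient.mk _ τ = PreTilt.coeff n x) :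
    thetaModPPow p O n (teichmuller p x) = Ideal.Quotient.mk _ (τ ^ p ^ n) := by
  rw [thetaModPPow, RingHom.comp_apply, WittVector.map_teichmuller, ← hτ,
    ← WittVector.map_teichmuller, WittVector.ghostComponentModPPow_map_mk,
    WittVector.ghostComponent_teichmuller]

namespace IsPerfectoidRoot

variable {ϖ : O} {t : PreTilt O p}

lemma exists_thetaModPPow_eq_sub_pow_mul (h : IsPerfectoidRoot p ϖ) (n j : ℕ) (x : O) :
    ∃ a y, thetaModPPow p O n a = Ideal.Quotient.mk _ (x - (p : O) ^ j * y) := by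
  induction j with
  | zero => exact ⟨0, x, by rw [pow_zero, one_mul, sub_self, map_zero, map_zero]⟩
  | succ j ih =>
    obtain ⟨a, y, ha⟩ := ih
    obtain ⟨d, hd⟩ := h.surjective_coeff 0 (Ideal.Quotient.mk _ y)
    obtain ⟨y', hy'⟩ := Ideal.Quotient.mk_surjective (thetaModPPow p O n (teichmuller p d))
    have hmod := mk_eq_coeff_zero_of_thetaModPPow_eq hy'.symm
    rw [constantCoeff_teichmuller, hd, Ideal.Quotient.eq, Ideal.mem_span_singleton] at hmod
    obtain ⟨c, hc⟩ := hmod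
    refine ⟨a + p ^ j * teichmuller p d, -c, ?_⟩
    rw [map_add, ha, map_mul, map_pow, map_natCast, ← hy', ← map_natCast (Ideal.Quotient.mk _),
      ← map_pow, ← map_mul, ← map_add]
    congr 1
    linear_combination (p : O) ^ j * hc

lemma surjective_thetaModPPow (h : IsPerfectoidRoot p ϖ) (n : ℕ) :
    Function.Surjective (thetaModPPow p O n) := by
  intro x
  obtain ⟨x, rfl⟩ := Ideal.Quotient.mk_surjective x
  obtain ⟨a, y, ha⟩ := h.exists_thetaModPPow_eq_sub_pow_mul n (n + 1) x
  refine ⟨a, ?_⟩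
  rw [ha, map_sub, sub_eq_self, mk_span_singleton_pow_eq_zero_iff]
  exact dvd_mul_right _ _

variable [IsDomain O]

lemma exists_eq_fontaineElement_mul_add (h : IsPerfectoidRoot p ϖ)
    (ht : PreTilt.coeff 1 t = Ideal.Quotient.mk _ ϖ) {n : ℕ} {w a : WittVector p (PreTilt O p)}
    (hw : thetaModPPow p O n (fontaineElement t w) = 0) (ha : thetaModPPow p O n a = 0) {j : ℕ}
    (hj : j ≤ n + 1) : ∃ b c, a = fontaineElement t w * b + p ^ j * c := by
  induction j with
  | zero => exact ⟨0, a, by ring⟩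
  | succ j ih =>
    obtain ⟨b, c, rfl⟩ := ih (by omega)
    obtain ⟨y, hy⟩ := Ideal.Quotient.mk_surjective (thetaModPPow p O n c)
    have hdvd : (p : O) ∣ y := by
      rw [map_add, map_mul, hw, zero_mul, zero_add, map_mul, map_pow, map_natCast, ← hy,
        ← map_natCast (Ideal.Quotient.mk _), ← map_pow, ← map_mul,
        mk_span_singleton_pow_eq_zero_iff] at ha
      refine (mul_dvd_mul_iff_left (pow_ne_zero j h.natCast_ne_zero)).1 ?_
      rw [← pow_succ]
      exact (pow_dvd_pow _ hj).trans ha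
    have hcoeff := mk_eq_coeff_zero_of_thetaModPPow_eq hy.symm
    rw [(Ideal.Quotient.eq_zero_iff_dvd _ _).2 hdvd] at hcoeff
    obtain ⟨d, hd⟩ := h.dvd_of_coeff_zero_eq_zero ht hcoeff.symm
    obtain ⟨z, hz⟩ := exists_eq_teichmuller_add_natCast_mul c
    refine ⟨b + p ^ j * teichmuller p d, z + w * teichmuller p d, ?_⟩
    rw [hd, map_mul] at hz
    rw [fontaineElement]
    linear_combination (p : WittVector p (PreTilt O p)) ^ j * hz

lemma ker_thetaModPPow (h : IsPerfectoidRoot p ϖ)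
    (ht : PreTilt.coeff 1 t = Ideal.Quotient.mk _ ϖ) {n : ℕ} {w : WittVector p (PreTilt O p)}
    (hw : thetaModPPow p O n (fontaineElement t w) = 0) :
    RingHom.ker (thetaModPPow p O n) =
      Ideal.span {fontaineElement t w, (p : WittVector p (PreTilt O p)) ^ (n + 1)} := by
  refine le_antisymm (fun a ha => ?_) (Ideal.span_le.2 ?_)
  · obtain ⟨b, c, rfl⟩ := h.exists_eq_fontaineElement_mul_add ht hw ha le_rfl
    exact Ideal.mem_span_pair.2 ⟨b, c, by ring⟩
  · rintro a (rfl | rfl)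
    · exact hw
    · rw [SetLike.mem_coe, RingHom.mem_ker, map_pow, map_natCast,
        ← map_natCast (Ideal.Quotient.mk _), ← map_pow, mk_span_singleton_pow_eq_zero_iff]

lemma exists_isTruncatedUntilt (h : IsPerfectoidRoot p ϖ) (n : ℕ) :
    ∃ (t : PreTilt O p) (w : WittVector p (PreTilt O p)),
      IsTruncatedUntilt (n + 2) t w (thetaModPPow p O (n + 1)) := by
  obtain ⟨t, ht⟩ := h.surjective_coeff 1 (Ideal.Quotient.mk _ ϖ)
  obtain ⟨τ, hτ⟩ := Ideal.Quotient.mk_surjective (PreTilt.coeff (1 + n) t)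
  obtain ⟨v, hv⟩ := h.associated_lift_pow ht hτ
  obtain ⟨w, hw⟩ := h.surjective_thetaModPPow (n + 1) (Ideal.Quotient.mk _ v)
  refine ⟨t, w, h.mem_nonZeroDivisors ht, ?_, h.surjective_thetaModPPow _,
    h.ker_thetaModPPow ht ?_⟩
  · refine isUnit_of_isUnit_preTilt_coeff_zero ?_
    rw [← mk_eq_coeff_zero_of_thetaModPPow_eq hw]
    exact v.isUnit.map _
  · rw [fontaineElement, map_sub, map_mul, map_natCast, hw,
      thetaModPPow_teichmuller (n := n + 1) (by rw [hτ, add_comm]), ← hv, map_mul, map_natCast,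
      sub_self]

end IsPerfectoidRoot

end

/-! ### Adjoining `p`-th roots inside an integral extension -/

/-- The elements of the list enlarge the subring `B` one at a time: none of them lies in the subring
generated by `B` and the preceding ones. -/
def IsIrredundantOver {K : Type*} [CommRing K] : Subring K → List K → Prop
  | _, [] => True
  | B, t :: l => t ∉ B ∧ IsIrredundantOver (B ⊔ Subring.closure {t}) l

namespace IsIrredundantOver

variable {K : Type*} [CommRing K]

lemma append_singleton {κ : Subring K} {τ : K} (hτ : τ ∉ κ) {l : List K} {B : Subring K}
    (h : IsIrredundantOver B l) (hB : B ≤ κ) (hl : ∀ t ∈ l, t ∈ κ) :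
    IsIrredundantOver B (l ++ [τ]) := by
  induction l generalizing B with
  | nil => exact ⟨fun h => hτ (hB h), trivial⟩
  | cons t l ih =>
    refine ⟨h.1, ih h.2 (sup_le hB ?_) fun s hs => hl s (List.mem_cons_of_mem _ hs)⟩
    simpa [Subring.closure_le] using hl t List.mem_cons_self

lemma exists_subset_le_sup_closure (s : List K) (B : Subring K) :
    ∃ l : List K, IsIrredundantOver B l ∧ l ⊆ s ∧ ∀ t ∈ s, t ∈ B ⊔ Subring.closure {t | t ∈ l} := by
  induction s generalizing B with
  | nil => exact ⟨[], trivial, List.Subset.refl _, by simp⟩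
  | cons t s ih =>
    by_cases ht : t ∈ B
    · obtain ⟨l, hl, hls, hgen⟩ := ih B
      refine ⟨l, hl, List.subset_cons_of_subset t hls, List.forall_mem_cons.2 ⟨?_, hgen⟩⟩
      exact (le_sup_left : B ≤ _) ht
    · obtain ⟨l, hl, hls, hgen⟩ := ih (B ⊔ Subring.closure {t})
      have hset : {u | u ∈ t :: l} = {t} ∪ {u | u ∈ l} := by
        ext
        simp
      refine ⟨t :: l, ⟨ht, hl⟩, List.cons_subset_cons t hls, List.forall_mem_cons.2 ⟨?_, ?_⟩⟩
      · exact (le_sup_right : _ ≤ B ⊔ _) (Subring.subset_closure List.mem_cons_self)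
      · rwa [hset, Subring.closure_union, ← sup_assoc]

end IsIrredundantOver

lemma FlatModulo.of_ringEquiv {A B C : Type*} [CommRing A] [CommRing B] [CommRing C] {φ : A →+* B}
    {ψ : A →+* C} (h : FlatModulo φ 0 ⊥) (e : B ≃+* C) (he : ∀ a, e (φ a) = ψ a) :
    FlatModulo ψ 0 ⊥ :=
  h.map_of_surjective (α := RingHom.id A) (β := e.toRingHom) he Function.surjective_id e.surjective
    (fun _ h => h) ((RingHom.injective_iff_ker_eq_bot _).1 e.injective)

section AdjoinRoot

open Polynomial

lemma flatModulo_adjoinRoot_of {A : Type*} [CommRing A] {f : A[X]} (hf : f.Monic) :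
    FlatModulo (AdjoinRoot.of f) 0 ⊥ := by
  have hid : FlatModulo (RingHom.id A) 0 ⊥ := by simpa using FlatModulo.id (0 : A)
  exact (hid.polynomial_span_singleton hf).map_of_surjective (α := RingHom.id A)
    (β := AdjoinRoot.mk f) (fun _ => rfl) Function.surjective_id AdjoinRoot.mk_surjective
    (fun _ h => h) Ideal.mk_ker

variable {Ω : Type*} [CommRing Ω] {A : Subring Ω} {f : A[X]} {α : Ω}

lemma range_adjoinRoot_lift (hα : f.eval₂ A.subtype α = 0) :
    (AdjoinRoot.lift A.subtype α hα).range = A ⊔ Subring.closure {α} := by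
  apply le_antisymm
  · have hαmem : α ∈ A ⊔ Subring.closure {α} :=
      (le_sup_right : _ ≤ A ⊔ _) (Subring.subset_closure rfl)
    rintro _ ⟨y, rfl⟩
    obtain ⟨g, rfl⟩ := AdjoinRoot.mk_surjective y
    rw [AdjoinRoot.lift_mk, eval₂_eq_sum_range]
    exact sum_mem fun i _ => mul_mem ((le_sup_left : A ≤ _) (g.coeff i).2) (pow_mem hαmem _)
  · refine sup_le (fun b hb => ⟨AdjoinRoot.of _ ⟨b, hb⟩, AdjoinRoot.lift_of _⟩) ?_
    rw [Subring.closure_le, Set.singleton_subset_iff]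
    exact ⟨AdjoinRoot.root f, AdjoinRoot.lift_root _⟩

lemma injective_adjoinRoot_lift [IsDomain (AdjoinRoot f)] (hf : f.Monic)
    (hα : f.eval₂ A.subtype α = 0) : Function.Injective (AdjoinRoot.lift A.subtype α hα) := by
  have := (AdjoinRoot.of f).domain_nontrivial
  have := adjoinRoot_isIntegral hf
  rw [RingHom.injective_iff_ker_eq_bot]
  refine Ideal.eq_bot_of_comap_eq_bot (R := A) (eq_bot_iff.2 fun b hb => Subtype.ext ?_)
  have hb0 : AdjoinRoot.lift A.subtype α hα (AdjoinRoot.of f b) = 0 := hb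
  rwa [AdjoinRoot.lift_of] at hb0

lemma exists_ringEquiv_sup_closure [IsDomain (AdjoinRoot f)] (hf : f.Monic)
    (hα : f.eval₂ A.subtype α = 0) :
    ∃ e : AdjoinRoot f ≃+* ↥(A ⊔ Subring.closure {α}),
      (∀ b, (e (AdjoinRoot.of f b) : Ω) = b) ∧ (e (AdjoinRoot.root f) : Ω) = α := by
  let φ := AdjoinRoot.lift A.subtype α hα
  have hinj : Function.Injective φ.rangeRestrict := fun y z hyz =>
    injective_adjoinRoot_lift hf hα (congrArg Subtype.val hyz)
  exact ⟨(RingEquiv.ofBijective _ ⟨hinj, φ.rangeRestrict_surjective⟩).trans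
    (RingEquiv.subringCongr (range_adjoinRoot_lift hα)), fun b => AdjoinRoot.lift_of hα,
    AdjoinRoot.lift_root hα⟩

end AdjoinRoot

/-- The first `n` terms of the sequence `x` together with the entries of the list `l`. -/
def parameterSet {Ω : Type*} (n : ℕ) (x : ℕ → Ω) (l : List Ω) : Set Ω :=
  x '' Set.Iio n ∪ {t | t ∈ l}

/-- The elements which become `p`-th powers modulo `p` after adjoining `p`-th roots of the
parameters `x` and `l` to `A`: this subring contains all `p`-th powers, all multiples of `p` and all
parameters. -/
def rootableSubring {Ω : Type*} [CommRing Ω] (p n : ℕ) (A : Subring Ω) (x : ℕ → Ω) (l : List Ω) :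
    Subring Ω :=
  Subring.closure ((· ^ p) '' (A : Set Ω) ∪ (p * ·) '' (A : Set Ω) ∪ parameterSet n x l)

/-- A level of the tower of `p`-th roots inside `Ω`: a subring `A` flat over `R`, Noetherian and
regular with system of parameters `x`, together with elements `l` whose images under `π : Ω → K` are
irredundant over the `p`-th powers of the image of `A`, such that the `p`-th roots of `x` and `l`
turn every element of `A` into a `p`-th power modulo `p`. -/
structure IsRootTowerLevel (p n : ℕ) [Fact p.Prime] (R : Type*) {Ω : Type*} {K : Type*} [CommRing R]
    [CommRing Ω] [Algebra R Ω] [Field K] [CharP K p] (π : Ω →+* K) (A : Subring Ω) (x : ℕ → Ω)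
    (l : List Ω) : Prop where
  algebraMap_mem : ∀ r, algebraMap R Ω r ∈ A
  flatModulo : FlatModulo ((algebraMap R Ω).codRestrict A algebraMap_mem) 0 ⊥
  isNoetherianRing : IsNoetherianRing A
  mem : ∀ i, x i ∈ A
  isRegularSystem : IsRegularSystem n fun i => (⟨x i, mem i⟩ : A)
  mem_of_mem_list : ∀ t ∈ l, t ∈ A
  isIrredundantOver : IsIrredundantOver ((A.map π).map (frobenius K p)) (l.map π)
  le_rootableSubring : A ≤ rootableSubring p n A x l

section RootableSubring

variable {Ω : Type*} [CommRing Ω] {p n : ℕ} {A A' : Subring Ω} {x x' : ℕ → Ω} {l l' : List Ω}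

lemma closure_parameterSet_le_rootableSubring :
    Subring.closure (parameterSet n x l) ≤ rootableSubring p n A x l :=
  Subring.closure_mono Set.subset_union_right

lemma parameterSet_subset_rootableSubring :
    parameterSet n x l ⊆ rootableSubring p n A x l :=
  Subring.subset_closure.trans closure_parameterSet_le_rootableSubring

lemma pow_mem_rootableSubring {a : Ω} (ha : a ∈ A) : a ^ p ∈ rootableSubring p n A x l :=
  Subring.subset_closure (Or.inl (Or.inl ⟨a, ha, rfl⟩))

lemma natCast_mul_mem_rootableSubring {a : Ω} (ha : a ∈ A) :
    p * a ∈ rootableSubring p n A x l :=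
  Subring.subset_closure (Or.inl (Or.inr ⟨a, ha, rfl⟩))

lemma rootableSubring_le_iff {T : Subring Ω} :
    rootableSubring p n A x l ≤ T ↔
      (∀ a ∈ A, a ^ p ∈ T) ∧ (∀ a ∈ A, p * a ∈ T) ∧ parameterSet n x l ⊆ T := by
  simp only [rootableSubring, Subring.closure_le, Set.union_subset_iff, Set.image_subset_iff,
    and_assoc]
  rfl

lemma rootableSubring_le_rootableSubring (hA : A ≤ A')
    (hparam : ∀ b ∈ parameterSet n x l,
      (∃ α ∈ A', b = α ^ p) ∨ b ∈ Subring.closure (parameterSet n x' l')) :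
    rootableSubring p n A x l ≤ rootableSubring p n A' x' l' := by
  refine rootableSubring_le_iff.2 ⟨fun a ha => pow_mem_rootableSubring (hA ha),
    fun a ha => natCast_mul_mem_rootableSubring (hA ha), fun b hb => ?_⟩
  obtain ⟨α, hα, rfl⟩ | hb := hparam b hb
  · exact pow_mem_rootableSubring hα
  · exact closure_parameterSet_le_rootableSubring hb

end RootableSubring

namespace IsRootTowerLevel

open Polynomial

variable {p n : ℕ} [hpp : Fact p.Prime] {R : Type*} {Ω : Type*} {K : Type*} [CommRing R]
  [CommRing Ω] [Algebra R Ω] [Field K] [CharP K p] {π : Ω →+* K} {A : Subring Ω} {x : ℕ → Ω}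
  {l : List Ω}

lemma adjoin_root (h : IsRootTowerLevel p n R π A x l) {a : A} {α : Ω} (hα : α ^ p = a)
    {y : ℕ → AdjoinRoot (X ^ p - C a)} (hy : IsRegularSystem n y) {x' : ℕ → Ω} {l' : List Ω}
    (hx' : ∀ i, (∃ b : A, x' i = b ∧ y i = AdjoinRoot.of _ b) ∨
      x' i = α ∧ y i = AdjoinRoot.root _)
    (hl' : ∀ t ∈ l', t ∈ A ∨ t = α)
    (hirr : IsIrredundantOver (((A ⊔ Subring.closure {α}).map π).map (frobenius K p)) (l'.map π))
    (hαmem : α ∈ parameterSet n x' l')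
    (hparam : ∀ b ∈ parameterSet n x l, b = α ^ p ∨ b ∈ parameterSet n x' l') :
    IsRootTowerLevel p n R π (A ⊔ Subring.closure {α}) x' l' := by
  have := h.isNoetherianRing
  have := hy.isDomain
  have hmonic : (X ^ p - C a).Monic := monic_X_pow_sub_C a hpp.out.ne_zero
  obtain ⟨e, he_of, he_root⟩ := exists_ringEquiv_sup_closure (α := α) hmonic (by simp [hα])
  have hA : A ≤ A ⊔ Subring.closure {α} := le_sup_left
  have hα' : α ∈ A ⊔ Subring.closure {α} :=
    (le_sup_right : _ ≤ A ⊔ _) (Subring.subset_closure rfl)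
  have hex : ∀ i, (e (y i) : Ω) = x' i := fun i => by
    obtain ⟨b, hb, hyb⟩ | ⟨hxi, hyi⟩ := hx' i
    · rw [hyb, he_of, hb]
    · rw [hyi, he_root, hxi]
  refine ⟨fun r => hA (h.algebraMap_mem r), ?_, isNoetherianRing_of_ringEquiv _ e,
    fun i => hex i ▸ (e (y i)).2, hy.of_ringEquiv e fun i _ => Subtype.ext (hex i).symm, ?_, hirr,
    sup_le (h.le_rootableSubring.trans (rootableSubring_le_rootableSubring hA ?_)) ?_⟩
  · exact (h.flatModulo.comp (flatModulo_adjoinRoot_of hmonic) (zero_mem _) bot_le).of_ringEquiv e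
      fun r => Subtype.ext (he_of _)
  · exact fun t ht => (hl' t ht).elim (fun h => hA h) fun h => h ▸ hα'
  · exact fun b hb => (hparam b hb).imp (fun h => ⟨α, hα', h⟩) fun h => Subring.subset_closure h
  · rw [Subring.closure_le, Set.singleton_subset_iff]
    exact parameterSet_subset_rootableSubring hαmem

lemma isIntegral [Algebra.IsIntegral R Ω] (h : IsRootTowerLevel p n R π A x l) :
    Algebra.IsIntegral A Ω := by
  refine ⟨fun z => ?_⟩
  obtain ⟨f, hf, hfz⟩ := Algebra.IsIntegral.isIntegral (R := R) z
  refine ⟨f.map ((algebraMap R Ω).codRestrict A h.algebraMap_mem), hf.map _, ?_⟩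
  rwa [eval₂_map]

lemma map_eq_zero_of_not_isUnit [Algebra.IsIntegral R Ω] (h : IsRootTowerLevel p n R π A x l)
    (hπ : Function.Surjective π) {b : A} (hb : ¬IsUnit b) : π b = 0 := by
  have := h.isRegularSystem.isLocalRing
  have := h.isIntegral
  have hjac : (b : Ω) ∈ Ideal.jacobson ⊥ :=
    mem_jacobson_bot_of_pow_eq_algebraMap ((mem_maximalIdeal b).2 hb) (k := 1) (pow_one _)
  have hker : (RingHom.ker π).IsMaximal := RingHom.ker_isMaximal_of_surjective π hπ
  exact Ideal.mem_sInf.1 hjac ⟨bot_le, hker⟩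

lemma isIrredundantOver_append_root {t τ : Ω} (h : IsRootTowerLevel p n R π A x (t :: l))
    (hτ : τ ^ p = t) :
    IsIrredundantOver (((A ⊔ Subring.closure {τ}).map π).map (frobenius K p))
      ((l ++ [τ]).map π) := by
  obtain ⟨ht, hl⟩ := h.isIrredundantOver
  have hmap : ((A ⊔ Subring.closure {τ}).map π).map (frobenius K p) =
      (A.map π).map (frobenius K p) ⊔ Subring.closure {π t} := by
    simp only [Subring.map_sup, RingHom.map_closure, Set.image_singleton, frobenius_def, ← map_pow,
      hτ]
  rw [hmap, List.map_append]
  refine hl.append_singleton (κ := A.map π) (fun hτA => ht ⟨π τ, hτA, ?_⟩) (sup_le ?_ ?_) ?_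
  · rw [frobenius_def, ← map_pow, hτ]
  · rintro _ ⟨z, hz, rfl⟩
    exact pow_mem hz p
  · rw [Subring.closure_le, Set.singleton_subset_iff]
    exact ⟨t, h.mem_of_mem_list t List.mem_cons_self, rfl⟩
  · intro s hs
    obtain ⟨s', hs', rfl⟩ := List.mem_map.1 hs
    exact ⟨s', h.mem_of_mem_list s' (List.mem_cons_of_mem _ hs'), rfl⟩

variable [Algebra.IsIntegral R Ω]

lemma exists_pow_eq_parameter (h : IsRootTowerLevel p n R π A x l) (hπ : Function.Surjective π)
    (hroot : ∀ a : Ω, ∃ b, b ^ p = a) {i : ℕ} (hi : i < n) :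
    ∃ A' α, IsRootTowerLevel p n R π A' (Function.update x i α) l ∧ A ≤ A' ∧ α ^ p = x i := by
  obtain ⟨α, hα⟩ := hroot (x i)
  have := h.isRegularSystem.isLocalRing
  have hπα : π α = 0 := by
    have hπx : π (x i) = 0 := h.map_eq_zero_of_not_isUnit hπ (b := ⟨x i, h.mem i⟩)
      ((mem_maximalIdeal _).1 (h.isRegularSystem.mem_maximalIdeal hi))
    rw [← hα, map_pow] at hπx
    exact eq_zero_of_pow_eq_zero hπx
  have hmap : (A ⊔ Subring.closure {α}).map π = A.map π := by
    rw [Subring.map_sup, RingHom.map_closure, Set.image_singleton, hπα, sup_eq_left,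
      Subring.closure_le, Set.singleton_subset_iff]
    exact zero_mem _
  refine ⟨A ⊔ Subring.closure {α}, α, ?_, le_sup_left, hα⟩
  refine h.adjoin_root (a := ⟨x i, h.mem i⟩) hα
    (h.isRegularSystem.adjoinRoot_of_eq hpp.out.ne_zero hi rfl) (fun j => ?_)
    (fun t ht => Or.inl (h.mem_of_mem_list t ht)) (hmap ▸ h.isIrredundantOver)
    (Or.inl ⟨i, hi, Function.update_self ..⟩) ?_
  · obtain rfl | hj := eq_or_ne j i
    · exact Or.inr ⟨Function.update_self .., Function.update_self ..⟩
    · exact Or.inl ⟨⟨x j, h.mem j⟩, Function.update_of_ne hj .., Function.update_of_ne hj ..⟩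
  · rintro b (⟨j, hj, rfl⟩ | hb)
    · obtain rfl | hji := eq_or_ne j i
      · exact Or.inl hα.symm
      · exact Or.inr (Or.inl ⟨j, hj, Function.update_of_ne hji ..⟩)
    · exact Or.inr (Or.inr hb)

lemma exists_pow_eq_head {t : Ω} (h : IsRootTowerLevel p n R π A x (t :: l))
    (hπ : Function.Surjective π) (hroot : ∀ a : Ω, ∃ b, b ^ p = a) :
    ∃ A' τ, IsRootTowerLevel p n R π A' x (l ++ [τ]) ∧ A ≤ A' ∧ τ ^ p = t := by
  obtain ⟨τ, hτ⟩ := hroot t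
  have htA := h.mem_of_mem_list t List.mem_cons_self
  have hunit : ∀ a : A, IsUnit (⟨t, htA⟩ - a ^ p) := fun a => by
    by_contra hnot
    have hzero : π (t - a ^ p) = 0 := h.map_eq_zero_of_not_isUnit hπ hnot
    rw [map_sub, map_pow, sub_eq_zero] at hzero
    exact h.isIrredundantOver.1 ⟨π a, ⟨a, a.2, rfl⟩, hzero.symm⟩
  refine ⟨A ⊔ Subring.closure {τ}, τ, ?_, le_sup_left, hτ⟩
  refine h.adjoin_root hτ (h.isRegularSystem.adjoinRoot_of_isUnit_sub_pow hpp.out hunit)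
    (fun i => Or.inl ⟨⟨x i, h.mem i⟩, rfl, rfl⟩) (fun s hs => ?_)
    (h.isIrredundantOver_append_root hτ) (Or.inr (by simp)) ?_
  · obtain hs | hs := List.mem_append.1 hs
    · exact Or.inl (h.mem_of_mem_list s (List.mem_cons_of_mem _ hs))
    · exact Or.inr (List.mem_singleton.1 hs)
  · rintro b (hb | hb)
    · exact Or.inr (Or.inl hb)
    · obtain rfl | hb := List.mem_cons.1 hb
      · exact Or.inl hτ.symm
      · exact Or.inr (Or.inr (List.mem_append_left _ hb))

lemma exists_forall_lt_pow_eq (h : IsRootTowerLevel p n R π A x l) (hπ : Function.Surjective π)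
    (hroot : ∀ a : Ω, ∃ b, b ^ p = a) {k : ℕ} (hk : k ≤ n) :
    ∃ A' x', IsRootTowerLevel p n R π A' x' l ∧ A ≤ A' ∧ (∀ i < k, x' i ^ p = x i) ∧
      ∀ i, k ≤ i → x' i = x i := by
  induction k with
  | zero => exact ⟨A, x, h, le_rfl, by simp, by simp⟩
  | succ k ih =>
    obtain ⟨A₁, x₁, h₁, hA₁, hlt, hge⟩ := ih (by omega)
    obtain ⟨A₂, α, h₂, hA₂, hα⟩ := h₁.exists_pow_eq_parameter hπ hroot hk
    refine ⟨A₂, Function.update x₁ k α, h₂, hA₁.trans hA₂, fun i hi => ?_, fun i hi => ?_⟩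
    · obtain rfl | hik := eq_or_ne i k
      · rw [Function.update_self, hα, hge i le_rfl]
      · rw [Function.update_of_ne hik, hlt i (by omega)]
    · rw [Function.update_of_ne (by omega), hge i (by omega)]

lemma exists_forall_mem_list_pow_eq {l₁ l₂ : List Ω}
    (h : IsRootTowerLevel p n R π A x (l₁ ++ l₂)) (hπ : Function.Surjective π)
    (hroot : ∀ a : Ω, ∃ b, b ^ p = a) :
    ∃ A' l', IsRootTowerLevel p n R π A' x l' ∧ A ≤ A' ∧ ∀ t ∈ l₁, ∃ b ∈ A', b ^ p = t := by
  induction l₁ generalizing l₂ A with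
  | nil => exact ⟨A, l₂, h, le_rfl, by simp⟩
  | cons t l₁ ih =>
    obtain ⟨A₂, τ, h₂, hA₂, hτ⟩ := exists_pow_eq_head (l := l₁ ++ l₂) h hπ hroot
    have hτA₂ : τ ∈ A₂ := h₂.mem_of_mem_list τ (by simp)
    rw [List.append_assoc] at h₂
    obtain ⟨A₃, l₃, h₃, hA₃, hl₃⟩ := ih h₂
    exact ⟨A₃, l₃, h₃, hA₂.trans hA₃, List.forall_mem_cons.2 ⟨⟨τ, hA₃ hτA₂, hτ⟩, hl₃⟩⟩

lemma exists_forall_parameterSet_pow_eq (h : IsRootTowerLevel p n R π A x l)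
    (hπ : Function.Surjective π) (hroot : ∀ a : Ω, ∃ b, b ^ p = a) :
    ∃ A' x' l', IsRootTowerLevel p n R π A' x' l' ∧ A ≤ A' ∧
      ∀ c ∈ parameterSet n x l, ∃ b ∈ A', b ^ p = c := by
  obtain ⟨A₁, x₁, h₁, hA₁, hx₁, -⟩ := h.exists_forall_lt_pow_eq hπ hroot le_rfl
  obtain ⟨A₂, l₂, h₂, hA₂, hl₂⟩ :=
    exists_forall_mem_list_pow_eq (l₂ := []) (by rwa [List.append_nil]) hπ hroot
  refine ⟨A₂, x₁, l₂, h₂, hA₁.trans hA₂, ?_⟩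
  rintro _ (⟨i, hi, rfl⟩ | ht)
  · exact ⟨x₁ i, h₂.mem i, hx₁ i hi⟩
  · exact hl₂ _ ht

end IsRootTowerLevel

/-! ### Generators of a complete local ring modulo `p`-th powers -/

section CompleteNakayama

variable {R : Type*} [CommRing R] {I : Ideal R} {ι : Type}

lemma isPrecomplete_pi [Finite ι] [IsPrecomplete I R] : IsPrecomplete I (ι → R) := by
  classical
  have := Fintype.ofFinite ι
  rw [← AdicCompletion.of_surjective_iff]
  intro y
  choose x hx using fun i =>
    AdicCompletion.of_surjective I R (AdicCompletion.piEquivOfFintype I _ y i)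
  refine ⟨x, (AdicCompletion.piEquivOfFintype I fun _ : ι => R).injective (funext fun i => ?_)⟩
  rw [← hx, AdicCompletion.piEquivOfFintype_apply]
  simp only [AdicCompletion.pi, LinearMap.pi_apply, AdicCompletion.map_of, LinearMap.proj_apply]

variable [Fintype ι] {S : Type*} [CommRing S] {φ : R →+* S}

lemma exists_eq_sum_map_mul [IsPrecomplete I R] [hhaus : IsHausdorff (I.map φ) S] {E : ι → S}
    (h : ∀ s, ∃ c : ι → R, s - ∑ i, φ (c i) * E i ∈ I.map φ) (s : S) :
    ∃ c : ι → R, s = ∑ i, φ (c i) * E i := by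
  let := φ.toAlgebra
  have hsmul (c : ι → R) : Fintype.linearCombination R E c = ∑ i, φ (c i) * E i := by
    simp only [Fintype.linearCombination_apply, Algebra.smul_def]
    rfl
  have := isPrecomplete_pi (I := I) (ι := ι)
  have : IsHausdorff I S := IsHausdorff.map_algebraMap_iff.1 hhaus
  have hsurj : Function.Surjective (Fintype.linearCombination R E) := by
    refine surjective_of_mkQ_comp_surjective (I := I) fun y => ?_
    obtain ⟨s, rfl⟩ := Submodule.mkQ_surjective _ y
    obtain ⟨c, hc⟩ := h s
    refine ⟨c, ?_⟩
    rw [LinearMap.comp_apply, eq_comm, Submodule.mkQ_apply, Submodule.mkQ_apply,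
      Submodule.Quotient.eq, hsmul, Ideal.smul_top_eq_map]
    exact hc
  obtain ⟨c, hc⟩ := hsurj s
  exact ⟨c, by rw [← hc, hsmul]⟩

variable {n m : ℕ} {y : Fin n → S} {g : Fin m → S} {T : Subring S}

lemma exists_sub_sum_map_mul_mem_span_pow (hy : ∀ j, y j ∈ T) (hg : ∀ i, g i ∈ T)
    (hgen : ∀ s, ∃ c : Fin m → R, s - ∑ i, φ (c i) * g i ∈ Ideal.span (Set.range y)) (k : ℕ) :
    ∃ (ι : Type) (_ : Fintype ι) (E : ι → S), (∀ i, E i ∈ T) ∧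
      ∀ s, ∃ c : ι → R, s - ∑ i, φ (c i) * E i ∈ Ideal.span (Set.range y) ^ k := by
  induction k with
  | zero => exact ⟨Empty, inferInstance, Empty.elim, (Empty.elim ·), fun s => ⟨Empty.elim, by simp⟩⟩
  | succ k ih =>
    obtain ⟨ι, _, E, hE, happrox⟩ := ih
    refine ⟨Fin m ⊕ Fin n × ι, inferInstance, Sum.elim g fun q => y q.1 * E q.2, ?_, fun s => ?_⟩
    · rintro (i | q)
      exacts [hg i, mul_mem (hy _) (hE _)]
    obtain ⟨c, hc⟩ := hgen s
    obtain ⟨b, hb⟩ := Ideal.mem_span_range_iff_exists_fun.1 hc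
    choose d hd using fun j => happrox (b j)
    refine ⟨Sum.elim c fun q => d q.1 q.2, ?_⟩
    have hrest : s - ∑ i, φ ((Sum.elim c fun q : Fin n × ι => d q.1 q.2) i) *
          (Sum.elim g fun q : Fin n × ι => y q.1 * E q.2) i =
        ∑ j, y j * (b j - ∑ i, φ (d j i) * E i) := by
      simp only [Fintype.sum_sum_type, Sum.elim_inl, Sum.elim_inr, Fintype.sum_prod_type, mul_sub,
        Finset.sum_sub_distrib, Finset.mul_sum, mul_left_comm (y _)]
      simp only [mul_comm (y _), hb]
      ring
    rw [hrest, pow_succ']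
    exact Ideal.sum_mem _ fun j _ =>
      Ideal.mul_mem_mul (Ideal.subset_span (Set.mem_range_self j)) (hd j)

lemma subring_eq_top_of_isPrecomplete [IsPrecomplete I R] [IsHausdorff (I.map φ) S]
    (hφ : φ.range ≤ T) (hy : ∀ j, y j ∈ T) (hrad : ∀ j, y j ∈ (I.map φ).radical)
    (hg : ∀ i, g i ∈ T)
    (hgen : ∀ s, ∃ c : Fin m → R, s - ∑ i, φ (c i) * g i ∈ Ideal.span (Set.range y)) :
    T = ⊤ := by
  have hle : Ideal.span (Set.range y) ≤ (I.map φ).radical := by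
    rw [Ideal.span_le, Set.range_subset_iff]
    exact hrad
  obtain ⟨k, hk⟩ := Ideal.exists_pow_le_of_le_radical_of_fg hle
    ⟨(Set.finite_range y).toFinset, by rw [Set.Finite.coe_toFinset]⟩
  obtain ⟨ι, _, E, hE, happrox⟩ := exists_sub_sum_map_mul_mem_span_pow hy hg hgen k
  refine eq_top_iff.2 fun s _ => ?_
  obtain ⟨c, rfl⟩ := exists_eq_sum_map_mul (I := I) (φ := φ)
    (fun s => (happrox s).imp fun c hc => hk hc) s
  exact sum_mem fun i _ => mul_mem (hφ ⟨c i, rfl⟩) (hE i)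

end CompleteNakayama

section

variable {R : Type*} [CommRing R] [IsNoetherianRing R] [IsLocalRing R]
  [IsAdicComplete (maximalIdeal R) R] {p n m : ℕ} [hpp : Fact p.Prime] {x : Fin n → R}
  {g : Fin m → R}

lemma subring_eq_top_of_forall_pow_mem (hp : (p : R) ∈ maximalIdeal R)
    (hx : Ideal.span (Set.range x) = maximalIdeal R) {T : Subring R} (hpow : ∀ a, a ^ p ∈ T)
    (hmul : ∀ a, (p : R) * a ∈ T) (hxT : ∀ i, x i ∈ T) (hgT : ∀ i, g i ∈ T)
    (hgen : ∀ r, ∃ c : Fin m → R, r - ∑ i, c i ^ p * g i ∈ maximalIdeal R) : T = ⊤ := by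
  let mk := Ideal.Quotient.mk (Ideal.span {(p : R)})
  have hmk : Function.Surjective mk := Ideal.Quotient.mk_surjective
  have hle : Ideal.span {(p : R)} ≤ maximalIdeal R := (Ideal.span_singleton_le_iff_mem _).2 hp
  have : Nontrivial (R ⧸ Ideal.span {(p : R)}) :=
    Ideal.Quotient.nontrivial_iff.2 (ne_top_of_le_ne_top (maximalIdeal.isMaximal R).ne_top hle)
  have : CharP (R ⧸ Ideal.span {(p : R)}) p := by
    rw [CharP.charP_iff_prime_eq_zero hpp.out, ← map_natCast mk]
    exact Ideal.Quotient.eq_zero_iff_mem.2 (Ideal.mem_span_singleton_self _)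
  have : IsLocalRing (R ⧸ Ideal.span {(p : R)}) := .of_surjective' mk hmk
  let φ := (frobenius (R ⧸ Ideal.span {(p : R)}) p).comp mk
  have hφ (a : R) : φ a = mk (a ^ p) := (map_pow mk a p).symm
  have hne : (maximalIdeal R).map φ ≠ ⊤ := by
    refine ne_top_of_le_ne_top (maximalIdeal.isMaximal _).ne_top (Ideal.map_le_iff_le_comap.2 ?_)
    have := IsLocalHom.of_surjective mk hmk
    exact fun a ha => Ideal.pow_mem_of_mem _ (map_nonunit mk a ha) _ hpp.out.pos
  have := IsHausdorff.of_isLocalRing _ (R ⧸ Ideal.span {(p : R)}) hne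
  have htop : T.map mk = ⊤ := by
    refine subring_eq_top_of_isPrecomplete (I := maximalIdeal R) (φ := φ) (y := mk ∘ x)
      (g := mk ∘ g) ?_ (fun j => ⟨x j, hxT j, rfl⟩) (fun j => ⟨p, ?_⟩) (fun i => ⟨g i, hgT i, rfl⟩)
      (hmk.forall.2 fun r => ?_)
    · rintro _ ⟨a, rfl⟩
      exact ⟨a ^ p, hpow a, (hφ a).symm⟩
    · rw [Function.comp_apply, ← map_pow, ← hφ, ← hx]
      exact Ideal.mem_map_of_mem _ (Ideal.subset_span ⟨j, rfl⟩)
    · obtain ⟨c, hc⟩ := hgen r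
      refine ⟨c, ?_⟩
      rw [← hx] at hc
      have hmap := Ideal.mem_map_of_mem mk hc
      rw [Ideal.map_span, ← Set.range_comp] at hmap
      simpa [hφ] using hmap
  refine eq_top_iff.2 fun r _ => ?_
  obtain ⟨t, ht, htr⟩ : mk r ∈ T.map mk := htop ▸ Subring.mem_top _
  obtain ⟨z, hz⟩ := Ideal.mem_span_singleton.1 (Ideal.Quotient.eq.1 htr.symm)
  rw [← sub_add_cancel r t, hz]
  exact add_mem (hmul z) ht

end

/-! ### The union of a tower of `p`-th roots -/

lemma exists_list_isIrredundantOver_map {R K : Type*} [CommRing R] [CommRing K] (ρ : R →+* K)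
    {m : ℕ} (g : Fin m → R) (B : Subring K) :
    ∃ l : List R, IsIrredundantOver B (l.map ρ) ∧
      ∀ i, ρ (g i) ∈ B ⊔ Subring.closure {t | t ∈ l.map ρ} := by
  obtain ⟨l', hl', hsub, hgen⟩ :=
    IsIrredundantOver.exists_subset_le_sup_closure (List.ofFn fun i => ρ (g i)) B
  obtain ⟨l, rfl⟩ : l' ∈ Set.range (List.map ρ) := by
    rw [Set.range_list_map]
    intro t ht
    obtain ⟨i, hi⟩ := (List.mem_ofFn' _ _).1 (hsub ht)
    exact ⟨g i, hi⟩
  exact ⟨l, hl', fun i => hgen _ ((List.mem_ofFn' _ _).2 ⟨i, rfl⟩)⟩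

section BaseLevel

variable {R Ω K : Type*} [CommRing R] [IsNoetherianRing R] [IsLocalRing R]
  [IsAdicComplete (maximalIdeal R) R] {p n m : ℕ} [hpp : Fact p.Prime] [CommRing Ω] [Algebra R Ω]
  [Field K] [CharP K p] {π : Ω →+* K} {x : ℕ → R} {l : List R} {g : Fin m → R}

lemma range_algebraMap_le_rootableSubring (hp : (p : R) ∈ maximalIdeal R)
    (hx : IsRegularSystem n x)
    (hg : ∀ r, ∃ c : Fin m → R, r - ∑ i, c i ^ p * g i ∈ maximalIdeal R)
    (hl : ∀ i, π (algebraMap R Ω (g i)) ∈ ((algebraMap R Ω).range.map π).map (frobenius K p) ⊔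
      Subring.closure {t | t ∈ l.map (π.comp (algebraMap R Ω))}) :
    (algebraMap R Ω).range ≤ rootableSubring p n (algebraMap R Ω).range
      (fun i => algebraMap R Ω (x i)) (l.map (algebraMap R Ω)) := by
  let f := algebraMap R Ω
  let T : Subring R := (rootableSubring p n f.range (fun i => f (x i)) (l.map f)).comap f
  have hpow (a : R) : a ^ p ∈ T := by
    rw [Subring.mem_comap, map_pow]
    exact pow_mem_rootableSubring ⟨a, rfl⟩
  have hmul (a : R) : (p : R) * a ∈ T := by
    rw [Subring.mem_comap, map_mul, map_natCast]
    exact natCast_mul_mem_rootableSubring ⟨a, rfl⟩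
  have hlT : ∀ t ∈ l, t ∈ T := fun t ht =>
    parameterSet_subset_rootableSubring (Or.inr (List.mem_map_of_mem ht))
  have hle : (f.range.map π).map (frobenius K p) ⊔ Subring.closure {t | t ∈ l.map (π.comp f)} ≤
      T.map (π.comp f) := by
    refine sup_le ?_ (Subring.closure_le.2 fun t ht => ?_)
    · rintro _ ⟨_, ⟨_, ⟨a, rfl⟩, rfl⟩, rfl⟩
      exact ⟨a ^ p, hpow a, map_pow (π.comp f) a p⟩
    · obtain ⟨r, hr, rfl⟩ := List.mem_map.1 ht
      exact ⟨r, hlT r hr, rfl⟩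
  choose g' hg'T hg' using fun i => hle (hl i)
  have hg'g (i : Fin m) : g i - g' i ∈ maximalIdeal R := by
    refine (IsLocalRing.le_maximalIdeal (RingHom.ker_ne_top (π.comp f))) ?_
    rw [RingHom.mem_ker, map_sub, hg', RingHom.comp_apply, sub_self]
  have hT : T = ⊤ := by
    refine subring_eq_top_of_forall_pow_mem hp hx.maximalIdeal_eq_span.symm hpow hmul
      (fun i => parameterSet_subset_rootableSubring (Or.inl ⟨i, i.2, rfl⟩)) hg'T fun r => ?_
    obtain ⟨c, hc⟩ := hg r
    refine ⟨c, ?_⟩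
    have hsum := add_mem hc (sum_mem fun i (_ : i ∈ Finset.univ) =>
      (maximalIdeal R).mul_mem_left (c i ^ p) (hg'g i))
    simpa only [mul_sub, Finset.sum_sub_distrib, sub_add_sub_cancel] using hsum
  rintro _ ⟨r, rfl⟩
  exact (hT ▸ Subring.mem_top r : r ∈ T)

lemma IsRegularSystem.exists_isRootTowerLevel (hx : IsRegularSystem n x)
    (hp : (p : R) ∈ maximalIdeal R) (hinj : Function.Injective (algebraMap R Ω))
    (hg : ∀ r, ∃ c : Fin m → R, r - ∑ i, c i ^ p * g i ∈ maximalIdeal R) (π : Ω →+* K) :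
    ∃ l, IsRootTowerLevel p n R π (algebraMap R Ω).range (fun i => algebraMap R Ω (x i)) l := by
  obtain ⟨l, hirr, hgen⟩ := exists_list_isIrredundantOver_map (π.comp (algebraMap R Ω)) g
    (((algebraMap R Ω).range.map π).map (frobenius K p))
  let e : R ≃+* (algebraMap R Ω).range := RingEquiv.ofBijective (algebraMap R Ω).rangeRestrict
    ⟨fun a b hab => hinj (congrArg Subtype.val hab), (algebraMap R Ω).rangeRestrict_surjective⟩
  refine ⟨l.map (algebraMap R Ω), fun r => ⟨r, rfl⟩, ?_, isNoetherianRing_of_ringEquiv _ e,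
    fun i => ⟨x i, rfl⟩, hx.of_ringEquiv e fun _ _ => rfl, ?_, ?_,
    range_algebraMap_le_rootableSubring hp hx hg hgen⟩
  · have hid : FlatModulo (RingHom.id R) 0 ⊥ := Ideal.span_singleton_zero (α := R) ▸ .id 0
    exact hid.of_ringEquiv e fun a => rfl
  · exact fun t ht => (List.mem_map.1 ht).imp fun r hr => hr.2
  · rwa [List.map_map]

end BaseLevel

/-- A tower of levels `A 0 ≤ A 1 ≤ …` in which the parameters of every level have `p`-th roots in
the next one. -/
structure IsRootTower (p n : ℕ) [Fact p.Prime] (R : Type*) {Ω K : Type*} [CommRing R]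
    [CommRing Ω] [Algebra R Ω] [Field K] [CharP K p] (π : Ω →+* K) (A : ℕ → Subring Ω)
    (x : ℕ → ℕ → Ω) (l : ℕ → List Ω) : Prop where
  isRootTowerLevel : ∀ e, IsRootTowerLevel p n R π (A e) (x e) (l e)
  monotone : Monotone A
  exists_pow_eq : ∀ e, ∀ c ∈ parameterSet n (x e) (l e), ∃ b ∈ A (e + 1), b ^ p = c

lemma exists_mem_sum_pow_eq_add_natCast_mul {O : Type*} [CommRing O] {p : ℕ} (hp : p.Prime)
    {J : Ideal O} {ι : Type*} (s : Finset ι) {b : ι → O} (hb : ∀ i, b i ∈ J) :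
    ∃ c ∈ J, (∑ i ∈ s, b i) ^ p = ∑ i ∈ s, b i ^ p + p * c := by
  classical
  induction s using Finset.induction_on with
  | empty => exact ⟨0, zero_mem _, by simp [hp.ne_zero]⟩
  | insert i s hi ih =>
    obtain ⟨c, hc, hsum⟩ := ih
    obtain ⟨r, hr⟩ := exists_add_pow_prime_eq hp (b i) (∑ i ∈ s, b i)
    refine ⟨c + b i * ((∑ i ∈ s, b i) * r), add_mem hc (J.mul_mem_right _ (hb i)), ?_⟩
    rw [Finset.sum_insert hi, Finset.sum_insert hi, hr, hsum]
    ring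

lemma exists_associated_pow_of_mem_span {O : Type*} [CommRing O] {p : ℕ} (hp : p.Prime)
    (hfrob : ∀ a : O, ∃ b, (p : O) ∣ a - b ^ p) {ι : Type*} [Finite ι] {X : ι → O}
    (hX : ∀ i, X i ∈ Ideal.jacobson (⊥ : Ideal O))
    (hspan : (p : O) ∈ Ideal.span (Set.range fun i => X i ^ p)) :
    ∃ ϖ ∈ Ideal.jacobson (⊥ : Ideal O), Associated (p : O) (ϖ ^ p) := by
  have := Fintype.ofFinite ι
  obtain ⟨r, hr⟩ := Ideal.mem_span_range_iff_exists_fun.1 hspan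
  choose s z hz using fun i => hfrob (r i)
  have hmem (i : ι) : X i * s i ∈ Ideal.jacobson (⊥ : Ideal O) := Ideal.mul_mem_right _ _ (hX i)
  obtain ⟨c, hc, hsum⟩ := exists_mem_sum_pow_eq_add_natCast_mul hp Finset.univ hmem
  have hj : c - ∑ i, z i * X i ^ p ∈ Ideal.jacobson (⊥ : Ideal O) :=
    sub_mem hc (sum_mem fun i _ =>
      Ideal.mul_mem_left _ _ (Ideal.pow_mem_of_mem _ (hX i) _ hp.pos))
  have hunit : IsUnit (1 + (c - ∑ i, z i * X i ^ p)) := by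
    simpa [add_comm] using Ideal.mem_jacobson_bot.1 hj 1
  refine ⟨∑ i, X i * s i, sum_mem fun i _ => hmem i, hunit.unit, ?_⟩
  have hpow : ∑ i, (X i * s i) ^ p = p - p * ∑ i, z i * X i ^ p := by
    rw [eq_sub_iff_add_eq, Finset.mul_sum, ← Finset.sum_add_distrib]
    refine .trans (Finset.sum_congr rfl fun i _ => ?_) hr
    linear_combination -X i ^ p * hz i
  rw [hsum, hpow, IsUnit.unit_spec]
  ring

lemma not_isUnit_natCast_subring {Ω K : Type*} [CommRing Ω] [Field K] {p : ℕ} [CharP K p]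
    (π : Ω →+* K) (O : Subring Ω) : ¬IsUnit (p : O) := fun hu => by
  simpa using hu.map (π.comp O.subtype)

section RootTower

variable {p n : ℕ} [hpp : Fact p.Prime] {R Ω K : Type*} [CommRing R] [CommRing Ω] [Algebra R Ω]
  [Field K] [CharP K p] {π : Ω →+* K}

lemma IsRootTowerLevel.exists_isRootTower [Algebra.IsIntegral R Ω] {A : Subring Ω}
    {x : ℕ → Ω} {l : List Ω} (h : IsRootTowerLevel p n R π A x l) (hπ : Function.Surjective π)
    (hroot : ∀ a : Ω, ∃ b, b ^ p = a) :
    ∃ A x l, IsRootTower p n R π A x l := by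
  let Level := {q : Subring Ω × (ℕ → Ω) × List Ω // IsRootTowerLevel p n R π q.1 q.2.1 q.2.2}
  have hstep (q : Level) : ∃ q' : Level, q.1.1 ≤ q'.1.1 ∧
      ∀ c ∈ parameterSet n q.1.2.1 q.1.2.2, ∃ b ∈ q'.1.1, b ^ p = c := by
    obtain ⟨A', x', l', h', hA', hroots⟩ := q.2.exists_forall_parameterSet_pow_eq hπ hroot
    exact ⟨⟨⟨A', x', l'⟩, h'⟩, hA', hroots⟩
  choose next hnext hroots using hstep
  let q (e : ℕ) : Level := next^[e] ⟨⟨A, x, l⟩, h⟩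
  have hq (e : ℕ) : q (e + 1) = next (q e) := Function.iterate_succ_apply' next e _
  refine ⟨fun e => (q e).1.1, fun e => (q e).1.2.1, fun e => (q e).1.2.2, fun e => (q e).2,
    monotone_nat_of_le_succ fun e => ?_, fun e => ?_⟩
  · simpa only [hq] using hnext (q e)
  · simpa only [hq] using hroots (q e)

namespace IsRootTower

variable {A : ℕ → Subring Ω} {x : ℕ → ℕ → Ω} {l : ℕ → List Ω}

lemma mem_iSup_iff (h : IsRootTower p n R π A x l) {a : Ω} : a ∈ ⨆ e, A e ↔ ∃ e, a ∈ A e :=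
  Subring.mem_iSup_of_directed h.monotone.directed_le

lemma exists_forall_mem (h : IsRootTower p n R π A x l) {ι : Type*} [Finite ι]
    (y : ι → ↥(⨆ e, A e)) : ∃ e, ∀ i, (y i : Ω) ∈ A e := by
  choose e he using fun i => h.mem_iSup_iff.1 (y i).2
  obtain ⟨N, hN⟩ := Finite.exists_le e
  exact ⟨N, fun i => h.monotone (hN i) (he i)⟩

lemma algebraMap_mem (h : IsRootTower p n R π A x l) (r : R) : algebraMap R Ω r ∈ ⨆ e, A e :=
  le_iSup A 0 ((h.isRootTowerLevel 0).algebraMap_mem r)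

lemma flatModulo (h : IsRootTower p n R π A x l) :
    FlatModulo ((algebraMap R Ω).codRestrict (⨆ e, A e) h.algebraMap_mem) 0 ⊥ := by
  intro ι _ a y hy
  obtain ⟨e, he⟩ := h.exists_forall_mem y
  let incl := Subring.inclusion (le_iSup A e)
  have hcomp (a : R) : incl ((algebraMap R Ω).codRestrict _ (h.isRootTowerLevel e).algebraMap_mem a)
      = (algebraMap R Ω).codRestrict _ h.algebraMap_mem a := rfl
  obtain ⟨κ, _, f, w, hw, hf⟩ :=
    (h.isRootTowerLevel e).flatModulo.exists_eq_sum (a := a) (y := fun i => ⟨y i, he i⟩) (by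
      refine Subring.inclusion_injective (le_iSup A e) ?_
      rw [map_sum, map_zero]
      exact hy)
  refine ⟨κ, inferInstance, f, fun k => incl (w k), fun i => ?_, hf⟩
  rw [Ideal.mem_bot, sub_eq_zero]
  refine (congrArg incl (hw i)).trans ?_
  simp only [map_sum, map_mul, hcomp]

lemma exists_dvd_sub_pow (h : IsRootTower p n R π A x l) (a : ↥(⨆ e, A e)) :
    ∃ b, (p : ↥(⨆ e, A e)) ∣ a - b ^ p := by
  have := Fact.mk (not_isUnit_natCast_subring (p := p) π (⨆ e, A e))
  let mk := Ideal.Quotient.mk (Ideal.span {(p : ↥(⨆ e, A e))})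
  let T := (frobenius (ModP (↥(⨆ e, A e)) p) p).range.comap mk
  obtain ⟨e, he⟩ := h.mem_iSup_iff.1 a.2
  have hroot {c : Ω} (hc : ∃ b ∈ A (e + 1), b ^ p = c) : c ∈ T.map (⨆ e, A e).subtype := by
    obtain ⟨b, hb, rfl⟩ := hc
    exact ⟨⟨b, le_iSup A _ hb⟩ ^ p, ⟨mk _, (map_pow mk _ p).symm⟩, rfl⟩
  have hle : rootableSubring p n (A e) (x e) (l e) ≤ T.map (⨆ e, A e).subtype := by
    refine rootableSubring_le_iff.2 ⟨fun c hc => hroot ⟨c, h.monotone e.le_succ hc, rfl⟩,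
      fun c hc => ⟨(p : ↥(⨆ e, A e)) * ⟨c, le_iSup A e hc⟩, ⟨0, ?_⟩, by simp⟩,
      fun c hc => hroot (h.exists_pow_eq e c hc)⟩
    rw [map_zero, eq_comm, Ideal.Quotient.eq_zero_iff_dvd]
    exact dvd_mul_right _ _
  obtain ⟨b, ⟨y, hy⟩, hb⟩ := hle ((h.isRootTowerLevel e).le_rootableSubring he)
  obtain rfl : b = a := Subtype.ext hb
  obtain ⟨s, rfl⟩ := Ideal.Quotient.mk_surjective y
  exact ⟨s, Ideal.mem_span_singleton.1 (Ideal.Quotient.eq.1 (hy.symm.trans (map_pow mk s p).symm))⟩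

lemma dvd_of_pow_dvd_pow (h : IsRootTower p n R π A x l) {q : ℕ} (hq : q ≠ 0)
    {b a : ↥(⨆ e, A e)} (hba : b ^ q ∣ a ^ q) : b ∣ a := by
  obtain ⟨c, hc⟩ := hba
  obtain ⟨e, he⟩ := h.exists_forall_mem ![b, a, c]
  have := (h.isRootTowerLevel e).isNoetherianRing
  have := (h.isRootTowerLevel e).isRegularSystem.isDomain
  have := (h.isRootTowerLevel e).isRegularSystem.isIntegrallyClosed
  have hdvd : (⟨b, he 0⟩ : A e) ^ q ∣ ⟨a, he 1⟩ ^ q :=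
    ⟨⟨c, he 2⟩, Subtype.ext (congrArg (⨆ e, A e).subtype hc)⟩
  exact map_dvd (Subring.inclusion (le_iSup A e)) ((IsIntegrallyClosed.pow_dvd_pow_iff hq).1 hdvd)

lemma exists_associated_pow [Algebra.IsIntegral R Ω] (h : IsRootTower p n R π A x l) :
    ∃ ϖ ∈ Ideal.jacobson (⊥ : Ideal ↥(⨆ e, A e)), Associated (p : ↥(⨆ e, A e)) (ϖ ^ p) := by
  have hreg := (h.isRootTowerLevel 0).isRegularSystem
  have := hreg.isLocalRing
  let incl := Subring.inclusion (le_iSup A 0)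
  let := incl.toAlgebra
  have : Algebra.IsIntegral (A 0) ↥(⨆ e, A e) := by
    have := (h.isRootTowerLevel 0).isIntegral
    let val : ↥(⨆ e, A e) →ₐ[A 0] Ω := { (⨆ e, A e).subtype with commutes' := fun _ => rfl }
    exact .of_injective val Subtype.val_injective
  choose X hX hXpow using fun i : Fin n => h.exists_pow_eq 0 (x 0 i) (Or.inl ⟨i, i.2, rfl⟩)
  let X' (i : Fin n) : ↥(⨆ e, A e) := ⟨X i, le_iSup A 1 (hX i)⟩
  have hX' (i : Fin n) : X' i ^ p = incl ⟨x 0 i, (h.isRootTowerLevel 0).mem i⟩ :=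
    Subtype.ext (hXpow i)
  refine exists_associated_pow_of_mem_span hpp.out h.exists_dvd_sub_pow (X := X')
    (fun i => mem_jacobson_bot_of_pow_eq_algebraMap (hreg.mem_maximalIdeal i.2) (hX' i)) ?_
  have hp : (p : A 0) ∈ maximalIdeal (A 0) :=
    (mem_maximalIdeal _).2 (not_isUnit_natCast_subring π (A 0))
  rw [hreg.maximalIdeal_eq_span] at hp
  have hmap := Ideal.mem_map_of_mem incl hp
  rw [Ideal.map_span, ← Set.range_comp, map_natCast] at hmap
  simp only [hX']
  exact hmap

lemma exists_isPerfectoidRoot [Algebra.IsIntegral R Ω] [CharZero Ω]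
    (h : IsRootTower p n R π A x l) : ∃ ϖ : ↥(⨆ e, A e), IsPerfectoidRoot p ϖ := by
  obtain ⟨ϖ, hϖ, hassoc⟩ := h.exists_associated_pow
  refine ⟨ϖ, fun hp => ?_, h.exists_dvd_sub_pow, hassoc, hϖ, h.dvd_of_pow_dvd_pow⟩
  exact hpp.out.ne_zero (Nat.cast_eq_zero.1 (congrArg Subtype.val hp))

end IsRootTower

end RootTower

section

variable {R : Type} [CommRing R] [IsDomain R] [IsNoetherianRing R] [IsLocalRing R]
  [IsAdicComplete (maximalIdeal R) R] {p : ℕ} [hpp : Fact p.Prime] {n : ℕ} {x : ℕ → R}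

lemma FFinite.exists_forall_sub_sum_mem {R : Type} [CommRing R] [IsLocalRing R] {p : ℕ}
    (hk : FFinite p (ResidueField R)) : ∃ (m : ℕ) (g : Fin m → R),
      ∀ r, ∃ c : Fin m → R, r - ∑ i, c i ^ p * g i ∈ maximalIdeal R := by
  obtain ⟨m, s, hs⟩ := hk
  choose g hg using fun i => residue_surjective (s i)
  refine ⟨m, g, fun r => ?_⟩
  obtain ⟨c, hc⟩ := hs (residue R r)
  choose c' hc' using fun i => residue_surjective (c i)
  refine ⟨c', ?_⟩
  simp only [← residue_eq_zero_iff, map_sub, map_sum, map_mul, map_pow, hg, hc', hc, sub_self]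

lemma exists_pow_eq_rPlus {R : Type} [CommRing R] [IsDomain R] {k : ℕ} (hk : 0 < k) (a : RPlus R) :
    ∃ b, b ^ k = a := by
  obtain ⟨z, hz⟩ := IsAlgClosed.exists_pow_nat_eq (a : AlgebraicClosure (FractionRing R)) hk
  exact ⟨⟨z, IsIntegral.of_pow hk (hz ▸ a.2)⟩, Subtype.ext hz⟩

lemma IsRegularSystem.exists_flatModulo_isPerfectoidRoot [CharZero R] (hx : IsRegularSystem n x)
    (hp : (p : R) ∈ maximalIdeal R) (hk : FFinite p (ResidueField R)) :
    ∃ (O : Type) (_ : CommRing O) (_ : IsDomain O) (i : R →+* O) (ϖ : O), IsPerfectoidRoot p ϖ ∧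
      (maximalIdeal R).map i ≠ ⊤ ∧ FlatModulo i 0 ⊥ := by
  obtain ⟨m, g, hg⟩ := hk.exists_forall_sub_sum_mem
  have hinj : Function.Injective (algebraMap R (RPlus R)) := by
    have := FaithfulSMul.trans R (FractionRing R) (AlgebraicClosure (FractionRing R))
    exact FaithfulSMul.algebraMap_injective R _
  have := charZero_of_injective_algebraMap hinj
  obtain ⟨M, hM⟩ := Ideal.exists_maximal (RPlus R)
  let := Ideal.Quotient.field M
  have hcomap := eq_maximalIdeal (Ideal.isMaximal_comap_of_isIntegral_of_isMaximal (R := R) M)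
  have hπ : ∀ r ∈ maximalIdeal R, Ideal.Quotient.mk M (algebraMap R (RPlus R) r) = 0 :=
    fun r hr => Ideal.Quotient.eq_zero_iff_mem.2 (hcomap.symm.le hr)
  have : CharP (RPlus R ⧸ M) p := by
    rw [CharP.charP_iff_prime_eq_zero hpp.out]
    simpa using hπ _ hp
  obtain ⟨l, hlevel⟩ := hx.exists_isRootTowerLevel hp hinj hg (Ideal.Quotient.mk M)
  obtain ⟨A, x, l, h⟩ :=
    hlevel.exists_isRootTower Ideal.Quotient.mk_surjective (exists_pow_eq_rPlus hpp.out.pos)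
  obtain ⟨ϖ, hϖ⟩ := h.exists_isPerfectoidRoot
  refine ⟨_, inferInstance, inferInstance, _, ϖ, hϖ, ?_, h.flatModulo⟩
  have hle : (maximalIdeal R).map ((algebraMap R _).codRestrict _ h.algebraMap_mem) ≤
      RingHom.ker ((Ideal.Quotient.mk M).comp (⨆ e, A e).subtype) :=
    Ideal.map_le_iff_le_comap.2 hπ
  exact ne_top_of_le_ne_top (RingHom.ker_ne_top _) hle

end

/-! ### Transporting relations between the roots of a polynomial -/

section

open Polynomial

variable {R : Type*} [CommRing R] {r : ℕ} (f : R[X])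

lemma coeff_prod_X_sub_C {B : Type*} [CommRing B] [Algebra R B] (β : Fin r → B) (i : Fin r) :
    (∏ j, (X - C (β j))).coeff (r - (i + 1)) =
      (-1) ^ ((i : ℕ) + 1) * MvPolynomial.aeval β (MvPolynomial.esymm (Fin r) R (i + 1)) := by
  have hcoeff := Multiset.prod_X_sub_C_coeff (Finset.univ.val.map β) (k := r - (i + 1)) (by simp)
  have hcard : Multiset.card (Finset.univ.val.map β) - (r - ((i : ℕ) + 1)) = i + 1 := by
    rw [Multiset.card_map, Finset.card_val, Finset.card_univ, Fintype.card_fin]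
    omega
  rw [Multiset.map_map, hcard] at hcoeff
  rw [MvPolynomial.aeval_esymm_eq_multiset_esymm]
  exact hcoeff

lemma exists_forall_eval₂Hom_eq_of_isSymmetric {S : MvPolynomial (Fin r) R} (hS : S.IsSymmetric) :
    ∃ s : R, ∀ (B : Type u) [CommRing B] (φ : R →+* B) (β : Fin r → B),
      f.map φ = ∏ i, (X - C (β i)) → MvPolynomial.eval₂Hom φ β S = φ s := by
  obtain ⟨P, hP⟩ := MvPolynomial.esymmAlgHom_surjective (σ := Fin r) (n := r) R (by simp) ⟨S, hS⟩
  replace hP :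
      MvPolynomial.aeval (fun i : Fin r => MvPolynomial.esymm (Fin r) R (i + 1)) P = S := by
    rw [← MvPolynomial.esymmAlgHom_apply, hP]
  refine ⟨MvPolynomial.eval (fun i : Fin r => (-1) ^ ((i : ℕ) + 1) * f.coeff (r - (i + 1))) P, ?_⟩
  intro B _ φ β hβ
  let := φ.toAlgebra
  have hesymm (i : Fin r) : MvPolynomial.aeval β (MvPolynomial.esymm (Fin r) R (i + 1)) =
      φ ((-1) ^ ((i : ℕ) + 1) * f.coeff (r - (i + 1))) := by
    rw [map_mul, ← coeff_map, hβ, coeff_prod_X_sub_C (R := R), map_pow, map_neg, map_one,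
      ← mul_assoc, ← mul_pow, neg_mul_neg, one_mul, one_pow, one_mul]
  change MvPolynomial.aeval β S = _
  rw [← hP, MvPolynomial.comp_aeval_apply]
  simp only [hesymm]
  exact (MvPolynomial.map_aeval _ φ P).symm

lemma exists_forall_prod_X_sub_C_eval₂Hom_eq_map (Q : MvPolynomial (Fin r) R) :
    ∃ G : R[X], ∀ (B : Type u) [CommRing B] (φ : R →+* B) (β : Fin r → B),
      f.map φ = ∏ i, (X - C (β i)) →
        ∏ ρ : Equiv.Perm (Fin r), (X - C (MvPolynomial.eval₂Hom φ (β ∘ ρ) Q)) = G.map φ := by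
  let H : (MvPolynomial (Fin r) R)[X] :=
    ∏ ρ : Equiv.Perm (Fin r), (X - C (MvPolynomial.rename ρ Q))
  have hsymm (i : ℕ) : (H.coeff i).IsSymmetric := fun e => by
    have hmap : H.map (MvPolynomial.rename (R := R) e).toRingHom = H := by
      simp only [H, Polynomial.map_prod]
      exact Fintype.prod_equiv (Equiv.mulLeft e) _ _ fun ρ => by
        simp [MvPolynomial.rename_rename]
    conv_rhs => rw [← hmap, coeff_map]
    rfl
  choose s hs using fun i => exists_forall_eval₂Hom_eq_of_isSymmetric.{u, _} f (hsymm i)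
  refine ⟨∑ i ∈ Finset.range (H.natDegree + 1), C (s i) * X ^ i, fun B _ φ β hβ => ?_⟩
  calc ∏ ρ : Equiv.Perm (Fin r), (X - C (MvPolynomial.eval₂Hom φ (β ∘ ρ) Q))
      = H.map (MvPolynomial.eval₂Hom φ β) := by
        simp only [H, Polynomial.map_prod, Polynomial.map_sub, map_X, map_C,
          MvPolynomial.eval₂Hom_rename]
    _ = _ := by
        conv_lhs => rw [H.as_sum_range_C_mul_X_pow]
        simp only [Polynomial.map_sum, Polynomial.map_mul, map_C, Polynomial.map_pow, map_X,
          hs _ B φ β hβ]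

variable {f} {K : Type u} [CommRing K] {ψ : R →+* K} {ζ : Fin r → K}

lemma exists_forall_pow_mul_eval₂_eq_zero [Nontrivial K]
    (hf : f.map ψ = ∏ i, (X - C (ζ i))) (Q : MvPolynomial (Fin r) R) :
    ∃ (P : R[X]) (k : ℕ), P.eval 0 ≠ 0 ∧ ∀ (B : Type u) [CommRing B] (φ : R →+* B) (β : Fin r → B),
      f.map φ = ∏ i, (X - C (β i)) → ∀ ρ : Equiv.Perm (Fin r),
        MvPolynomial.eval₂Hom φ (β ∘ ρ) Q ^ k * P.eval₂ φ (MvPolynomial.eval₂Hom φ (β ∘ ρ) Q) =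
          0 := by
  obtain ⟨G, hG⟩ := exists_forall_prod_X_sub_C_eval₂Hom_eq_map.{u, _} f Q
  have hG0 : G ≠ 0 := by
    rintro rfl
    have hzero := hG K ψ ζ hf
    rw [Polynomial.map_zero] at hzero
    exact (monic_prod_of_monic _ _ fun ρ _ => monic_X_sub_C _).ne_zero hzero
  obtain ⟨P, hGP, hP⟩ := exists_eq_pow_rootMultiplicity_mul_and_not_dvd G hG0 0
  refine ⟨P, G.rootMultiplicity 0, fun h0 => hP (dvd_iff_isRoot.2 h0), fun B _ φ β hβ ρ => ?_⟩
  have hroot : G.eval₂ φ (MvPolynomial.eval₂Hom φ (β ∘ ρ) Q) = 0 := by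
    rw [eval₂_eq_eval_map, ← hG B φ β hβ, eval_prod]
    exact Finset.prod_eq_zero (Finset.mem_univ ρ) (by simp)
  rwa [hGP, eval₂_mul, eval₂_pow, C_0, sub_zero, eval₂_X] at hroot

lemma prod_sub_eval₂Hom_eq_zero (hψ : Function.Injective ψ)
    (hf : f.map ψ = ∏ i, (X - C (ζ i))) {Q : MvPolynomial (Fin r) R} {a : R}
    (hQ : MvPolynomial.eval₂Hom ψ ζ Q = ψ a) {B : Type u} [CommRing B] {φ : R →+* B}
    {β : Fin r → B} (hβ : f.map φ = ∏ i, (X - C (β i))) :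
    ∏ ρ : Equiv.Perm (Fin r), (φ a - MvPolynomial.eval₂Hom φ (β ∘ ρ) Q) = 0 := by
  obtain ⟨G, hG⟩ := exists_forall_prod_X_sub_C_eval₂Hom_eq_map.{u, _} f Q
  have hroot : G.eval a = 0 := by
    apply hψ
    rw [map_zero, ← eval_map_apply, ← hG K ψ ζ hf, eval_prod]
    refine Finset.prod_eq_zero (Finset.mem_univ 1) ?_
    rw [eval_sub, eval_X, eval_C, sub_eq_zero, Equiv.Perm.coe_one, Function.comp_id, hQ]
  have heval := congrArg (eval (φ a)) (hG B φ β hβ)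
  rw [eval_map_apply, hroot, map_zero, eval_prod] at heval
  simpa using heval

/- The relations `Q i = 0` hold for the roots `ζ` in `K`, but not for roots of `f` elsewhere; they
do hold up to nilpotents after multiplication by `h`, and `h` is close enough to a nonzero constant
`a` for a product over all permutations of the roots to see it. -/
lemma exists_forall_mul_pow_eq_zero_and_prod_sub_eq_zero [IsDomain R] [Nontrivial K]
    (hψ : Function.Injective ψ) (hf : f.map ψ = ∏ i, (X - C (ζ i))) {ι : Type*} [Finite ι]
    {Q : ι → MvPolynomial (Fin r) R} (hQ : ∀ i, MvPolynomial.eval₂Hom ψ ζ (Q i) = 0) :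
    ∃ (a : R) (k : ℕ) (h : MvPolynomial (Fin r) R), a ≠ 0 ∧
      ∀ (B : Type u) [CommRing B] (φ : R →+* B) (β : Fin r → B), f.map φ = ∏ i, (X - C (β i)) →
        (∀ (ρ : Equiv.Perm (Fin r)) (i : ι),
          (MvPolynomial.eval₂Hom φ (β ∘ ρ) h * MvPolynomial.eval₂Hom φ (β ∘ ρ) (Q i)) ^ k = 0) ∧
        ∏ ρ : Equiv.Perm (Fin r), (φ a - MvPolynomial.eval₂Hom φ (β ∘ ρ) h) = 0 := by
  have := Fintype.ofFinite ι
  choose P k hP hPk using fun i => exists_forall_pow_mul_eval₂_eq_zero hf (Q i)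
  have heval {B : Type u} [CommRing B] (φ : R →+* B) (β : Fin r → B) (i : ι) :
      MvPolynomial.eval₂Hom φ β ((P i).eval₂ MvPolynomial.C (Q i)) =
        (P i).eval₂ φ (MvPolynomial.eval₂Hom φ β (Q i)) := by
    rw [hom_eval₂]
    congr 1
    ext a
    simp
  refine ⟨∏ i, (P i).eval 0, ∑ i, k i + 1, ∏ i, (P i).eval₂ MvPolynomial.C (Q i),
    Finset.prod_ne_zero_iff.2 fun i _ => hP i, fun B _ φ β hβ => ⟨fun ρ i => ?_,
      prod_sub_eval₂Hom_eq_zero hψ hf ?_ hβ⟩⟩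
  · obtain ⟨c, hc⟩ := map_dvd (MvPolynomial.eval₂Hom φ (β ∘ ρ))
      (Finset.dvd_prod_of_mem (fun i => (P i).eval₂ MvPolynomial.C (Q i)) (Finset.mem_univ i))
    obtain ⟨j, hj⟩ := Nat.exists_eq_add_of_le
      (Finset.single_le_sum (f := k) (fun _ _ => Nat.zero_le _) (Finset.mem_univ i))
    rw [heval] at hc
    rw [hc, hj]
    set q := MvPolynomial.eval₂Hom φ (β ∘ ρ) (Q i)
    linear_combination (((P i).eval₂ φ q) ^ (k i + j) * c ^ (k i + j + 1) * q ^ (j + 1)) *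
      hPk i B φ β hβ ρ
  · rw [map_prod, map_prod]
    refine Finset.prod_congr rfl fun i _ => ?_
    rw [heval, hQ, ← map_zero ψ, eval₂_at_apply]

end

section

open Polynomial
open WittVector (constantCoeff)

namespace IsFlatUntiltExtension

variable {p : ℕ} [Fact p.Prime] {L : ℕ} {D₀ B₀ : Type*} [CommRing D₀] [CommRing B₀] [CharP D₀ p]
  [PerfectRing D₀ p] {t : D₀} {𝔪 : Ideal D₀} {w : WittVector p D₀} {θ₀ : WittVector p D₀ →+* B₀}

lemma exists_map_eq_prod_X_sub_C (ht : t ∈ 𝔪) (hw : IsUnit (constantCoeff w)) {r : ℕ} {B : Type u}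
    [CommRing B] {g : B₀ →+* B} (h : IsFlatUntiltExtension L t 𝔪 w θ₀ g) {F : B[X]} (hF : F.Monic)
    (hdeg : F.natDegree = r) :
    ∃ (B' : Type u) (_ : CommRing B') (g' : B →+* B') (β : Fin r → B'),
      IsFlatUntiltExtension L t 𝔪 w θ₀ (g'.comp g) ∧ F.map g' = ∏ i, (X - C (β i)) := by
  induction r generalizing B with
  | zero =>
    exact ⟨B, inferInstance, RingHom.id B, Fin.elim0, h, by simp [hF.natDegree_eq_zero.1 hdeg]⟩
  | succ r ih =>
    obtain ⟨B₁, _, g₁, z, h₁, hz⟩ := h.exists_root ht hw hF (hdeg ▸ r.succ_pos)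
    rcases subsingleton_or_nontrivial B₁ with _ | _
    · exact ⟨B₁, inferInstance, g₁, 0, h₁, Subsingleton.elim _ _⟩
    obtain ⟨G, hG⟩ : X - C z ∣ F.map g₁ := dvd_iff_isRoot.2 hz
    have hGmonic : G.Monic := (monic_X_sub_C z).of_mul_monic_left (hG ▸ hF.map g₁)
    have hGdeg : G.natDegree = r := by
      have hmap := hF.natDegree_map g₁
      rw [hG, (monic_X_sub_C z).natDegree_mul hGmonic, natDegree_X_sub_C] at hmap
      omega
    obtain ⟨B₂, _, g₂, β, h₂, hβ⟩ := ih h₁ hGmonic hGdeg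
    refine ⟨B₂, inferInstance, g₂.comp g₁, Fin.cons (g₂ z) β, h₂, ?_⟩
    rw [← Polynomial.map_map, hG, Polynomial.map_mul, hβ, Fin.prod_univ_succ]
    simp

lemma exists_forall_pow_eq (ht : t ∈ 𝔪) (hw : IsUnit (constantCoeff w)) {q : ℕ} (hq : 0 < q)
    {n : ℕ} {B : Type u} [CommRing B] {g : B₀ →+* B} (h : IsFlatUntiltExtension L t 𝔪 w θ₀ g)
    (a : Fin n → B) :
    ∃ (B' : Type u) (_ : CommRing B') (g' : B →+* B') (b : Fin n → B'),
      IsFlatUntiltExtension L t 𝔪 w θ₀ (g'.comp g) ∧ ∀ i, b i ^ q = g' (a i) := by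
  induction n generalizing B with
  | zero => exact ⟨B, inferInstance, RingHom.id B, Fin.elim0, h, fun i => i.elim0⟩
  | succ n ih =>
    rcases subsingleton_or_nontrivial B with _ | _
    · exact ⟨B, inferInstance, RingHom.id B, 0, h, fun i => Subsingleton.elim _ _⟩
    obtain ⟨B₁, _, g₁, z, h₁, hz⟩ := h.exists_root ht hw (monic_X_pow_sub_C (a 0) hq.ne')
      (by rwa [natDegree_X_pow_sub_C])
    obtain ⟨B₂, _, g₂, b, h₂, hb⟩ := ih h₁ fun i => g₁ (a i.succ)
    have hz' : z ^ q = g₁ (a 0) := by simpa [sub_eq_zero] using hz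
    exact ⟨B₂, inferInstance, g₂.comp g₁, Fin.cons (g₂ z) b, h₂,
      Fin.cases (by simp [← map_pow, hz']) (by simpa using hb)⟩

end IsFlatUntiltExtension

end

/-! ### André's flatness lemma modulo a power of `p` -/

section

open Polynomial

variable {R : Type*} [CommRing R] {p : ℕ}

/-- The conclusion of André's flatness lemma modulo `p ^ L`: the local ring `R` maps flatly to `B`
modulo `p ^ N` for `N ≤ L`, the maximal ideal of `R` does not generate the unit ideal of `B`, and
`B` is reduced up to `p`-divisibility. -/
structure IsAndreFlat [IsLocalRing R] (p L : ℕ) {B : Type*} [CommRing B] (f : R →+* B) : Prop where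
  map_ne_top : (maximalIdeal R).map f ≠ ⊤
  flatModulo : ∀ {N : ℕ}, N ≤ L → FlatModulo f ((p : R) ^ N) (Ideal.span {(p : B) ^ N})
  pow_dvd_of_pow_eq_zero :
    ∀ {e N : ℕ}, p ^ e * N = L → ∀ {x : B}, x ^ p ^ e = 0 → (p : B) ^ N ∣ x

lemma FlatModulo.mk_comp_span_singleton {O : Type*} [CommRing O] {φ : R →+* O} {s : R}
    (h : FlatModulo φ s (Ideal.span {φ s})) {I : Ideal O} (hI : I ≤ Ideal.span {φ s}) :
    FlatModulo ((Ideal.Quotient.mk I).comp φ) s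
      (Ideal.span {Ideal.Quotient.mk I (φ s)}) := by
  refine h.map_of_surjective (α := RingHom.id R) (β := Ideal.Quotient.mk I) (fun _ => rfl)
    Function.surjective_id Ideal.Quotient.mk_surjective (fun _ hs => hs) ?_
  rw [← Set.image_singleton, ← Ideal.map_span, Ideal.comap_map_mk hI]

variable [IsLocalRing R] [Fact p.Prime]

lemma IsFlatUntiltExtension.isAndreFlat {L : ℕ} {D₀ B₀ : Type*} [CommRing D₀] [CommRing B₀]
    [CharP D₀ p] [PerfectRing D₀ p] {t : D₀} {w : WittVector p D₀} {θ₀ : WittVector p D₀ →+* B₀}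
    {ι : R →+* B₀} {B : Type u} [CommRing B] {g : B₀ →+* B}
    (h : IsFlatUntiltExtension L t
      ((((maximalIdeal R).map ι).comap θ₀).map WittVector.constantCoeff) w θ₀ g)
    (h₀ : IsTruncatedUntilt L t w θ₀) (hι : FlatModulo ι (p : R) (Ideal.span {(p : B₀)}))
    (hp : (p : R) ∈ maximalIdeal R) (hL : L ≠ 0) : IsAndreFlat p L (g.comp ι) where
  map_ne_top := by
    rw [← Ideal.map_map]
    exact map_ne_top (map_natCast ι p ▸ Ideal.mem_map_of_mem ι hp) h h₀ hL
  flatModulo := h.flatModulo_pow_comp h₀ hι hL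
  pow_dvd_of_pow_eq_zero := h.pow_dvd_of_pow_eq_zero

lemma IsPerfectoidRoot.exists_isAndreFlat {O : Type u} [CommRing O] [IsDomain O] {ϖ : O}
    (hϖ : IsPerfectoidRoot p ϖ) {i : R →+* O} (hp : (p : R) ∈ maximalIdeal R)
    (hne : (maximalIdeal R).map i ≠ ⊤) (hi : FlatModulo i 0 ⊥) (n : ℕ) {F : R[X]} (hF : F.Monic)
    {r : ℕ} (hr : F.natDegree = r) {σ : Type*} [Finite σ] (H : σ → MvPolynomial (Fin r) R) {q : ℕ}
    (hq : 0 < q) :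
    ∃ (B : Type u) (_ : CommRing B) (f : R →+* B) (β : Fin r → B) (b : σ → B),
      IsAndreFlat p (n + 2) f ∧ F.map f = ∏ i, (X - C (β i)) ∧
        ∀ s, b s ^ q = MvPolynomial.eval₂Hom f β (H s) := by
  have hpi : (p : O) ∈ (maximalIdeal R).map i := map_natCast i p ▸ Ideal.mem_map_of_mem i hp
  have : Fact ¬IsUnit (p : O) := ⟨fun hu => hne (Ideal.eq_top_of_isUnit_mem _ hpi hu)⟩
  obtain ⟨t, w, h₀⟩ := hϖ.exists_isTruncatedUntilt n
  let ι := (Ideal.Quotient.mk (Ideal.span {(p : O)} ^ (n + 2))).comp i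
  have hpow : Ideal.span {(p : O)} ^ (n + 2) ≤ Ideal.span {(p : O)} := Ideal.pow_le_self (by omega)
  have hιne : (maximalIdeal R).map ι ≠ ⊤ := map_mk_comp_ne_top (by
    rwa [sup_eq_left.2 (hpow.trans ((Ideal.span_singleton_le_iff_mem _).2 hpi))])
  have hpι := map_natCast ι p ▸ Ideal.mem_map_of_mem ι hp
  have hι : FlatModulo ι (p : R) (Ideal.span {(p : O ⧸ Ideal.span {(p : O)} ^ (n + 2))}) := by
    simpa using (hi.span_singleton (p : R)).mk_comp_span_singleton (by simpa using hpow)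
  have : Nontrivial (O ⧸ Ideal.span {(p : O)} ^ (n + 2)) :=
    not_subsingleton_iff_nontrivial.1 fun _ => hιne (Subsingleton.elim _ _)
  have ht := h₀.mem_map_constantCoeff hpι
  have h₁ := h₀.isFlatUntiltExtension_id
    (map_constantCoeff_comap_ne_top (thetaModPPow p O (n + 1)) hpι hιne)
  obtain ⟨B₁, _, g₁, β, h₂, hβ⟩ := h₁.exists_map_eq_prod_X_sub_C ht h₀.isUnit (hF.map ι)
    (by rw [hF.natDegree_map, hr])
  obtain ⟨k, ⟨eσ⟩⟩ := Finite.exists_equiv_fin σ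
  obtain ⟨B₂, _, g₂, b, h₃, hb⟩ := h₂.exists_forall_pow_eq ht h₀.isUnit hq
    fun j => MvPolynomial.eval₂Hom (g₁.comp ι) β (H (eσ.symm j))
  refine ⟨B₂, inferInstance, g₂.comp (g₁.comp ι), g₂ ∘ β, b ∘ eσ,
    h₃.isAndreFlat h₀ hι hp (by omega), ?_, fun s => ?_⟩
  · rw [← Polynomial.map_map, ← Polynomial.map_map, hβ]
    simp [Polynomial.map_prod]
  · rw [Function.comp_apply, hb, Equiv.symm_apply_apply]
    exact MvPolynomial.eval₂_comp_left _ _ _ _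

end

/-! ### Solving linear relations of `R⁺` over `R` -/

section

open Polynomial

lemma exists_monic_map_eq_prod_X_sub_C {R K κ : Type*} [CommRing R] [Field K] [IsAlgClosed K]
    [Algebra R K] [Finite κ] {y : κ → K} (hy : ∀ j, IsIntegral R (y j)) :
    ∃ (r : ℕ) (F : R[X]) (ζ : Fin r → K) (τ : κ → Fin r), F.Monic ∧ F.natDegree = r ∧
      F.map (algebraMap R K) = ∏ i, (X - C (ζ i)) ∧ ∀ j, ζ (τ j) = y j := by
  have := Fintype.ofFinite κ
  choose G hG hGy using hy
  have hF : (∏ j, G j).Monic := monic_prod_of_monic _ _ fun j _ => hG j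
  set F := ∏ j, G j with hFdef
  set l := (F.map (algebraMap R K)).roots.toList with hl
  have hsplit := IsAlgClosed.splits (F.map (algebraMap R K))
  have hmem (j : κ) : ∃ i : Fin l.length, l.get i = y j := by
    rw [← List.mem_iff_get, hl, Multiset.mem_toList, mem_roots (hF.map _).ne_zero, IsRoot, eval_map,
      hFdef, eval₂_finsetProd]
    exact Finset.prod_eq_zero (Finset.mem_univ j) (hGy j)
  choose τ hτ using hmem
  refine ⟨l.length, F, l.get, τ, hF, ?_, ?_, hτ⟩
  · rw [hl, Multiset.length_toList, ← hsplit.natDegree_eq_card_roots, hF.natDegree_map]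
  · conv_lhs => rw [hsplit.eq_prod_roots_of_monic (hF.map _), ← Multiset.coe_toList (roots _)]
    rw [← hl, Multiset.map_coe, Multiset.prod_coe, ← List.prod_ofFn]
    congr 1
    exact (List.ofFn_getElem_eq_map _ _).symm

end

section

variable {R B : Type*} [CommRing R] [CommRing B] {f : R →+* B} {s : R}

lemma FlatModulo.mem_of_map_mem_map [IsLocalRing R] (h : FlatModulo f s (Ideal.span {f s}))
    (hne : (maximalIdeal R).map f ≠ ⊤) {I : Ideal R} (hs : s ∈ I) {x : R}
    (hx : f x ∈ I.map f) : x ∈ I := by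
  by_contra hxI
  have hIm : I ≤ maximalIdeal R := le_maximalIdeal fun htop => hxI (htop ▸ trivial)
  obtain ⟨n, y, c, hc⟩ := Submodule.mem_span_set'.1 hx
  choose a haI ha using fun i => (c i).2
  obtain ⟨κ, _, e, z, hez, he⟩ := h (Option (Fin n)) (fun o => o.elim x a)
    (fun o => o.elim (-1) y) (by simp [Fintype.sum_option, ha, ← hc, mul_comm])
  have hmem (l : κ) : e none l ∈ maximalIdeal R := fun hu => hxI <| by
    have hdvd := I.mem_of_dvd (he l) hs
    rw [Fintype.sum_option] at hdvd
    have hsum : ∑ i, a i * e (some i) l ∈ I := sum_mem fun i _ => I.mul_mem_right _ (haI i)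
    exact (I.mul_unit_mem_iff_mem hu).1 ((I.add_mem_iff_left hsum).1 hdvd)
  refine hne ((Ideal.eq_top_iff_one _).2 (neg_mem_iff.1 ?_))
  have hspan : Ideal.span {f s} ≤ (maximalIdeal R).map f :=
    (Ideal.span_singleton_le_iff_mem _).2 (Ideal.mem_map_of_mem _ (hIm hs))
  rw [← sub_add_cancel (-1) (∑ l, f (e none l) * z l)]
  exact add_mem (hspan (hez none))
    (sum_mem fun l _ => Ideal.mul_mem_right _ _ (Ideal.mem_map_of_mem _ (hmem l)))

lemma FlatModulo.sum_mem_map_of_forall_sum_mem {J : Ideal B} (h : FlatModulo f s J)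
    {I : Ideal R} (hJ : J ≤ I.map f) {κ : Type} [Fintype κ] {ν : ℕ} {a₀ : κ → R}
    {a : Fin ν → κ → R} (ha : ∀ e : κ → R, (∀ i, s ∣ ∑ j, a i j * e j) → ∑ j, a₀ j * e j ∈ I)
    {y : κ → B} (hy : ∀ i, ∑ j, f (a i j) * y j ∈ J) : ∑ j, f (a₀ j) * y j ∈ I.map f := by
  obtain ⟨l, _, e, z, hez, he⟩ := h.exists_of_forall_sum_mem ν a y hy
  have hsum : ∑ j, f (a₀ j) * y j = ∑ j, f (a₀ j) * (y j - ∑ k, f (e j k) * z k) +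
      ∑ k, f (∑ j, a₀ j * e j k) * z k := by
    simp only [map_sum, map_mul, Finset.sum_mul, mul_assoc]
    rw [Finset.sum_comm (s := Finset.univ (α := l))]
    simp only [mul_sub, Finset.sum_sub_distrib, Finset.mul_sum, sub_add_cancel]
  rw [hsum]
  exact add_mem (sum_mem fun j _ => Ideal.mul_mem_left _ _ (hJ (hez j)))
    (sum_mem fun k _ => Ideal.mul_mem_right _ _ (Ideal.mem_map_of_mem _ (ha _ fun i => he i k)))

lemma pow_mul_pow_mem_pow {I J : Ideal B} {b c δ : B} {n P : ℕ} (hJ : J ≤ I ^ (n * P))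
    (hδ : b * δ ∈ I) (hc : b * (δ ^ n - c) ∈ J) : (b ^ P) ^ n * c ^ P ∈ I ^ (n * P) := by
  cases n with
  | zero => simp
  | succ n =>
    have hdvd : b * (δ ^ (n + 1) - c) ∣ (b * δ ^ (n + 1)) ^ P - (b * c) ^ P := by
      rw [mul_sub]
      exact sub_dvd_pow_sub_pow _ _ P
    have hsplit : (b ^ P) ^ (n + 1) * c ^ P = (b * δ) ^ ((n + 1) * P) -
        (b ^ P) ^ n * ((b * δ ^ (n + 1)) ^ P - (b * c) ^ P) := by
      ring
    rw [hsplit]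
    exact sub_mem (Ideal.pow_mem_pow hδ _) (Ideal.mul_mem_left _ _ (hJ (J.mem_of_dvd hdvd hc)))

lemma FlatModulo.pow_mul_pow_mem_map_pow {J : Ideal B} (h : FlatModulo f s J) {I : Ideal R}
    {n P : ℕ} (hnP : n * P ≠ 0) (hJ : J ≤ I.map f ^ (n * P)) {κ : Type} [Fintype κ] {ν : ℕ}
    {a₀ : κ → R} {a : Fin ν → κ → R}
    (ha : ∀ e : κ → R, (∀ i, s ∣ ∑ j, a i j * e j) → ∑ j, a₀ j * e j ∈ I) {b c : B} {y : κ → B}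
    (hy : ∀ i, b * ∑ j, f (a i j) * y j ∈ J) (hc : b * ((∑ j, f (a₀ j) * y j) ^ n - c) ∈ J) :
    (b ^ P) ^ n * c ^ P ∈ I.map f ^ (n * P) := by
  refine pow_mul_pow_mem_pow hJ ?_ hc
  rw [Finset.mul_sum]
  simp only [mul_left_comm b, Finset.mul_sum] at hy ⊢
  exact h.sum_mem_map_of_forall_sum_mem (hJ.trans (Ideal.pow_le_self hnP)) ha hy

lemma pow_card_mul_mem_of_prod_sub_eq_zero {σ : Type*} [Fintype σ] {I : Ideal B} {a x : B}
    {h : σ → B} {n : ℕ} (hprod : ∏ i, (a - h i) = 0) (hmem : ∀ i, h i ^ n * x ∈ I) :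
    a ^ (n * Fintype.card σ) * x ∈ I := by
  let I' : Ideal B := Submodule.comap (LinearMap.mulRight B x) I
  have hpow : ∏ i, (a ^ n - h i ^ n) = 0 := by
    rw [← zero_dvd_iff, ← hprod]
    exact Finset.prod_dvd_prod_of_dvd _ _ fun i _ => sub_dvd_pow_sub_pow _ _ n
  have hmk (i : σ) : Ideal.Quotient.mk I' (h i ^ n) = 0 := Ideal.Quotient.eq_zero_iff_mem.2 (hmem i)
  have hquot := congrArg (Ideal.Quotient.mk I') hpow
  simp only [map_prod, map_sub, hmk, sub_zero, map_zero, Finset.prod_const, Finset.card_univ,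
    ← map_pow, ← pow_mul] at hquot
  exact (Ideal.Quotient.eq_zero_iff_mem (I := I')).1 hquot

end

section

open Polynomial

variable {R : Type} [CommRing R] [IsDomain R] [IsNoetherianRing R] [IsLocalRing R]
  [IsAdicComplete (maximalIdeal R) R] [CharZero R] {p : ℕ} [hpp : Fact p.Prime] {d : ℕ} {x : ℕ → R}
  {K : Type} [Field K]

lemma IsRegularSystem.exists_flatModulo_forall_mul_mem (hx : IsRegularSystem d x)
    (hp : (p : R) ∈ maximalIdeal R) (hk : FFinite p (ResidueField R)) {ψ : R →+* K}
    (hψ : Function.Injective ψ) {r : ℕ} {F : R[X]} (hF : F.Monic) (hr : F.natDegree = r)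
    {ζ : Fin r → K} (hζ : F.map ψ = ∏ i, (X - C (ζ i))) {ι : Type*} [Finite ι]
    {Q : ι → MvPolynomial (Fin r) R} (hQ : ∀ i, MvPolynomial.eval₂Hom ψ ζ (Q i) = 0) :
    ∃ g : R, g ≠ 0 ∧ ∀ E N : ℕ, 2 ≤ N → ∃ (B : Type) (_ : CommRing B) (f : R →+* B) (β : Fin r → B)
      (b : Equiv.Perm (Fin r) → B), (maximalIdeal R).map f ≠ ⊤ ∧
        FlatModulo f ((p : R) ^ N) (Ideal.span {f ((p : R) ^ N)}) ∧
        (∀ ρ i, b ρ * MvPolynomial.eval₂Hom f (β ∘ ρ) (Q i) ∈ Ideal.span {f ((p : R) ^ N)}) ∧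
        ∏ ρ, (f g - b ρ ^ p ^ E) = 0 := by
  obtain ⟨O, _, _, i, ϖ, hϖ, hne, hi⟩ := hx.exists_flatModulo_isPerfectoidRoot hp hk
  obtain ⟨g, k, h, hg, hgh⟩ := exists_forall_mul_pow_eq_zero_and_prod_sub_eq_zero hψ hζ hQ
  refine ⟨g, hg, fun E N hN => ?_⟩
  have hle (m : ℕ) : N ≤ p ^ m * N := Nat.le_mul_of_pos_left _ (pow_pos hpp.out.pos _)
  obtain ⟨n, hn⟩ := Nat.exists_eq_add_of_le' (hN.trans (hle (E + k)))
  obtain ⟨B, _, f, β, b, hf, hβ, hb⟩ := hϖ.exists_isAndreFlat hp hne hi n hF hr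
    (fun ρ : Equiv.Perm (Fin r) => MvPolynomial.rename ρ h) (pow_pos hpp.out.pos E)
  simp only [MvPolynomial.eval₂Hom_rename] at hb
  obtain ⟨hnil, hprod⟩ := hgh B f β hβ
  have hpN : f ((p : R) ^ N) = (p : B) ^ N := by rw [map_pow, map_natCast]
  refine ⟨B, inferInstance, f, β, b, hf.map_ne_top, hpN ▸ hf.flatModulo (hn ▸ hle _),
    fun ρ i => ?_, by simpa only [hb] using hprod⟩
  rw [hpN]
  set q := MvPolynomial.eval₂Hom f (β ∘ ρ) (Q i)
  have hbq : (b ρ ^ p ^ E * q) ^ p ^ k = 0 := by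
    rw [hb]
    exact pow_eq_zero_of_le (Nat.lt_pow_self hpp.out.one_lt).le (hnil ρ i)
  refine Ideal.mem_span_singleton.2 (hf.pow_dvd_of_pow_eq_zero hn ?_)
  refine zero_dvd_iff.1 (hbq ▸ ?_)
  rw [pow_add, pow_mul]
  refine pow_dvd_pow_of_dvd ?_ _
  rw [mul_pow]
  exact mul_dvd_mul_left _ (dvd_pow_self _ (pow_ne_zero _ hpp.out.ne_zero))

lemma IsRegularSystem.exists_forall_exists_isUnit_sum [IsAlgClosed K] [Algebra R K]
    [FaithfulSMul R K] (hx : IsRegularSystem d x) (hp : (p : R) ∈ maximalIdeal R)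
    (hk : FFinite p (ResidueField R)) {c : R} (hc : c ≠ 0) :
    ∃ n, 0 < n ∧ ∀ (N : ℕ) {κ : Type} [Fintype κ] {ν : ℕ} (a₀ : κ → R) (a : Fin ν → κ → R)
      (y : κ → K), (∀ j, IsIntegral R (y j)) → (∑ j, a₀ j • y j) ^ n = algebraMap R K c →
        (∀ i, ∑ j, a i j • y j = 0) →
          ∃ e : κ → R, (∀ i, (p : R) ^ N ∣ ∑ j, a i j * e j) ∧ IsUnit (∑ j, a₀ j * e j) := by
  obtain ⟨n, hn⟩ := hx.exists_mul_pow_notMem_maximalIdeal_pow hc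
  have hn0 : 0 < n := Nat.pos_of_ne_zero fun h0 => by
    obtain ⟨P, hP⟩ := hn 1 one_ne_zero 0
    exact hP P le_rfl (by simp [h0])
  refine ⟨n, hn0, fun N κ _ ν a₀ a y hy hyc hya => ?_⟩
  by_contra! hunit
  obtain ⟨r, F, ζ, τ, hF, hr, hζ, hτ⟩ := exists_monic_map_eq_prod_X_sub_C hy
  let ℓ (v : κ → R) : MvPolynomial (Fin r) R := ∑ j, MvPolynomial.C (v j) * MvPolynomial.X (τ j)
  obtain ⟨g, hg, hB⟩ := hx.exists_flatModulo_forall_mul_mem hp hk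
    (FaithfulSMul.algebraMap_injective R K) hF hr hζ
    (Q := fun o : Option (Fin ν) => o.elim (ℓ a₀ ^ n - MvPolynomial.C c) fun i => ℓ (a i)) (by
      rintro (_ | i)
      · simpa [ℓ, hτ, Algebra.smul_def, sub_eq_zero] using hyc
      · simpa [ℓ, hτ, Algebra.smul_def] using hya i)
  obtain ⟨E, hE⟩ := hn _ (pow_ne_zero (n * Fintype.card (Equiv.Perm (Fin r))) hg) 0
  let P := p ^ E
  obtain ⟨B, _, f, β, b, hne, hf, hbQ, hprod⟩ := hB E (N + n * P + 2) (by omega)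
  let s : R := (p : R) ^ (N + n * P + 2)
  have hs : s ∈ maximalIdeal R ^ (n * P) :=
    Ideal.pow_le_pow_right (by omega) (Ideal.pow_mem_pow hp _)
  have hJ : Ideal.span {f s} ≤ (maximalIdeal R).map f ^ (n * P) := by
    rw [← Ideal.map_pow, Ideal.span_singleton_le_iff_mem]
    exact Ideal.mem_map_of_mem f hs
  refine hE P (Nat.lt_pow_self hpp.out.one_lt).le (hf.mem_of_map_mem_map hne hs ?_)
  rw [map_mul, map_pow, map_pow, Ideal.map_pow]
  refine pow_card_mul_mem_of_prod_sub_eq_zero hprod fun ρ => ?_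
  refine hf.pow_mul_pow_mem_map_pow (mul_pos hn0 (pow_pos hpp.out.pos E)).ne' hJ
    (a₀ := a₀) (a := a) (y := fun j => β (ρ (τ j))) (fun e he => ?_) (fun i => ?_) ?_
  · have hdvd (i : Fin ν) : (p : R) ^ N ∣ ∑ j, a i j * e j :=
      (pow_dvd_pow _ (by omega)).trans (he i)
    exact (IsLocalRing.mem_maximalIdeal _).2 (hunit e hdvd)
  · simpa [ℓ] using hbQ ρ (some i)
  · simpa [ℓ] using hbQ ρ none

end

/-! ### Closures of submodules -/

section

variable {R M : Type*} [CommRing R] [AddCommGroup M] [Module R M]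

lemma exists_notMem_sup_span_pow_smul_top [IsNoetherianRing R] [IsLocalRing R] [Module.Finite R M]
    {a : R} (ha : a ∈ maximalIdeal R) {W : Submodule R M} {u : M} (hu : u ∉ W) :
    ∃ N, 0 < N ∧ u ∉ W ⊔ Ideal.span {a ^ N} • (⊤ : Submodule R M) := by
  by_contra! hmem
  have hne : Ideal.span {a} ≠ ⊤ := fun h => ha (Ideal.span_singleton_eq_top.1 h)
  refine hu ((Submodule.Quotient.mk_eq_zero W).1 ((Submodule.mem_bot R).1 ?_))
  rw [← Ideal.iInf_pow_smul_eq_bot_of_isLocalRing (M := M ⧸ W) _ hne, Submodule.mem_iInf]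
  intro i
  have hmk := Submodule.mem_map_of_mem (f := W.mkQ) (hmem (i + 1) i.succ_pos)
  rw [Submodule.map_sup, Submodule.mkQ_map_self, bot_sup_eq, Submodule.map_smul'',
    ← Ideal.span_singleton_pow] at hmk
  exact Submodule.smul_mono (Ideal.pow_le_pow_right i.le_succ) le_top hmk

lemma range_baseChange_sup_smul_top_le_ker (A : Type*) [CommRing A] [Algebra R A] {a : R}
    {W : Submodule R M} (ha : ∀ x : M, a • x ∈ W) :
    LinearMap.range (W.subtype.baseChange A) ⊔
        Ideal.span {algebraMap R A a} • (⊤ : Submodule A (A ⊗[R] M)) ≤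
      LinearMap.ker (W.mkQ.baseChange A) := by
  have hcomp : W.mkQ ∘ₗ W.subtype = 0 := by
    ext
    simp
  have hsmul : a • W.mkQ = 0 := by
    ext x
    exact (Submodule.Quotient.mk_eq_zero W).2 (ha x)
  refine sup_le ?_ ?_
  · rw [LinearMap.range_le_ker_iff, ← LinearMap.baseChange_comp, hcomp, LinearMap.baseChange_zero]
  · rw [Submodule.ideal_span_singleton_smul]
    rintro _ ⟨z, -, rfl⟩
    have hz := LinearMap.congr_fun (LinearMap.baseChange_smul (A := A) a W.mkQ) z
    simpa [hsmul] using hz.symm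

lemma exists_of_tmul_eq_zero [Module.Finite R M] {A : Type*} [AddCommGroup A] [Module R A] {d : A}
    {u : M} (h : d ⊗ₜ[R] u = 0) :
    ∃ (ν k : ℕ) (s : Fin ν → M) (a₀ : Fin k → R) (a : Fin ν → Fin k → R) (y : Fin k → A),
      d = ∑ j, a₀ j • y j ∧ (∀ i, ∑ j, a i j • y j = 0) ∧
        ∀ j, a₀ j • u + ∑ i, a i j • s i = 0 := by
  obtain ⟨ν, s, hs⟩ := Module.Finite.exists_fin (R := R) (M := M)
  have hspan : Submodule.span R (Set.range fun o : Option (Fin ν) => o.elim u s) = ⊤ :=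
    eq_top_iff.2 (hs ▸ Submodule.span_mono (Set.range_subset_iff.2 fun i => ⟨some i, rfl⟩))
  have hsum : ∑ o : Option (Fin ν), o.elim u s ⊗ₜ[R] o.elim d (fun _ => 0) = 0 := by
    simpa [Fintype.sum_option] using congrArg (TensorProduct.comm R A M) h
  obtain ⟨k, a, y, hy, ha⟩ := TensorProduct.vanishesTrivially_of_sum_tmul_eq_zero R hspan hsum
  simp only [Fintype.sum_option] at ha
  exact ⟨ν, k, s, a none, fun i => a (some i), y, hy none, fun i => (hy (some i)).symm, ha⟩

lemma eq_zero_of_isUnit_sum {ι κ : Type*} [Fintype ι] [Fintype κ] {q : R} (hq : ∀ x : M, q • x = 0)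
    {u : M} {s : ι → M} {a₀ e : κ → R} {a : ι → κ → R}
    (hrel : ∀ j, a₀ j • u + ∑ i, a i j • s i = 0) (he : ∀ i, q ∣ ∑ j, a i j * e j)
    (hu : IsUnit (∑ j, a₀ j * e j)) : u = 0 := by
  have hkill (i : ι) : (∑ j, a i j * e j) • s i = 0 := by
    obtain ⟨r, hr⟩ := he i
    rw [hr, mul_smul, hq]
  refine hu.smul_eq_zero.1 ?_
  calc (∑ j, a₀ j * e j) • u
      = (∑ j, a₀ j * e j) • u + ∑ i, (∑ j, a i j * e j) • s i := by
        rw [Finset.sum_eq_zero fun i _ => hkill i, add_zero]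
    _ = ∑ j, e j • (a₀ j • u + ∑ i, a i j • s i) := by
        simp only [Finset.sum_smul, smul_add, Finset.sum_add_distrib, Finset.smul_sum, smul_smul,
          mul_comm]
        rw [Finset.sum_comm]
    _ = 0 := by simp only [hrel, smul_zero, Finset.sum_const_zero]

end

lemma subset_epfMod (p : ℕ) {R M : Type} [CommRing R] [IsDomain R] [AddCommGroup M] [Module R M]
    (W : Submodule R M) : ↑W ⊆ epfMod p R W := fun u hu =>
  ⟨1, one_ne_zero, fun _ _ _ _ d _ => Submodule.mem_sup_left ⟨d ⊗ₜ ⟨u, hu⟩, by simp⟩⟩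

lemma IsRegularSystem.epfMod_subset {R M : Type} [CommRing R] [IsDomain R] [IsNoetherianRing R]
    [IsLocalRing R] [IsAdicComplete (maximalIdeal R) R] [CharZero R] {p : ℕ} [Fact p.Prime]
    {n : ℕ} {x : ℕ → R} (hx : IsRegularSystem n x) (hp : (p : R) ∈ maximalIdeal R)
    (hk : FFinite p (ResidueField R)) [AddCommGroup M] [Module R M] [Module.Finite R M]
    {W : Submodule R M} {N : ℕ} (hN : 0 < N) (hW : ∀ v : M, (p : R) ^ N • v ∈ W) :
    epfMod p R W ⊆ ↑W := by
  rintro u ⟨c, hc, hcu⟩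
  have := FaithfulSMul.trans R (FractionRing R) (AlgebraicClosure (FractionRing R))
  obtain ⟨n, hn, hunit⟩ :=
    hx.exists_forall_exists_isUnit_sum (K := AlgebraicClosure (FractionRing R)) hp hk hc
  obtain ⟨d, hd⟩ := exists_pow_eq_rPlus hn (algebraMap R (RPlus R) c)
  have hker := range_baseChange_sup_smul_top_le_ker (RPlus R) hW
    (by simpa only [map_pow, map_natCast] using hcu n N hn hN d hd)
  rw [LinearMap.mem_ker, LinearMap.baseChange_tmul] at hker
  obtain ⟨ν, k, s, a₀, a, y, rfl, hy, hrel⟩ := exists_of_tmul_eq_zero hker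
  obtain ⟨e, he, heu⟩ := hunit N a₀ a (fun j => y j) (fun j => (y j).2)
    (by simpa using congrArg Subtype.val hd) fun i => by simpa using congrArg Subtype.val (hy i)
  have hkill (v : M ⧸ W) : (p : R) ^ N • v = 0 := by
    obtain ⟨v, rfl⟩ := W.mkQ_surjective v
    rw [← map_smul]
    exact (Submodule.Quotient.mk_eq_zero W).2 (hW v)
  exact (Submodule.Quotient.mk_eq_zero W).1 (eq_zero_of_isUnit_sum hkill hrel he heu)

/-- Over a complete regular local domain of mixed characteristic with
F-finite residue field, every submodule of a finitely generated module is wepf-closed. -/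
theorem stmt6 (R : Type) [CommRing R] [IsDomain R] [IsNoetherianRing R] [IsLocalRing R]
    [IsAdicComplete (maximalIdeal R) R]
    (hreg : ∃ (d : ℕ) (x : Fin d → R), ringKrullDim R = d ∧
      Ideal.span (Set.range x) = maximalIdeal R)
    (p : ℕ) [Fact p.Prime] [CharZero R] (hp : (p : R) ∈ maximalIdeal R)
    (hk : FFinite p (ResidueField R))
    (M : Type) [AddCommGroup M] [Module R M] [Module.Finite R M]
    (W : Submodule R M) :
    wepfMod p R W = ↑W := by
  obtain ⟨d, x, hd, hx⟩ := hreg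
  obtain ⟨y, hy⟩ := exists_isRegularSystem_of_le_ringKrullDim hx hd.symm.le
  refine Set.Subset.antisymm (fun u hu => ?_) fun u hu N _ =>
    subset_epfMod p _ (Submodule.mem_sup_left hu)
  by_contra huW
  obtain ⟨N, hN, huN⟩ := exists_notMem_sup_span_pow_smul_top hp huW
  have hpow (v : M) : (p : R) ^ N • v ∈ W ⊔ Ideal.span {(p : R) ^ N} • (⊤ : Submodule R M) :=
    Submodule.mem_sup_right
      (Submodule.smul_mem_smul (Ideal.mem_span_singleton_self _) Submodule.mem_top)
  exact huN (hy.epfMod_subset hp hk hN hpow (hu N hN))
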